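/- (Glimm's global existence theorem.) Let f : ℝⁿ → ℝⁿ be twice continuously differentiable and assume: there exist continuously differentiable maps λ₁,…,λₙ : ℝⁿ → ℝ and r₁,…,rₙ : ℝⁿ → ℝⁿ∖{0} with λ₁(u) < λ₂(u) < ⋯ < λₙ(u) and Df(u) rᵢ(u) = λᵢ(u) rᵢ(u) for all u (strict hyperbolicity), and for each i ∈ {1,…,n} either ∇λᵢ(u)·rᵢ(u) > 0 for all u (genuine nonlinearity) or ∇λᵢ(u)·rᵢ(u) = 0 for all u (linear degeneracy). Then there exists δ > 0 such that for every initial datum ū ∈ L¹(ℝ;ℝⁿ) of bounded variation with Tot.Var.{ū} ≤ δ, the Cauchy problem u_t + f(u)_x = 0, u(0,·) = ū has a weak solution u = u(t,x) defined for all t ≥ 0: the map t ↦ u(t,·) is continuous with values in L¹(ℝ;ℝⁿ), u(0,·) = ū, and ∫₀^∞ ∫_ℝ ( u φ_t + f(u) φ_x ) dx dt = 0 for all φ ∈ C¹_c((0,∞)×ℝ). -/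

import Mathlib

open MeasureTheory Filter Set Topology

noncomputable section

/-- Partial derivative of a test function in the time variable. -/
def ptime (φ : ℝ × ℝ → ℝ) (p : ℝ × ℝ) : ℝ := deriv (fun s => φ (s, p.2)) p.1

/-- Partial derivative of a test function in the space variable. -/
def pspace (φ : ℝ × ℝ → ℝ) (p : ℝ × ℝ) : ℝ := deriv (fun y => φ (p.1, y)) p.2

/-- `u : (t,x) ↦ u(t,x)` is a weak solution of `u_t + f(u)_x = 0` for `t ≥ 0`:
the map `t ↦ u(t,·)` takes values in `L¹`, is continuous into `L¹`, and the
integral identity `∫∫ (u φ_t + f(u) φ_x) dx dt = 0` holds for every test function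
`φ ∈ C¹_c((0,∞) × ℝ)`. -/
def IsWeakSolution {n : ℕ} (f : EuclideanSpace ℝ (Fin n) → EuclideanSpace ℝ (Fin n))
    (u : ℝ → ℝ → EuclideanSpace ℝ (Fin n)) : Prop :=
  Measurable (Function.uncurry u) ∧
  (∀ t : ℝ, 0 ≤ t → Integrable (u t)) ∧
  (∀ t : ℝ, 0 ≤ t →
    Tendsto (fun s => ∫ x : ℝ, ‖u s x - u t x‖) (𝓝[Set.Ici 0] t) (𝓝 0)) ∧
  (∀ φ : ℝ × ℝ → ℝ, ContDiff ℝ 1 φ → HasCompactSupport φ →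
    tsupport φ ⊆ Set.Ioi (0 : ℝ) ×ˢ Set.univ →
    ∫ p : ℝ × ℝ, (ptime φ p • u p.1 p.2 + pspace φ p • f (u p.1 p.2)) = 0)

/-!
A wave of the `i`-th family is a single jump from `u` to `v = u + s • X u v`, where `X u v` is the
`i`-th eigenvector of the average of the derivative of the flux over the segment from `u` to `v`.
The Rankine–Hugoniot condition then holds exactly, with the `i`-th eigenvalue as the speed, and
every small Riemann problem is solved by `n` such jumps. A weak solution carries no entropy
condition, so these jumps may serve as shocks and as rarefactions alike. A linear change of the
frame `(t, x)` places all speeds in `(0, 1)`.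

The scheme of Glimm samples these Riemann solutions at a point `θ` of each mesh cell. Where two fans
meet, the outgoing strengths differ from the sums of the incoming ones by at most a constant times
the sum of the products of the strengths of approaching waves. Hence the total strength plus a
multiple of the quadratic interaction potential does not increase, which bounds the variation
uniformly. As the approximations are also uniformly Lipschitz in time with values in `L¹`, up to the
mesh size, a subsequence converges almost everywhere.

The expectation over `θ` of the scheme error in a cell vanishes. Instead of drawing random numbers,
one chooses `θ` at each time step such that the new errors, integrated against finitely many test
functions and regarded as one vector of a Hilbert space, have a nonpositive inner product with the
accumulated ones. The squared norms then add up, and the total error, which is at most a constant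
times the square root of the number of steps, tends to zero after multiplication by the mesh size.
-/

namespace Glimm

/-! ### Averaged derivatives and their eigenpairs -/

section SimpleEigenvector

variable {E : Type*} [NormedAddCommGroup E] [NormedSpace ℝ E]

/-- The map whose zeros `(A, (x, μ))` are the eigenpairs `A x = μ x` normalized by `φ x = 1`. -/
def eigenpairDefect (φ : E →L[ℝ] ℝ) (p : (E →L[ℝ] E) × (E × ℝ)) : E × ℝ :=
  (p.1 p.2.1 - p.2.2 • p.2.1, φ p.2.1 - 1)

lemma contDiff_eigenpairDefect (φ : E →L[ℝ] ℝ) : ContDiff ℝ 1 (eigenpairDefect φ) := by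
  unfold eigenpairDefect
  fun_prop

lemma fderiv_eigenpairDefect_inr (φ : E →L[ℝ] ℝ) (A : E →L[ℝ] E) (r : E) (l : ℝ) (q : E × ℝ) :
    (fderiv ℝ (eigenpairDefect φ) (A, (r, l)) ∘L .inr ℝ (E →L[ℝ] E) (E × ℝ)) q =
      (A q.1 - (l • q.1 + q.2 • r), φ q.1) := by
  have htotal : HasFDerivAt (fun q : E × ℝ => eigenpairDefect φ (A, q))
      (fderiv ℝ (eigenpairDefect φ) (A, (r, l)) ∘L .inr ℝ (E →L[ℝ] E) (E × ℝ)) (r, l) :=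
    HasFDerivAt.comp (r, l)
      ((contDiff_eigenpairDefect φ).differentiable one_ne_zero _).hasFDerivAt
      (hasFDerivAt_prodMk_right A (r, l))
  have hfst := hasFDerivAt_fst (𝕜 := ℝ) (p := (r, l))
  have hsnd := hasFDerivAt_snd (𝕜 := ℝ) (p := (r, l))
  have hpartial : HasFDerivAt (fun q : E × ℝ => eigenpairDefect φ (A, q)) _ (r, l) :=
    ((A.hasFDerivAt.comp (r, l) hfst).sub (hsnd.smul hfst)).prodMk
      ((φ.hasFDerivAt.comp (r, l) hfst).sub_const 1)
  rw [htotal.unique hpartial]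
  simp

lemma isInvertible_fderiv_eigenpairDefect_inr [FiniteDimensional ℝ E] {φ : E →L[ℝ] ℝ}
    {A : E →L[ℝ] E} {r : E} {l : ℝ} (hφr : φ r = 1) (hφA : ∀ y, φ (A y) = l * φ y)
    (hsimple : ∀ y, A y = l • y → φ y = 0 → y = 0) :
    (fderiv ℝ (eigenpairDefect φ) (A, (r, l)) ∘L .inr ℝ (E →L[ℝ] E) (E × ℝ)).IsInvertible := by
  set D := fderiv ℝ (eigenpairDefect φ) (A, (r, l)) ∘L .inr ℝ (E →L[ℝ] E) (E × ℝ)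
  have hinj : Function.Injective D := by
    rw [injective_iff_map_eq_zero]
    rintro ⟨y, c⟩ hq
    rw [fderiv_eigenpairDefect_inr, Prod.mk_eq_zero] at hq
    obtain ⟨hy, hφy⟩ := hq
    have hc : c = 0 := by
      have := congrArg φ hy
      rw [map_sub, hφA, map_add, map_smul, map_smul, hφy, hφr] at this
      simpa using this
    rw [hc, zero_smul, add_zero, sub_eq_zero] at hy
    exact Prod.ext (hsimple y hy hφy) hc
  refine ⟨(LinearEquiv.ofInjectiveEndo (D : E × ℝ →ₗ[ℝ] E × ℝ) hinj).toContinuousLinearEquiv, ?_⟩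
  ext x <;> rfl

theorem exists_lipschitzOnWith_eigenpair [FiniteDimensional ℝ E] {φ : E →L[ℝ] ℝ}
    {A : E →L[ℝ] E} {r : E} {l : ℝ} (hφr : φ r = 1) (hAr : A r = l • r)
    (hφA : ∀ y, φ (A y) = l * φ y) (hsimple : ∀ y, A y = l • y → φ y = 0 → y = 0) :
    ∃ s ∈ 𝓝 A, ∃ K, ∃ X : (E →L[ℝ] E) → E, ∃ μ : (E →L[ℝ] E) → ℝ, X A = r ∧ μ A = l ∧
      (∀ B ∈ s, B (X B) = μ B • X B) ∧ LipschitzOnWith K X s ∧ LipschitzOnWith K μ s := by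
  have hzero : eigenpairDefect φ (A, (r, l)) = 0 := by simp [eigenpairDefect, hAr, hφr]
  have hstrict := (contDiff_eigenpairDefect φ).contDiffAt.hasStrictFDerivAt
    (x := (A, (r, l))) one_ne_zero
  have hinv := isInvertible_fderiv_eigenpairDefect_inr hφr hφA hsimple
  set ψ := hstrict.implicitFunctionOfProdDomain hinv
  have hψA : ψ A = (r, l) :=
    (hstrict.eventually_apply_eq_iff_implicitFunctionOfProdDomain hinv).self_of_nhds.mp rfl
  obtain ⟨K, s, hs, hK⟩ :=
    (hstrict.hasStrictFDerivAt_implicitFunctionOfProdDomain hinv).exists_lipschitzOnWith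
  have hdefect : ∀ᶠ B in 𝓝 A, eigenpairDefect φ (B, ψ B) = 0 := by
    simpa only [hzero] using hstrict.eventually_apply_implicitFunctionOfProdDomain hinv
  refine ⟨_, inter_mem hdefect hs, K, fun B => (ψ B).1, fun B => (ψ B).2,
    congrArg Prod.fst hψA, congrArg Prod.snd hψA,
    fun B hB => sub_eq_zero.1 (congrArg Prod.fst hB.1), ?_, ?_⟩
  · simpa using! LipschitzWith.prod_fst.comp_lipschitzOnWith (hK.mono inter_subset_right)
  · simpa using! LipschitzWith.prod_snd.comp_lipschitzOnWith (hK.mono inter_subset_right)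

end SimpleEigenvector

section AveragedDerivative

variable {E F : Type*} [NormedAddCommGroup E] [NormedSpace ℝ E]
  [NormedAddCommGroup F] [NormedSpace ℝ F] {g : E → F}

/-- The derivative of `g` averaged over the segment from `u` to `v`; its eigenvectors `v - u` are
the Rankine–Hugoniot jumps of the flux `g`. -/
def avgFDeriv (g : E → F) (u v : E) : E →L[ℝ] F :=
  ∫ t in (0 : ℝ)..1, fderiv ℝ g (AffineMap.lineMap u v t)

lemma avgFDeriv_self [CompleteSpace F] (u : E) : avgFDeriv g u u = fderiv ℝ g u := by
  simp [avgFDeriv]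

lemma continuous_fderiv_lineMap (hg : ContDiff ℝ 1 g) (u v : E) :
    Continuous fun t : ℝ => fderiv ℝ g (AffineMap.lineMap u v t) :=
  (hg.continuous_fderiv one_ne_zero).comp AffineMap.lineMap_continuous

lemma avgFDeriv_apply_sub [CompleteSpace F] (hg : ContDiff ℝ 1 g) (u v : E) :
    avgFDeriv g u v (v - u) = g v - g u := by
  have hcont := continuous_fderiv_lineMap hg u v
  have hderiv (t : ℝ) : HasDerivAt (fun t : ℝ => g (AffineMap.lineMap u v t))
      (fderiv ℝ g (AffineMap.lineMap u v t) (v - u)) t :=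
    (hg.differentiable one_ne_zero _).hasFDerivAt.comp_hasDerivAt t AffineMap.hasDerivAt_lineMap
  rw [avgFDeriv, ContinuousLinearMap.intervalIntegral_apply (hcont.intervalIntegrable _ _),
    intervalIntegral.integral_eq_sub_of_hasDerivAt (fun t _ => hderiv t)
      ((hcont.clm_apply continuous_const).intervalIntegrable _ _)]
  simp

lemma norm_lineMap_sub_lineMap_le (u v u' v' : E) {t : ℝ} (ht : t ∈ Icc (0 : ℝ) 1) :
    ‖AffineMap.lineMap u v t - AffineMap.lineMap u' v' t‖ ≤ ‖u - u'‖ + ‖v - v'‖ := by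
  have hsplit : AffineMap.lineMap u v t - AffineMap.lineMap u' v' t =
      (1 - t) • (u - u') + t • (v - v') := by
    simp only [AffineMap.lineMap_apply_module]; module
  rw [hsplit]
  refine norm_add_le_of_le ?_ ?_ <;> rw [norm_smul]
  · exact mul_le_of_le_one_left (norm_nonneg _)
      (by rw [Real.norm_of_nonneg (by linarith [ht.2])]; linarith [ht.1])
  · exact mul_le_of_le_one_left (norm_nonneg _) (by rw [Real.norm_of_nonneg ht.1]; exact ht.2)

lemma norm_avgFDeriv_sub_le (hg : ContDiff ℝ 1 g) {s : Set E} (hs : Convex ℝ s) {L : NNReal}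
    (hL : LipschitzOnWith L (fderiv ℝ g) s) {u v u' v' : E}
    (hu : u ∈ s) (hv : v ∈ s) (hu' : u' ∈ s) (hv' : v' ∈ s) :
    ‖avgFDeriv g u v - avgFDeriv g u' v'‖ ≤ L * (‖u - u'‖ + ‖v - v'‖) := by
  rw [avgFDeriv, avgFDeriv, ← intervalIntegral.integral_sub
    ((continuous_fderiv_lineMap hg u v).intervalIntegrable _ _)
    ((continuous_fderiv_lineMap hg u' v').intervalIntegrable _ _)]
  refine (intervalIntegral.norm_integral_le_of_norm_le_const
    (C := L * (‖u - u'‖ + ‖v - v'‖)) fun t ht => ?_).trans_eq (by simp)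
  have ht : t ∈ Icc (0 : ℝ) 1 := by
    rw [uIoc_of_le zero_le_one] at ht; exact Ioc_subset_Icc_self ht
  calc ‖fderiv ℝ g (AffineMap.lineMap u v t) - fderiv ℝ g (AffineMap.lineMap u' v' t)‖
      ≤ L * ‖AffineMap.lineMap u v t - AffineMap.lineMap u' v' t‖ :=
        hL.norm_sub_le (hs.lineMap_mem hu hv ht) (hs.lineMap_mem hu' hv' ht)
    _ ≤ L * (‖u - u'‖ + ‖v - v'‖) := by
        gcongr; exact norm_lineMap_sub_lineMap_le u v u' v' ht

end AveragedDerivative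

section RadialRetraction

variable {E : Type*} [NormedAddCommGroup E] [NormedSpace ℝ E] {ρ : ℝ}

/-- The radial retraction onto the closed ball of radius `ρ`; it extends local data near the origin
to the whole space. -/
def radialRetraction (ρ : ℝ) (u : E) : E := (ρ / max ρ ‖u‖) • u

lemma radialRetraction_of_norm_le (hρ : 0 < ρ) {u : E} (hu : ‖u‖ ≤ ρ) :
    radialRetraction ρ u = u := by
  rw [radialRetraction, max_eq_left hu, div_self hρ.ne', one_smul]

lemma norm_radialRetraction_le (hρ : 0 < ρ) (u : E) : ‖radialRetraction ρ u‖ ≤ ρ := by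
  have hmax : 0 < max ρ ‖u‖ := lt_max_of_lt_left hρ
  rw [radialRetraction, norm_smul, Real.norm_of_nonneg (by positivity), div_mul_eq_mul_div,
    div_le_iff₀ hmax]
  gcongr
  exact le_max_right _ _

lemma norm_radialRetraction_sub_le (hρ : 0 < ρ) (u v : E) :
    ‖radialRetraction ρ u - radialRetraction ρ v‖ ≤ 2 * ‖u - v‖ := by
  unfold radialRetraction
  set a := max ρ ‖u‖
  set b := max ρ ‖v‖
  have ha : 0 < a := lt_max_of_lt_left hρ
  have hb : 0 < b := lt_max_of_lt_left hρ
  have hab : |b - a| ≤ ‖u - v‖ := by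
    refine (abs_max_sub_max_le_max _ _ _ _).trans ?_
    rw [sub_self, abs_zero, norm_sub_rev]
    exact max_le (norm_nonneg _) (abs_norm_sub_norm_le _ _)
  have hsplit : (ρ / a) • u - (ρ / b) • v = (ρ / a) • (u - v + ((b - a) / b) • v) := by
    have : ρ / b = ρ / a - ρ / a * ((b - a) / b) := by field_simp; ring
    rw [this]; module
  have hcorr : ‖((b - a) / b) • v‖ ≤ ‖u - v‖ := by
    rw [norm_smul, norm_div, Real.norm_eq_abs, Real.norm_of_nonneg hb.le, div_mul_eq_mul_div,
      div_le_iff₀ hb]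
    exact mul_le_mul hab (le_max_right _ _) (norm_nonneg _) (norm_nonneg _)
  calc ‖(ρ / a) • u - (ρ / b) • v‖ = ρ / a * ‖u - v + ((b - a) / b) • v‖ := by
        rw [hsplit, norm_smul, Real.norm_of_nonneg (by positivity)]
    _ ≤ 1 * (‖u - v‖ + ‖u - v‖) := by
        gcongr
        · exact (div_le_one ha).2 (le_max_left _ _)
        · exact norm_add_le_of_le le_rfl hcorr
    _ = 2 * ‖u - v‖ := by ring

end RadialRetraction

section SecantField

variable {E : Type*} [NormedAddCommGroup E] [NormedSpace ℝ E]

/-- Lipschitz dependence on a pair of states, for the sum norm on pairs. -/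
def SumLipschitz {F : Type*} [NormedAddCommGroup F] (L : ℝ) (X : E → E → F) : Prop :=
  ∀ u v u' v', ‖X u v - X u' v'‖ ≤ L * (‖u - u'‖ + ‖v - v'‖)

/-- Whenever the jump `v - u` of two states near the origin is a multiple of `X u v`, it satisfies
the Rankine–Hugoniot condition with speed `μ u v`. The field `X` and the speed `μ` are defined
globally, `X` is Lipschitz, and they stay `η`-close to a fixed eigenpair `(r, l)`. -/
structure IsSecantField (g : E → E) (r : E) (l L η ρ : ℝ) (X : E → E → E) (μ : E → E → ℝ) :
    Prop where
  lipschitz : SumLipschitz L X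
  norm_sub_le : ∀ u v, ‖X u v - r‖ ≤ η
  abs_sub_le : ∀ u v, |μ u v - l| ≤ η
  rankineHugoniot : ∀ (u v : E) (s : ℝ), ‖u‖ ≤ ρ → ‖v‖ ≤ ρ → v = u + s • X u v →
    g v - g u = μ u v • (v - u)

lemma IsSecantField.mono {g : E → E} {r : E} {l L L' η ρ : ℝ} {X : E → E → E} {μ : E → E → ℝ}
    (h : IsSecantField g r l L η ρ X μ) (hL : L ≤ L') : IsSecantField g r l L' η ρ X μ where
  __ := h
  lipschitz u v u' v' := (h.lipschitz u v u' v').trans (by gcongr)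

lemma isSecantField_zero (g : E → E) {L η ρ : ℝ} (hL : 0 ≤ L) (hη : 0 ≤ η) :
    IsSecantField g 0 0 L η ρ 0 0 where
  lipschitz u v u' v' := by simp only [Pi.zero_apply, sub_zero, norm_zero]; positivity
  norm_sub_le u v := by simpa
  abs_sub_le u v := by simpa
  rankineHugoniot u v s _ _ hv := by simp_all

lemma exists_forall_norm_avgFDeriv_radialRetraction_sub_le {g : E → E} (hg : ContDiff ℝ 2 g) :
    ∃ L : ℝ, 0 ≤ L ∧ ∀ᶠ ρ in 𝓝[>] (0 : ℝ),
      SumLipschitz L (fun u v => avgFDeriv g (radialRetraction ρ u) (radialRetraction ρ v)) ∧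
      ∀ u v, ‖avgFDeriv g (radialRetraction ρ u) (radialRetraction ρ v) - avgFDeriv g 0 0‖
        ≤ L * ρ := by
  have hg1 : ContDiff ℝ 1 g := hg.of_le one_le_two
  obtain ⟨L, s, hs, hL⟩ :=
    (hg.fderiv_right (m := 1) (by norm_num)).contDiffAt.exists_lipschitzOnWith (x := 0)
  obtain ⟨ρ₁, hρ₁, hball⟩ := Metric.nhds_basis_closedBall.mem_iff.1 hs
  have hlip {ρ : ℝ} (hρ : ρ ≤ ρ₁) {u v u' v' : E} (hu : ‖u‖ ≤ ρ) (hv : ‖v‖ ≤ ρ) (hu' : ‖u'‖ ≤ ρ)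
      (hv' : ‖v'‖ ≤ ρ) := norm_avgFDeriv_sub_le hg1 (convex_closedBall 0 ρ₁) (hL.mono hball)
    (mem_closedBall_zero_iff.2 (hu.trans hρ)) (mem_closedBall_zero_iff.2 (hv.trans hρ))
    (mem_closedBall_zero_iff.2 (hu'.trans hρ)) (mem_closedBall_zero_iff.2 (hv'.trans hρ))
  refine ⟨L * 2, by positivity, ?_⟩
  filter_upwards [self_mem_nhdsWithin, nhdsWithin_le_nhds (eventually_le_nhds hρ₁)] with ρ hρ hρρ₁
  have hret := norm_radialRetraction_le (E := E) hρ
  refine ⟨fun u v u' v' => (hlip hρρ₁ (hret u) (hret v) (hret u') (hret v')).trans ?_,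
    fun u v => (hlip hρρ₁ (hret u) (hret v) (by simpa using hρ.le) (by simpa using hρ.le)).trans ?_⟩
  · rw [mul_assoc, mul_add 2]
    gcongr <;> exact norm_radialRetraction_sub_le hρ _ _
  · rw [sub_zero, sub_zero, mul_assoc, two_mul]
    gcongr <;> exact hret _

theorem exists_isSecantField [FiniteDimensional ℝ E] {g : E → E} (hg : ContDiff ℝ 2 g)
    {φ : E →L[ℝ] ℝ} {r : E} {l : ℝ} (hφr : φ r = 1) (hr : fderiv ℝ g 0 r = l • r)
    (hφ : ∀ y, φ (fderiv ℝ g 0 y) = l * φ y)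
    (hsimple : ∀ y, fderiv ℝ g 0 y = l • y → φ y = 0 → y = 0) :
    ∃ L : ℝ, 0 ≤ L ∧ ∀ η > 0, ∀ᶠ ρ in 𝓝[>] (0 : ℝ), ∃ X μ, IsSecantField g r l L η ρ X μ := by
  obtain ⟨s, hs, K, X, μ, hXr, hμl, heig, hX, hμ⟩ :=
    exists_lipschitzOnWith_eigenpair hφr hr hφ hsimple
  obtain ⟨L, hL, hJ⟩ := exists_forall_norm_avgFDeriv_radialRetraction_sub_le hg
  obtain ⟨ε, hε, hball⟩ := Metric.nhds_basis_closedBall.mem_iff.1 hs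
  refine ⟨K * L, by positivity, fun η hη => ?_⟩
  have hlim (c : ℝ) : Tendsto (fun ρ : ℝ => c * ρ) (𝓝[>] 0) (𝓝 0) := by
    simpa using ((continuous_const_mul c).tendsto 0).mono_left nhdsWithin_le_nhds
  filter_upwards [hJ, (hlim L).eventually (eventually_le_nhds hε),
    (hlim (K * L)).eventually (eventually_le_nhds hη), self_mem_nhdsWithin]
    with ρ ⟨hJlip, hJ0⟩ hρε hρη hρ
  set J := fun u v => avgFDeriv g (radialRetraction ρ u) (radialRetraction ρ v)
  rw [avgFDeriv_self] at hJ0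
  have hJs (u v : E) : J u v ∈ s :=
    hball (mem_closedBall_iff_norm.2 ((hJ0 u v).trans hρε))
  have hnear (u v : E) : K * ‖J u v - fderiv ℝ g 0‖ ≤ η :=
    (mul_le_mul_of_nonneg_left (hJ0 u v) K.2).trans (by rwa [← mul_assoc])
  refine ⟨fun u v => X (J u v), fun u v => μ (J u v), fun u v u' v' => ?_, fun u v => ?_,
    fun u v => ?_, fun u v s hu hv hjump => ?_⟩
  · refine (hX.norm_sub_le (hJs u v) (hJs u' v')).trans ?_
    rw [mul_assoc]
    exact mul_le_mul_of_nonneg_left (hJlip u v u' v') K.2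
  · exact hXr ▸ (hX.norm_sub_le (hJs u v) (mem_of_mem_nhds hs)).trans (hnear u v)
  · exact hμl ▸ (hμ.norm_sub_le (hJs u v) (mem_of_mem_nhds hs)).trans (hnear u v)
  · have hJuv : J u v = avgFDeriv g u v := by
      simp only [J, radialRetraction_of_norm_le hρ hu, radialRetraction_of_norm_le hρ hv]
    have hsub : v - u = s • X (J u v) := sub_eq_iff_eq_add'.2 hjump
    rw [← avgFDeriv_apply_sub (hg.of_le one_le_two), ← hJuv, hsub, map_smul, heig _ (hJs u v),
      smul_comm]

end SecantField

/-! ### Secant curves -/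

section SecantCurve

variable {E : Type*} [NormedAddCommGroup E] [NormedSpace ℝ E]

/-- The truncation of a real number to `[-S, S]`. -/
def clamp (S s : ℝ) : ℝ := max (-S) (min S s)

lemma abs_clamp_le {S : ℝ} (hS : 0 ≤ S) (s : ℝ) : |clamp S s| ≤ S :=
  abs_le.2 ⟨le_max_left _ _, max_le (by linarith) (min_le_left _ _)⟩

lemma clamp_of_abs_le {S s : ℝ} (h : |s| ≤ S) : clamp S s = s := by
  rw [clamp, min_eq_right (abs_le.1 h).2, max_eq_right (abs_le.1 h).1]

lemma abs_clamp_sub_clamp_le (S s s' : ℝ) : |clamp S s - clamp S s'| ≤ |s - s'| := by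
  have hmin : |min S s - min S s'| ≤ |s - s'| := by
    simpa using abs_min_sub_min_le_max S s S s'
  exact (abs_max_sub_max_le_max (-S) (min S s) (-S) (min S s')).trans (by simpa using hmin)

/-- `T s u` is the end state of a jump of strength `s` from `u`: for `|s| ≤ S` it solves
`v = u + s • X u v`, and beyond that the curve continues in the fixed direction `r`. -/
def IsSecantCurve (X : E → E → E) (r : E) (S : ℝ) (T : ℝ → E → E) : Prop :=
  ∀ s u, T s u = u + s • r + clamp S s • (X u (T s u) - r)

/-- `T` deviates from the flow `u ↦ u + s • r` by a map that is `ε`-Lipschitz in `(s, u)`. -/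
def IsNearTranslation (ε : ℝ) (r : E) (T : ℝ → E → E) : Prop :=
  ∀ s s' u u', ‖T s u - T s' u' - (u - u') - (s - s') • r‖ ≤ ε * (‖u - u'‖ + |s - s'|)

variable {X Y : E → E → E} {r q : E} {L S B ε : ℝ} {T V : ℝ → E → E}

lemma exists_isSecantCurve [CompleteSpace E] (hX : SumLipschitz L X) (r : E) (hS : 0 ≤ S)
    (hSL : S * L ≤ 1 / 4) : ∃ T, IsSecantCurve X r S T := by
  have hfixed : ∀ s u, ∃ v, v = u + s • r + clamp S s • (X u v - r) := by
    intro s u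
    have hcontr : ContractingWith (1 / 2) fun v => u + s • r + clamp S s • (X u v - r) := by
      refine ⟨by rw [← NNReal.coe_lt_coe]; norm_num, LipschitzWith.of_dist_le_mul fun v v' => ?_⟩
      have hXv : ‖X u v - X u v'‖ ≤ L * ‖v - v'‖ := by simpa using hX u v u v'
      calc dist (u + s • r + clamp S s • (X u v - r)) (u + s • r + clamp S s • (X u v' - r))
          = |clamp S s| * ‖X u v - X u v'‖ := by
            rw [dist_add_left, dist_smul₀, dist_sub_right, dist_eq_norm, Real.norm_eq_abs]
        _ ≤ S * (L * ‖v - v'‖) := by gcongr; exact abs_clamp_le hS s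
        _ = S * L * ‖v - v'‖ := by ring
        _ ≤ 1 / 2 * ‖v - v'‖ := by gcongr; linarith
        _ = _ := by norm_num [dist_eq_norm]
    exact ⟨_, hcontr.fixedPoint_isFixedPt.symm⟩
  choose T hT using hfixed
  exact ⟨T, hT⟩

namespace IsSecantCurve

lemma apply_of_abs_le (hT : IsSecantCurve X r S T) {s : ℝ} (hs : |s| ≤ S) (u : E) :
    T s u = u + s • X u (T s u) := by
  have h := hT s u
  rw [clamp_of_abs_le hs, smul_sub, add_assoc, add_sub_cancel] at h
  exact h

lemma norm_sub_le (hT : IsSecantCurve X r S T) (hB : ∀ u v, ‖X u v‖ ≤ B) {s : ℝ} (hs : |s| ≤ S)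
    (u : E) : ‖T s u - u‖ ≤ |s| * B := by
  rw [sub_eq_iff_eq_add'.2 (hT.apply_of_abs_le hs u), norm_smul, Real.norm_eq_abs]
  gcongr
  exact hB _ _

lemma apply_zero (hT : IsSecantCurve X r S T) (hS : 0 ≤ S) (u : E) : T 0 u = u := by
  rw [hT.apply_of_abs_le (by simpa using hS), zero_smul, add_zero]

lemma norm_apply_le (hT : IsSecantCurve X r S T) (hB : ∀ u v, ‖X u v‖ ≤ B) {s a : ℝ}
    (hs : |s| ≤ S) (hsa : |s| ≤ a) {u : E} (hu : ‖u‖ ≤ a) : ‖T s u‖ ≤ a * (B + 1) := by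
  have hB0 : 0 ≤ B := (norm_nonneg _).trans (hB 0 0)
  calc ‖T s u‖ ≤ ‖u‖ + ‖T s u - u‖ := norm_le_norm_add_norm_sub' _ _
    _ ≤ a + a * B := by
        gcongr
        exact (hT.norm_sub_le hB hs u).trans (by gcongr)
    _ = a * (B + 1) := by ring

theorem isNearTranslation (hT : IsSecantCurve X r S T) (hX : SumLipschitz L X) (hS : 0 ≤ S)
    (hL : 0 ≤ L) (hr : ‖r‖ ≤ B) (hXr : ∀ u v, ‖X u v - r‖ ≤ ε / 4)
    (hSLB : S * L * (B + 1) ≤ ε / 4) (hε : ε ≤ 1) : IsNearTranslation ε r T := by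
  intro s s' u u'
  have hB : 0 ≤ B := (norm_nonneg _).trans hr
  have hε0 : 0 ≤ ε := by linarith [(norm_nonneg _).trans (hXr u u)]
  have hSL : S * L ≤ ε / 4 := (le_mul_of_one_le_right (by positivity) (by linarith)).trans hSLB
  set d := T s u - T s' u' - (u - u') - (s - s') • r with hd
  have hsplit : d = (clamp S s - clamp S s') • (X u (T s u) - r)
      + clamp S s' • (X u (T s u) - X u' (T s' u')) := by
    rw [hd]; nth_rw 1 [hT s u, hT s' u']; module
  have hend : ‖T s u - T s' u'‖ ≤ ‖d‖ + ‖u - u'‖ + |s - s'| * B := by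
    have : T s u - T s' u' = d + (u - u') + (s - s') • r := by rw [hd]; module
    rw [this]
    refine norm_add₃_le.trans ?_
    rw [norm_smul, Real.norm_eq_abs]
    gcongr
  have hbound : ‖d‖ ≤ |s - s'| * (ε / 4)
      + S * (L * (‖u - u'‖ + (‖d‖ + ‖u - u'‖ + |s - s'| * B))) := by
    nth_rw 1 [hsplit]
    refine norm_add_le_of_le ?_ ?_ <;> rw [norm_smul, Real.norm_eq_abs]
    · exact mul_le_mul (abs_clamp_sub_clamp_le _ _ _) (hXr _ _) (norm_nonneg _) (abs_nonneg _)
    · gcongr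
      exacts [abs_clamp_le hS _, (hX _ _ _ _).trans (by gcongr)]
  have hd4 : S * L * ‖d‖ ≤ 1 / 4 * ‖d‖ := by gcongr; linarith
  have hu4 : S * L * ‖u - u'‖ ≤ ε / 4 * ‖u - u'‖ := by gcongr
  have hs4 : S * L * B * |s - s'| ≤ ε / 4 * |s - s'| := by
    gcongr; exact (mul_le_mul_of_nonneg_left (by linarith) (by positivity)).trans hSLB
  have : 0 ≤ ε * ‖u - u'‖ := by positivity
  have : 0 ≤ ε * |s - s'| := by positivity
  linarith

end IsSecantCurve

lemma norm_le_of_eq_smul_add_smul (hL : 0 ≤ L) (hSL : S * L ≤ 1 / 4) {a b : ℝ} (ha : |a| ≤ S)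
    (hb : |b| ≤ S) {d x y : E} (hd : d = a • x + b • y)
    (hx : ‖x‖ ≤ L * (2 * (|b| * B) + ‖d‖)) (hy : ‖y‖ ≤ L * (2 * (|a| * B) + ‖d‖)) :
    ‖d‖ ≤ 8 * L * B * (|a| * |b|) := by
  have hbound : ‖d‖ ≤ |a| * (L * (2 * (|b| * B) + ‖d‖)) + |b| * (L * (2 * (|a| * B) + ‖d‖)) := by
    nth_rw 1 [hd]
    refine norm_add_le_of_le ?_ ?_ <;> rw [norm_smul, Real.norm_eq_abs] <;> gcongr
  have ha4 : |a| * L * ‖d‖ ≤ 1 / 4 * ‖d‖ := by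
    gcongr; exact (mul_le_mul_of_nonneg_right ha hL).trans hSL
  have hb4 : |b| * L * ‖d‖ ≤ 1 / 4 * ‖d‖ := by
    gcongr; exact (mul_le_mul_of_nonneg_right hb hL).trans hSL
  linarith

theorem IsSecantCurve.norm_comp_sub_comp_le (hT : IsSecantCurve X r S T)
    (hV : IsSecantCurve Y q S V) (hX : SumLipschitz L X) (hY : SumLipschitz L Y) (hL : 0 ≤ L)
    (hSL : S * L ≤ 1 / 4) (hXB : ∀ u v, ‖X u v‖ ≤ B) (hYB : ∀ u v, ‖Y u v‖ ≤ B) {a b : ℝ}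
    (ha : |a| ≤ S) (hb : |b| ≤ S) (u : E) :
    ‖V b (T a u) - T a (V b u)‖ ≤ 8 * L * B * (|a| * |b|) := by
  set v := T a u
  set w := V b v
  set v' := V b u
  set w' := T a v'
  have hv : v = u + a • X u v := hT.apply_of_abs_le ha u
  have hw : w = v + b • Y v w := hV.apply_of_abs_le hb v
  have hv' : v' = u + b • Y u v' := hV.apply_of_abs_le hb u
  have hw' : w' = v' + a • X v' w' := hT.apply_of_abs_le ha v'
  have hvu : ‖v - u‖ ≤ |a| * B := hT.norm_sub_le hXB ha u
  have hwv : ‖w - v‖ ≤ |b| * B := hV.norm_sub_le hYB hb v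
  have hvu' : ‖v' - u‖ ≤ |b| * B := hV.norm_sub_le hYB hb u
  have hwv' : ‖w' - v'‖ ≤ |a| * B := hT.norm_sub_le hXB ha v'
  refine norm_le_of_eq_smul_add_smul hL hSL ha hb
    (x := X u v - X v' w') (y := Y v w - Y u v') ?_ ?_ ?_
  · nth_rw 1 [hw, hw', hv, hv']; module
  · refine (hX _ _ _ _).trans ?_
    have : ‖v - w'‖ ≤ ‖w - v‖ + ‖w - w'‖ := norm_sub_rev v w ▸ norm_sub_le_norm_sub_add_norm_sub ..
    refine mul_le_mul_of_nonneg_left ?_ hL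
    linarith [norm_sub_rev u v']
  · refine (hY _ _ _ _).trans ?_
    have : ‖w - v'‖ ≤ ‖w - w'‖ + ‖w' - v'‖ := norm_sub_le_norm_sub_add_norm_sub ..
    refine mul_le_mul_of_nonneg_left ?_ hL
    linarith

theorem IsSecantCurve.norm_comp_sub_add_le (hT : IsSecantCurve X r S T) (hX : SumLipschitz L X)
    (hL : 0 ≤ L) (hSL : S * L ≤ 1 / 4) (hXB : ∀ u v, ‖X u v‖ ≤ B) {a b : ℝ} (ha : |a| ≤ S)
    (hb : |b| ≤ S) (hab : |a + b| ≤ S) (u : E) :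
    ‖T b (T a u) - T (a + b) u‖ ≤ 8 * L * B * (|a| * |b|) := by
  have hB : 0 ≤ B := (norm_nonneg _).trans (hXB u u)
  set v := T a u
  set w := T b v
  set w' := T (a + b) u
  have hv : v = u + a • X u v := hT.apply_of_abs_le ha u
  have hw : w = v + b • X v w := hT.apply_of_abs_le hb v
  have hw' : w' = u + (a + b) • X u w' := hT.apply_of_abs_le hab u
  have hvu : ‖v - u‖ ≤ |a| * B := hT.norm_sub_le hXB ha u
  have hwv : ‖w - v‖ ≤ |b| * B := hT.norm_sub_le hXB hb v
  have haB : 0 ≤ |a| * B := by positivity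
  have hbB : 0 ≤ |b| * B := by positivity
  refine norm_le_of_eq_smul_add_smul hL hSL ha hb
    (x := X u v - X u w') (y := X v w - X u w') ?_ ?_ ?_
  · nth_rw 1 [hw, hv, hw']; module
  · refine (hX _ _ _ _).trans ?_
    have : ‖v - w'‖ ≤ ‖w - v‖ + ‖w - w'‖ := norm_sub_rev v w ▸ norm_sub_le_norm_sub_add_norm_sub ..
    rw [sub_self, norm_zero]
    refine mul_le_mul_of_nonneg_left ?_ hL
    linarith
  · refine (hX _ _ _ _).trans (mul_le_mul_of_nonneg_left ?_ hL)
    linarith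

end SecantCurve

section WaveChain

lemma exists_eq_of_near_id {E : Type*} [NormedAddCommGroup E] [CompleteSpace E] {G : E → E}
    (h : ∀ y y', ‖G y - G y' - (y - y')‖ ≤ 1 / 2 * ‖y - y'‖) (w : E) : ∃ y, G y = w := by
  have hcontr : ContractingWith (1 / 2) fun y => y + w - G y := by
    refine ⟨by rw [← NNReal.coe_lt_coe]; norm_num, LipschitzWith.of_dist_le_mul fun y y' => ?_⟩
    rw [dist_eq_norm, dist_eq_norm,
      show y + w - G y - (y' + w - G y') = -(G y - G y' - (y - y')) by abel, norm_neg]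
    exact (h y y').trans_eq (by norm_num)
  refine ⟨ContractingWith.fixedPoint _ hcontr, ?_⟩
  have hfix : _ + w - G _ = _ := hcontr.fixedPoint_isFixedPt
  rw [add_sub_assoc, add_eq_left, sub_eq_zero] at hfix
  exact hfix.symm

variable {E : Type*}

/-- The end state of the successive waves of strengths `σ 0, …, σ (m - 1)` from the state `u`. -/
def waveChain (T : ℕ → ℝ → E → E) : ℕ → (ℕ → ℝ) → E → E
  | 0, _, u => u
  | m + 1, σ, u => T m (σ m) (waveChain T m σ u)

variable [NormedAddCommGroup E] [NormedSpace ℝ E] {r : ℕ → E} {B : ℝ}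

lemma norm_sum_smul_le (hB : ∀ i, ‖r i‖ ≤ B) (m : ℕ) (c : ℕ → ℝ) :
    ‖∑ i ∈ Finset.range m, c i • r i‖ ≤ B * ∑ i ∈ Finset.range m, |c i| := by
  rw [Finset.mul_sum]
  refine norm_sum_le_of_le _ fun i _ => ?_
  rw [norm_smul, Real.norm_eq_abs, mul_comm]
  gcongr
  exact hB i

lemma exists_norm_waveChain_sub_sum_le (hB : ∀ i, ‖r i‖ ≤ B) (m : ℕ) :
    ∃ K, 0 ≤ K ∧ ∀ ε, 0 ≤ ε → ε ≤ 1 → ∀ T : ℕ → ℝ → E → E,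
      (∀ i, IsNearTranslation ε (r i) (T i)) → ∀ u σ σ',
      ‖waveChain T m σ u - waveChain T m σ' u - ∑ i ∈ Finset.range m, (σ i - σ' i) • r i‖
        ≤ K * ε * ∑ i ∈ Finset.range m, |σ i - σ' i| := by
  have hB0 : 0 ≤ B := (norm_nonneg _).trans (hB 0)
  induction m with
  | zero => exact ⟨0, le_rfl, by simp [waveChain]⟩
  | succ m ih =>
    obtain ⟨K, hK, ih⟩ := ih
    refine ⟨2 * K + B + 1, by positivity, fun ε hε hε1 T hT u σ σ' => ?_⟩
    have hchain := ih ε hε hε1 T hT u σ σ'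
    simp only [Finset.sum_range_succ, waveChain]
    set x := waveChain T m σ u
    set x' := waveChain T m σ' u
    set Z := ∑ i ∈ Finset.range m, (σ i - σ' i) • r i
    set D := ∑ i ∈ Finset.range m, |σ i - σ' i|
    have : 0 ≤ D := Finset.sum_nonneg fun i _ => abs_nonneg _
    have hxx' : ‖x - x'‖ ≤ (K + B) * D := by
      calc ‖x - x'‖ = ‖(x - x' - Z) + Z‖ := by rw [sub_add_cancel]
        _ ≤ K * ε * D + B * D := norm_add_le_of_le hchain (norm_sum_smul_le hB m _)
        _ ≤ K * 1 * D + B * D := by gcongr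
        _ = (K + B) * D := by ring
    calc _ = ‖(T m (σ m) x - T m (σ' m) x' - (x - x') - (σ m - σ' m) • r m)
            + (x - x' - Z)‖ := by congr 1; module
      _ ≤ ε * ((K + B) * D + |σ m - σ' m|) + K * ε * D :=
          norm_add_le_of_le ((hT m _ _ _ _).trans (by gcongr)) hchain
      _ ≤ (2 * K + B + 1) * ε * (D + |σ m - σ' m|) := by
          have : 0 ≤ ε * D := by positivity
          have : 0 ≤ (2 * K + B) * ε * |σ m - σ' m| := by positivity
          linarith

/-- `coord 0, …, coord (n - 1)` are the coordinate functionals of the basis `r 0, …, r (n - 1)`. -/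
structure IsCoordinates (n : ℕ) (r : ℕ → E) (coord : ℕ → E →L[ℝ] ℝ) : Prop where
  sum_smul : ∀ y, ∑ i ∈ Finset.range n, coord i y • r i = y
  apply_sum : ∀ (c : ℕ → ℝ), ∀ i < n, coord i (∑ j ∈ Finset.range n, c j • r j) = c i

lemma sum_abs_coord_le (n : ℕ) (coord : ℕ → E →L[ℝ] ℝ) (y : E) :
    ∑ i ∈ Finset.range n, |coord i y| ≤ (∑ i ∈ Finset.range n, ‖coord i‖) * ‖y‖ := by
  rw [Finset.sum_mul]
  exact Finset.sum_le_sum fun i _ => (coord i).le_opNorm y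

lemma exists_small_of_nonneg {c : ℝ} (hc : 0 ≤ c) : ∃ ε > 0, ε ≤ 1 ∧ c * ε ≤ 1 / 2 := by
  refine ⟨1 / (2 * (c + 1)), by positivity, ?_, ?_⟩
  · rw [div_le_one (by positivity)]; linarith
  · rw [mul_one_div, div_le_div_iff₀ (by positivity) two_pos]; linarith

theorem exists_forall_waveChain_solvable [CompleteSpace E] {n : ℕ} {coord : ℕ → E →L[ℝ] ℝ}
    (hcoord : IsCoordinates n r coord) (hB : ∀ i, ‖r i‖ ≤ B) :
    ∃ ε > 0, ε ≤ 1 ∧ ∃ K, 0 ≤ K ∧ ∀ T : ℕ → ℝ → E → E,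
      (∀ i, IsNearTranslation ε (r i) (T i)) →
      (∀ u w, ∃ σ, waveChain T n σ u = w) ∧
      ∀ u σ σ', ∑ i ∈ Finset.range n, |σ i - σ' i| ≤
        K * ‖waveChain T n σ u - waveChain T n σ' u‖ := by
  obtain ⟨K, hK, happrox⟩ := exists_norm_waveChain_sub_sum_le hB n
  set K₀ := ∑ i ∈ Finset.range n, ‖coord i‖
  have hK₀ : 0 ≤ K₀ := Finset.sum_nonneg fun i _ => norm_nonneg _
  obtain ⟨ε, hε, hε1, hKε⟩ := exists_small_of_nonneg (mul_nonneg hK hK₀)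
  refine ⟨ε, hε, hε1, 2 * K₀, by positivity, fun T hT => ⟨fun u w => ?_, fun u σ σ' => ?_⟩⟩
  · obtain ⟨y, hy⟩ := exists_eq_of_near_id (G := fun y => waveChain T n (coord · y) u) (w := w) (by
      intro y y'
      have hchain := happrox ε hε.le hε1 T hT u (coord · y) (coord · y')
      simp only [← map_sub, hcoord.sum_smul] at hchain
      calc _ ≤ K * ε * (K₀ * ‖y - y'‖) :=
            hchain.trans (by gcongr; exact sum_abs_coord_le n coord _)
        _ = K * K₀ * ε * ‖y - y'‖ := by ring
        _ ≤ _ := by gcongr)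
    exact ⟨_, hy⟩
  · have hchain := happrox ε hε.le hε1 T hT u σ σ'
    set Z := ∑ i ∈ Finset.range n, (σ i - σ' i) • r i
    set D := ∑ i ∈ Finset.range n, |σ i - σ' i|
    set P := waveChain T n σ u - waveChain T n σ' u
    have hDZ : D ≤ K₀ * ‖Z‖ := by
      refine le_of_eq_of_le (Finset.sum_congr rfl fun i hi => ?_) (sum_abs_coord_le n coord Z)
      rw [hcoord.apply_sum (fun j => σ j - σ' j) i (Finset.mem_range.1 hi)]
    have hZP : ‖Z‖ ≤ ‖P‖ + K * ε * D :=
      (norm_le_norm_add_norm_sub P Z).trans (by gcongr)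
    have : 0 ≤ D := Finset.sum_nonneg fun i _ => abs_nonneg _
    have hDP : D ≤ K₀ * (‖P‖ + K * ε * D) := hDZ.trans (by gcongr)
    have hhalf : K * K₀ * ε * D ≤ 1 / 2 * D := by gcongr
    linarith

end WaveChain

/-! ### Riemann solvers -/

/-- Elementary wave curves and a Riemann solver for `u_t + g(u)_x = 0`: `curve i s u` is the right
state of an `i`-wave of strength `s` with left state `u`, and `speed i s u` is its speed. The
families `0, …, n - 1` have ordered speeds in `(0, 1)`; the remaining indices carry no meaning.
Only small waves near the origin are required to be jumps satisfying the Rankine–Hugoniot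
condition. -/
structure RiemannSolver {E : Type*} [NormedAddCommGroup E] [NormedSpace ℝ E] (g : E → E)
    (n : ℕ) where
  curve : ℕ → ℝ → E → E
  speed : ℕ → ℝ → E → ℝ
  bound : ℝ
  radius : ℝ
  one_le_bound : 1 ≤ bound
  radius_pos : 0 < radius
  curve_zero : ∀ i u, curve i 0 u = u
  norm_curve_sub_le : ∀ i s u, ‖curve i s u - u‖ ≤ bound * |s|
  norm_curve_sub_curve_le : ∀ i s u v, ‖curve i s u - curve i s v‖ ≤ bound * ‖u - v‖
  norm_curve_comm_le : ∀ i j a b u, |a| ≤ radius → |b| ≤ radius →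
    ‖curve j b (curve i a u) - curve i a (curve j b u)‖ ≤ bound * (|a| * |b|)
  norm_curve_add_le : ∀ i a b u, |a| ≤ radius → |b| ≤ radius →
    ‖curve i b (curve i a u) - curve i (a + b) u‖ ≤ bound * (|a| * |b|)
  rankineHugoniot : ∀ i s u, |s| ≤ radius → ‖u‖ ≤ radius →
    g (curve i s u) - g u = speed i s u • (curve i s u - u)
  speed_mem : ∀ i s u, i < n → speed i s u ∈ Ioo (0 : ℝ) 1
  speed_lt_speed : ∀ i j s t u v, i < j → j < n → speed i s u < speed j t v
  exists_waveChain_eq : ∀ u w, ∃ σ, waveChain curve n σ u = w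
  sum_abs_sub_le : ∀ u σ τ, ∑ i ∈ Finset.range n, |σ i - τ i| ≤
    bound * ‖waveChain curve n σ u - waveChain curve n τ u‖

section Construction

variable {E : Type*} [NormedAddCommGroup E] [NormedSpace ℝ E] {g : E → E} {n : ℕ}

lemma exists_speed_gap {l : ℕ → ℝ} (hl : MapsTo l (Iio n) (Ioo 0 1))
    (hmono : StrictMonoOn l (Iio n)) :
    ∃ γ > 0, (∀ i < n, ∀ x, |x - l i| ≤ γ → x ∈ Ioo 0 1) ∧
      ∀ i j, i < j → j < n → ∀ x y, |x - l i| ≤ γ → |y - l j| ≤ γ → x < y := by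
  have hlin (c : ℝ) {a b : ℝ} (hab : a < b) : ∀ᶠ γ in 𝓝[>] (0 : ℝ), a + c * γ < b := by
    have : Tendsto (fun γ : ℝ => a + c * γ) (𝓝 0) (𝓝 a) :=
      Continuous.tendsto' (by fun_prop) _ _ (by simp)
    exact nhdsWithin_le_nhds (this.eventually_lt_const hab)
  have hall : ∀ᶠ γ in 𝓝[>] (0 : ℝ), ∀ i ∈ Finset.range n, (0 + 1 * γ < l i ∧ l i + 1 * γ < 1) ∧
      ∀ j ∈ (Finset.range n).filter (i < ·), l i + 2 * γ < l j := by
    refine (Filter.eventually_all_finset _).2 fun i hi => ?_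
    have hi := Finset.mem_range.1 hi
    refine ((hlin 1 (hl hi).1).and (hlin 1 (hl hi).2)).and
      ((Filter.eventually_all_finset _).2 fun j hj => ?_)
    obtain ⟨hj, hij⟩ := Finset.mem_filter.1 hj
    exact hlin 2 (hmono hi (Finset.mem_range.1 hj) hij)
  obtain ⟨γ, hγ, hpos⟩ := (hall.and self_mem_nhdsWithin).exists
  simp only [Finset.mem_filter, Finset.mem_range, zero_add, one_mul] at hγ
  refine ⟨γ, hpos, fun i hi x hx => ?_, fun i j hij hj x y hx hy => ?_⟩
  · obtain ⟨h0, h1⟩ := (hγ i hi).1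
    rw [abs_le] at hx
    exact ⟨by linarith, by linarith⟩
  · have hgap := (hγ i (hij.trans hj)).2 j ⟨hj, hij⟩
    rw [abs_le] at hx hy
    linarith

lemma IsNearTranslation.norm_sub_sub_le {ε B : ℝ} {r : E} {T : ℝ → E → E}
    (hT : IsNearTranslation ε r T) (hε : ε ≤ 1) (hr : ‖r‖ ≤ B) (s s' : ℝ) (u : E) :
    ‖T s u - T s' u‖ ≤ (B + 1) * |s - s'| := by
  have hdev := hT s s' u u
  rw [sub_self, sub_zero, norm_zero, zero_add] at hdev
  calc ‖T s u - T s' u‖ ≤ ‖(s - s') • r‖ + ‖T s u - T s' u - (s - s') • r‖ :=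
        norm_le_norm_add_norm_sub' _ _
    _ ≤ |s - s'| * B + 1 * |s - s'| := by
        rw [norm_smul, Real.norm_eq_abs]
        gcongr
        exact hdev.trans (by gcongr)
    _ = (B + 1) * |s - s'| := by ring

lemma IsNearTranslation.norm_apply_sub_apply_le {ε : ℝ} {r : E} {T : ℝ → E → E}
    (hT : IsNearTranslation ε r T) (hε : ε ≤ 1) (s : ℝ) (u v : E) :
    ‖T s u - T s v‖ ≤ 2 * ‖u - v‖ := by
  have hdev := hT s s u v
  rw [sub_self, zero_smul, sub_zero, abs_zero, add_zero] at hdev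
  calc ‖T s u - T s v‖ ≤ ‖u - v‖ + ‖T s u - T s v - (u - v)‖ := norm_le_norm_add_norm_sub' _ _
    _ ≤ ‖u - v‖ + 1 * ‖u - v‖ := by gcongr; exact hdev.trans (by gcongr)
    _ = 2 * ‖u - v‖ := by ring

lemma exists_secantCurves [CompleteSpace E] {r : ℕ → E} {B L ε : ℝ} {X : ℕ → E → E → E}
    (hB : ∀ i, ‖r i‖ ≤ B) (hL : 0 ≤ L) (hε : 0 < ε) (hε1 : ε ≤ 1)
    (hX : ∀ i, SumLipschitz L (X i)) (hXr : ∀ i u v, ‖X i u v - r i‖ ≤ ε / 4) :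
    ∃ S > 0, S * L ≤ 1 / 4 ∧ ∃ T : ℕ → ℝ → E → E,
      (∀ i, IsSecantCurve (X i) (r i) S (T i)) ∧ ∀ i, IsNearTranslation ε (r i) (T i) := by
  have hB0 : 0 ≤ B := (norm_nonneg _).trans (hB 0)
  set S := ε / (4 * ((L + 1) * (B + 1)))
  have hS : 0 < S := by positivity
  have hSeq : S * ((L + 1) * (B + 1)) = ε / 4 := by simp only [S]; field_simp
  have hSLB : S * L * (B + 1) ≤ ε / 4 := by
    rw [← hSeq, mul_assoc]; gcongr; linarith
  have hSL : S * L ≤ 1 / 4 :=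
    (le_mul_of_one_le_right (by positivity) (by linarith)).trans (hSLB.trans (by linarith))
  choose T hT using fun i => exists_isSecantCurve (hX i) (r i) hS.le hSL
  exact ⟨S, hS, hSL, T, hT,
    fun i => (hT i).isNearTranslation (hX i) hS.le hL (hB i) (hXr i) hSLB hε1⟩

theorem nonempty_riemannSolver_of_isSecantField [CompleteSpace E] {r : ℕ → E} {l : ℕ → ℝ} {B L : ℝ}
    {coord : ℕ → E →L[ℝ] ℝ} (hB : ∀ i, ‖r i‖ ≤ B) (hl : MapsTo l (Iio n) (Ioo 0 1))
    (hmono : StrictMonoOn l (Iio n)) (hcoord : IsCoordinates n r coord) (hL : 0 ≤ L)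
    (hfield : ∀ η > 0, ∃ ρ > 0, ∀ i, ∃ X μ, IsSecantField g (r i) (l i) L η ρ X μ) :
    Nonempty (RiemannSolver g n) := by
  have hB0 : 0 ≤ B := (norm_nonneg _).trans (hB 0)
  obtain ⟨ε, hε, hε1, K, hK, hsolve⟩ := exists_forall_waveChain_solvable hcoord hB
  obtain ⟨γ, hγ, hγl, hγsep⟩ := exists_speed_gap hl hmono
  obtain ⟨ρ, hρ, hX⟩ := hfield (min (ε / 4) γ) (by positivity)
  choose X μ hX using hX
  have hXr i u v : ‖X i u v - r i‖ ≤ ε / 4 := ((hX i).norm_sub_le u v).trans (min_le_left _ _)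
  have hμl i u v : |μ i u v - l i| ≤ γ := ((hX i).abs_sub_le u v).trans (min_le_right _ _)
  have hXB i u v : ‖X i u v‖ ≤ B + 1 := by
    linarith [norm_le_norm_add_norm_sub' (X i u v) (r i), hXr i u v, hB i]
  obtain ⟨S, hS, hSL, T, hT, hnear⟩ :=
    exists_secantCurves hB hL hε hε1 (fun i => (hX i).lipschitz) hXr
  have hT0 i u : T i 0 u = u := (hT i).apply_zero hS.le u
  have hradius {a : ℝ} (ha : |a| ≤ min (S / 2) (ρ / (B + 2))) : |a| ≤ S := by
    linarith [ha.trans (min_le_left _ _)]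
  obtain ⟨C, hC1, hCB, hC2, hCL, hCK⟩ : ∃ C : ℝ, 1 ≤ C ∧ B + 1 ≤ C ∧ 2 ≤ C ∧
      8 * L * (B + 1) ≤ C ∧ K ≤ C := by
    have : 0 ≤ 8 * L * (B + 1) := by positivity
    exact ⟨8 * L * (B + 1) + (B + 1) + 2 + K, by linarith, by linarith, by linarith, by linarith,
      by linarith⟩
  refine ⟨{
    curve := T, speed := fun i s u => μ i u (T i s u), bound := C
    radius := min (S / 2) (ρ / (B + 2))
    one_le_bound := hC1
    radius_pos := by positivity
    curve_zero := hT0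
    norm_curve_sub_le := fun i s u => ?_
    norm_curve_sub_curve_le := fun i s u v =>
      ((hnear i).norm_apply_sub_apply_le hε1 s u v).trans (by gcongr)
    norm_curve_comm_le := fun i j a b u ha hb =>
      ((hT i).norm_comp_sub_comp_le (hT j) (hX i).lipschitz (hX j).lipschitz hL hSL (hXB i) (hXB j)
        (hradius ha) (hradius hb) u).trans (by gcongr)
    norm_curve_add_le := fun i a b u ha hb =>
      ((hT i).norm_comp_sub_add_le (hX i).lipschitz hL hSL (hXB i) (hradius ha) (hradius hb)
        ?_ u).trans (by gcongr)
    rankineHugoniot := fun i s u hs hu => (hX i).rankineHugoniot _ _ s ?_ ?_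
      ((hT i).apply_of_abs_le (hradius hs) u)
    speed_mem := fun i s u hi => hγl i hi _ (hμl i u _)
    speed_lt_speed := fun i j s t u v hij hj => hγsep i j hij hj _ _ (hμl i u _) (hμl j v _)
    exists_waveChain_eq := (hsolve T hnear).1
    sum_abs_sub_le := fun u σ τ => ((hsolve T hnear).2 u σ τ).trans (by gcongr) }⟩
  · have h := (hnear i).norm_sub_sub_le hε1 (hB i) s 0 u
    rw [hT0, sub_zero] at h
    exact h.trans (by gcongr)
  · linarith [abs_add_le a b, ha.trans (min_le_left _ _), hb.trans (min_le_left _ _)]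
  · exact hu.trans ((min_le_right _ _).trans (div_le_self hρ.le (by linarith)))
  · calc ‖T i s u‖ ≤ ρ / (B + 2) * (B + 1 + 1) :=
          (hT i).norm_apply_le (hXB i) (hradius hs) (hs.trans (min_le_right _ _))
            (hu.trans (min_le_right _ _))
      _ = ρ := by field_simp; ring

end Construction

section Eigenbasis

variable {E : Type*} [AddCommGroup E] [Module ℝ E] {ι : Type*} (b : Module.Basis ι ℝ E)
  {A : E →ₗ[ℝ] E} {l : ι → ℝ}

lemma coord_apply_of_eigenbasis (hA : ∀ i, A (b i) = l i • b i) (i : ι) (y : E) :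
    b.coord i (A y) = l i * b.coord i y := by
  have : b.coord i ∘ₗ A = l i • b.coord i := by
    refine b.ext fun j => ?_
    obtain rfl | hij := eq_or_ne j i <;> simp_all
  exact LinearMap.congr_fun this y

lemma eq_zero_of_apply_eq_smul_of_coord_eq_zero (hA : ∀ i, A (b i) = l i • b i)
    (hl : Function.Injective l) {i : ι} {y : E} (hy : A y = l i • y) (hi : b.coord i y = 0) :
    y = 0 := by
  refine b.ext_elem fun j => ?_
  obtain rfl | hij := eq_or_ne i j
  · simpa using hi
  · have h := coord_apply_of_eigenbasis b hA j y
    rw [hy, map_smul, smul_eq_mul] at h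
    simpa using (mul_eq_mul_right_iff.1 h).resolve_left (hl.ne hij)

end Eigenbasis

theorem exists_isSecantField_of_eigenbasis {E : Type*} [NormedAddCommGroup E] [NormedSpace ℝ E]
    [FiniteDimensional ℝ E] {g : E → E} (hg : ContDiff ℝ 2 g) {ι : Type*} [Finite ι]
    (b : Module.Basis ι ℝ E) {l : ι → ℝ} (hl : Function.Injective l)
    (hb : ∀ i, fderiv ℝ g 0 (b i) = l i • b i) :
    ∃ L, 0 ≤ L ∧ ∀ η > 0, ∃ ρ > 0, ∀ i, ∃ X μ, IsSecantField g (b i) (l i) L η ρ X μ := by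
  have := Fintype.ofFinite ι
  choose L hL hfield using fun i =>
    exists_isSecantField hg (φ := (b.coord i).toContinuousLinearMap) (by simp) (hb i)
      (coord_apply_of_eigenbasis b hb i)
      (fun _ hy hi => eq_zero_of_apply_eq_smul_of_coord_eq_zero b hb hl hy hi)
  refine ⟨∑ i, L i, Finset.sum_nonneg fun i _ => hL i, fun η hη => ?_⟩
  have hall := (eventually_all.2 fun i => hfield i η hη).and self_mem_nhdsWithin
  obtain ⟨ρ, hfield, hρ⟩ := hall.exists
  refine ⟨ρ, hρ, fun i => ?_⟩
  obtain ⟨X, μ, hX⟩ := hfield i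
  exact ⟨X, μ, hX.mono (Finset.single_le_sum (fun j _ => hL j) (Finset.mem_univ i))⟩

theorem nonempty_riemannSolver {E : Type*} [NormedAddCommGroup E] [NormedSpace ℝ E]
    [FiniteDimensional ℝ E] {g : E → E} (hg : ContDiff ℝ 2 g) {n : ℕ}
    (hn : Module.finrank ℝ E = n) {r : Fin n → E} {l : Fin n → ℝ} (hr : ∀ i, r i ≠ 0)
    (hl : StrictMono l) (hl01 : ∀ i, l i ∈ Ioo 0 1)
    (heig : ∀ i, fderiv ℝ g 0 (r i) = l i • r i) : Nonempty (RiemannSolver g n) := by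
  have hlin : LinearIndependent ℝ r :=
    Module.End.eigenvectors_linearIndependent' (fderiv ℝ g 0 : E →ₗ[ℝ] E) l hl.injective r
      fun i => ⟨Module.End.mem_eigenspace_iff.2 (heig i), hr i⟩
  set b := basisOfLinearIndependentOfCardEqFinrank' r hlin (by simp [hn])
  have hb i : b i = r i := by simp [b]
  obtain ⟨L, hL, hfield⟩ :=
    exists_isSecantField_of_eigenbasis hg b hl.injective fun i => by simpa only [hb] using heig i
  refine nonempty_riemannSolver_of_isSecantField (r := Function.extend Fin.val r 0)
    (l := Function.extend Fin.val l 0) (B := ∑ i, ‖r i‖)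
    (coord := Function.extend Fin.val (fun i => (b.coord i).toContinuousLinearMap) 0)
    ?_ ?_ ?_ ⟨?_, ?_⟩ hL ?_
  · intro i
    obtain ⟨i, rfl⟩ | hi := em (∃ k : Fin n, ↑k = i)
    · rw [Fin.val_injective.extend_apply]
      exact Finset.single_le_sum (fun j _ => norm_nonneg (r j)) (Finset.mem_univ i)
    · rw [Function.extend_apply' _ _ _ hi, Pi.zero_apply, norm_zero]
      positivity
  · exact fun i hi => Fin.val_injective.extend_apply l 0 ⟨i, hi⟩ ▸ hl01 ⟨i, hi⟩
  · intro i hi j hj hij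
    rw [Fin.val_injective.extend_apply l 0 ⟨i, hi⟩, Fin.val_injective.extend_apply l 0 ⟨j, hj⟩]
    exact hl hij
  · intro y
    simpa [Finset.sum_range, Fin.val_injective.extend_apply, hb] using b.sum_repr y
  · intro c i hi
    rw [Fin.val_injective.extend_apply _ 0 ⟨i, hi⟩]
    simp [Finset.sum_range, Fin.val_injective.extend_apply, ← hb, Finsupp.single_apply]
  · intro η hη
    obtain ⟨ρ, hρ, hfield⟩ := hfield η hη
    refine ⟨ρ, hρ, fun i => ?_⟩
    obtain ⟨i, rfl⟩ | hi := em (∃ k : Fin n, ↑k = i)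
    · simpa only [Fin.val_injective.extend_apply, hb] using hfield i
    · simp only [Function.extend_apply' _ _ _ hi]
      exact ⟨0, 0, isSecantField_zero g hL hη.le⟩

/-! ### Wave interactions -/

/-- The quadratic interaction potential of a fan of waves with strengths `x 0, …, x (n - 1)` on the
left and a fan with strengths `y 0, …, y (n - 1)` on the right: each wave of the first fan interacts
with the waves of the second one of the same or of a slower family. -/
def interactionPotential (n : ℕ) (x y : ℕ → ℝ) : ℝ :=
  ∑ i ∈ Finset.range n, x i * ∑ l ∈ Finset.range (i + 1), y l

lemma interactionPotential_succ (n : ℕ) (x y : ℕ → ℝ) : interactionPotential (n + 1) x y =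
    interactionPotential n x y + x n * (∑ l ∈ Finset.range n, y l + y n) := by
  rw [interactionPotential, Finset.sum_range_succ, Finset.sum_range_succ _ n, interactionPotential]

namespace RiemannSolver

variable {E : Type*} [NormedAddCommGroup E] [NormedSpace ℝ E] {g : E → E} {n : ℕ}
  (R : RiemannSolver g n)

lemma bound_pos : 0 < R.bound := zero_lt_one.trans_le R.one_le_bound

lemma norm_waveChain_sub_le (m : ℕ) (σ : ℕ → ℝ) (u : E) :
    ‖waveChain R.curve m σ u - u‖ ≤ R.bound * ∑ i ∈ Finset.range m, |σ i| := by
  induction m with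
  | zero => simp [waveChain]
  | succ m ih =>
    rw [Finset.sum_range_succ, mul_add, add_comm (R.bound * _)]
    exact (norm_sub_le_norm_sub_add_norm_sub _ (waveChain R.curve m σ u) _).trans
      (add_le_add (R.norm_curve_sub_le _ _ _) ih)

lemma waveChain_zero (m : ℕ) (u : E) : waveChain R.curve m 0 u = u := by
  induction m with
  | zero => rfl
  | succ m ih => rw [waveChain, ih, Pi.zero_apply, R.curve_zero]

lemma waveChain_congr {m : ℕ} {σ τ : ℕ → ℝ} (h : ∀ i < m, σ i = τ i) (u : E) :
    waveChain R.curve m σ u = waveChain R.curve m τ u := by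
  induction m with
  | zero => rfl
  | succ m ih => rw [waveChain, waveChain, ih fun i hi => h i (by lia), h m (by lia)]

lemma waveChain_indicator_Iio {m k : ℕ} (hmk : m ≤ k) (σ : ℕ → ℝ) (u : E) :
    waveChain R.curve k ((Iio m).indicator σ) u = waveChain R.curve m σ u := by
  induction k, hmk using Nat.le_induction with
  | base => exact R.waveChain_congr (fun i hi => indicator_of_mem (mem_Iio.2 hi) σ) u
  | succ k hmk ih =>
    rw [waveChain, ih, indicator_of_notMem (notMem_Iio.2 hmk), R.curve_zero]

lemma waveChain_indicator_Ici {m k : ℕ} (hmk : m ≤ k) (σ : ℕ → ℝ) (u : E) :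
    waveChain R.curve k ((Ici m).indicator σ) (waveChain R.curve m σ u) =
      waveChain R.curve k σ u := by
  induction k, hmk using Nat.le_induction with
  | base =>
    rw [R.waveChain_congr (τ := 0) fun i hi => indicator_of_notMem (notMem_Ici.2 hi) σ,
      R.waveChain_zero]
  | succ k hmk ih => rw [waveChain, ih, indicator_of_mem (mem_Ici.2 hmk), waveChain]

lemma norm_waveChain_curve_comm_le (k m : ℕ) {σ : ℕ → ℝ} {a : ℝ} (ha : |a| ≤ R.radius)
    (hσ : ∀ i < k, |σ i| ≤ R.radius) (u : E) :
    ‖waveChain R.curve k σ (R.curve m a u) - R.curve m a (waveChain R.curve k σ u)‖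
      ≤ R.bound ^ (k + 1) * ((∑ l ∈ Finset.range k, |σ l|) * |a|) := by
  have hC := R.bound_pos
  induction k with
  | zero => simp [waveChain]
  | succ k ih =>
    have ih := ih fun i hi => hσ i (by lia)
    rw [waveChain, waveChain, Finset.sum_range_succ]
    set Z := ∑ l ∈ Finset.range k, |σ l|
    set v := waveChain R.curve k σ u
    calc _ ≤ ‖R.curve k (σ k) (waveChain R.curve k σ (R.curve m a u))
              - R.curve k (σ k) (R.curve m a v)‖
            + ‖R.curve k (σ k) (R.curve m a v) - R.curve m a (R.curve k (σ k) v)‖ :=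
          norm_sub_le_norm_sub_add_norm_sub _ _ _
      _ ≤ R.bound * (R.bound ^ (k + 1) * (Z * |a|)) + R.bound * (|a| * |σ k|) := by
          gcongr
          exacts [(R.norm_curve_sub_curve_le _ _ _ _).trans (by gcongr),
            R.norm_curve_comm_le m k a (σ k) _ ha (hσ k (by lia))]
      _ ≤ R.bound * (R.bound ^ (k + 1) * (Z * |a|)) + R.bound ^ (k + 2) * (|a| * |σ k|) := by
          gcongr
          exact le_self_pow₀ R.one_le_bound (by lia)
      _ = _ := by ring

lemma norm_waveChain_waveChain_sub_le (m : ℕ) {σ τ : ℕ → ℝ} (hσ : ∀ i < m, |σ i| ≤ R.radius)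
    (hτ : ∀ i < m, |τ i| ≤ R.radius) (u : E) :
    ‖waveChain R.curve m τ (waveChain R.curve m σ u) - waveChain R.curve m (σ + τ) u‖
      ≤ R.bound ^ (m + 1) * interactionPotential m |σ| |τ| := by
  have hC := R.bound_pos
  induction m with
  | zero => simp [waveChain, interactionPotential]
  | succ m ih =>
    have ih := ih (fun i hi => hσ i (by lia)) fun i hi => hτ i (by lia)
    have hcomm := R.norm_waveChain_curve_comm_le m m (hσ m (by lia)) (fun i hi => hτ i (by lia))
      (waveChain R.curve m σ u)
    rw [interactionPotential_succ]
    simp only [waveChain, Pi.add_apply, Pi.abs_apply]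
    set D := interactionPotential m |σ| |τ|
    set Z := ∑ l ∈ Finset.range m, |τ l|
    set x := waveChain R.curve m σ u
    set y := waveChain R.curve m (σ + τ) u
    set z := waveChain R.curve m τ x
    have hswap : ‖R.curve m (τ m) (waveChain R.curve m τ (R.curve m (σ m) x))
        - R.curve m (τ m) (R.curve m (σ m) z)‖ ≤ R.bound * (R.bound ^ (m + 1) * (Z * |σ m|)) :=
      (R.norm_curve_sub_curve_le _ _ _ _).trans (by gcongr)
    have hmerge : ‖R.curve m (τ m) (R.curve m (σ m) z) - R.curve m (σ m + τ m) z‖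
        ≤ R.bound ^ (m + 2) * (|σ m| * |τ m|) :=
      (R.norm_curve_add_le m (σ m) (τ m) z (hσ m (by lia)) (hτ m (by lia))).trans
        (by gcongr; exact le_self_pow₀ R.one_le_bound (by lia))
    have hprev : ‖R.curve m (σ m + τ m) z - R.curve m (σ m + τ m) y‖
        ≤ R.bound * (R.bound ^ (m + 1) * D) :=
      (R.norm_curve_sub_curve_le _ _ _ _).trans (by gcongr)
    calc _ ≤ _ := norm_sub_le_norm_sub_add_norm_sub _ (R.curve m (σ m + τ m) z) _
      _ ≤ _ := add_le_add (norm_sub_le_norm_sub_add_norm_sub _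
          (R.curve m (τ m) (R.curve m (σ m) z)) _) le_rfl
      _ ≤ _ := add_le_add (add_le_add hswap hmerge) hprev
      _ = _ := by ring

theorem sum_abs_sub_add_le {σ τ a : ℕ → ℝ} (hσ : ∀ i < n, |σ i| ≤ R.radius)
    (hτ : ∀ i < n, |τ i| ≤ R.radius) {u : E} (ha : waveChain R.curve n a u =
      waveChain R.curve n τ (waveChain R.curve n σ u)) :
    ∑ i ∈ Finset.range n, |a i - (σ + τ) i|
      ≤ R.bound ^ (n + 2) * interactionPotential n |σ| |τ| := by
  have hC := R.bound_pos
  refine (R.sum_abs_sub_le u a (σ + τ)).trans ?_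
  rw [ha, pow_succ' _ (n + 1), mul_assoc]
  gcongr
  exact R.norm_waveChain_waveChain_sub_le n hσ hτ u

end RiemannSolver

/-! ### The Glimm functional -/

section GlimmFunctional

variable {n : ℕ} {x x' y y' : ℕ → ℝ} {a a' b e : ℕ → ℕ → ℝ} {m : ℕ → ℕ}

lemma interactionPotential_add_left (n : ℕ) (x x' y : ℕ → ℝ) :
    interactionPotential n (x + x') y =
      interactionPotential n x y + interactionPotential n x' y := by
  simp only [interactionPotential, Pi.add_apply, add_mul, Finset.sum_add_distrib]

lemma interactionPotential_add_right (n : ℕ) (x y y' : ℕ → ℝ) :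
    interactionPotential n x (y + y') =
      interactionPotential n x y + interactionPotential n x y' := by
  simp only [interactionPotential, Pi.add_apply, mul_add, Finset.sum_add_distrib]

lemma interactionPotential_nonneg (n : ℕ) (hx : 0 ≤ x) (hy : 0 ≤ y) :
    0 ≤ interactionPotential n x y :=
  Finset.sum_nonneg fun i _ => mul_nonneg (hx i) (Finset.sum_nonneg fun l _ => hy l)

lemma interactionPotential_mono (n : ℕ) (hx : 0 ≤ x) (hy : 0 ≤ y) (hxx' : x ≤ x') (hyy' : y ≤ y') :
    interactionPotential n x y ≤ interactionPotential n x' y' :=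
  Finset.sum_le_sum fun i _ => mul_le_mul (hxx' i) (Finset.sum_le_sum fun l _ => hyy' l)
    (Finset.sum_nonneg fun l _ => hy l) ((hx i).trans (hxx' i))

/-- The total strength of a fan of waves with strengths `x 0, …, x (n - 1)`. -/
def totalStrength (n : ℕ) (x : ℕ → ℝ) : ℝ := ∑ i ∈ Finset.range n, x i

lemma totalStrength_nonneg (n : ℕ) (hx : 0 ≤ x) : 0 ≤ totalStrength n x :=
  Finset.sum_nonneg fun i _ => hx i

lemma totalStrength_mono (n : ℕ) (h : x ≤ y) : totalStrength n x ≤ totalStrength n y :=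
  Finset.sum_le_sum fun i _ => h i

lemma totalStrength_add (n : ℕ) (x y : ℕ → ℝ) :
    totalStrength n (x + y) = totalStrength n x + totalStrength n y :=
  Finset.sum_add_distrib

lemma totalStrength_sum (n : ℕ) (a : ℕ → ℕ → ℝ) (N : ℕ) :
    totalStrength n (∑ j ∈ Finset.range N, a j) = ∑ j ∈ Finset.range N, totalStrength n (a j) := by
  simp only [totalStrength, Finset.sum_apply]
  exact Finset.sum_comm

lemma interactionPotential_le_mul (n : ℕ) (hx : 0 ≤ x) (hy : 0 ≤ y) :
    interactionPotential n x y ≤ totalStrength n x * totalStrength n y := by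
  rw [totalStrength, Finset.sum_mul]
  refine Finset.sum_le_sum fun i hi => mul_le_mul_of_nonneg_left ?_ (hx i)
  exact Finset.sum_le_sum_of_subset_of_nonneg
    (Finset.range_mono (Finset.mem_range.1 hi)) fun l _ _ => hy l

/-- Glimm's quadratic functional of `N` consecutive fans, the `j`-th one with strengths `a j`: the
interaction potential summed over all pairs of fans. -/
def glimmPotential (n : ℕ) (a : ℕ → ℕ → ℝ) (N : ℕ) : ℝ :=
  ∑ k ∈ Finset.range N, interactionPotential n (∑ j ∈ Finset.range k, a j) (a k)

lemma glimmPotential_succ (n : ℕ) (a : ℕ → ℕ → ℝ) (N : ℕ) : glimmPotential n a (N + 1) =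
    glimmPotential n a N + interactionPotential n (∑ j ∈ Finset.range N, a j) (a N) :=
  Finset.sum_range_succ _ _

lemma glimmPotential_nonneg (n : ℕ) (ha : 0 ≤ a) (N : ℕ) : 0 ≤ glimmPotential n a N :=
  Finset.sum_nonneg fun j _ =>
    interactionPotential_nonneg n (Finset.sum_nonneg fun k _ => ha k) (ha j)

lemma glimmPotential_mono (n : ℕ) (ha : 0 ≤ a) (h : a ≤ b) (N : ℕ) :
    glimmPotential n a N ≤ glimmPotential n b N :=
  Finset.sum_le_sum fun j _ => interactionPotential_mono n (Finset.sum_nonneg fun k _ => ha k)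
    (ha j) (Finset.sum_le_sum fun k _ => h k) (h j)

lemma glimmPotential_le_sq (n : ℕ) (ha : 0 ≤ a) (N : ℕ) :
    glimmPotential n a N ≤ totalStrength n (∑ j ∈ Finset.range N, a j) ^ 2 := by
  induction N with
  | zero => simp [glimmPotential, sq_nonneg]
  | succ N ih =>
    have hA : 0 ≤ ∑ j ∈ Finset.range N, a j := Finset.sum_nonneg fun k _ => ha k
    rw [glimmPotential_succ, Finset.sum_range_succ, totalStrength_add]
    nlinarith [interactionPotential_le_mul n hA (ha N),
      mul_nonneg (totalStrength_nonneg n hA) (totalStrength_nonneg n (ha N))]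

lemma glimmPotential_add_le (n : ℕ) (hb : 0 ≤ b) (he : 0 ≤ e) (N : ℕ) :
    glimmPotential n (b + e) N ≤ glimmPotential n b N
      + totalStrength n (∑ j ∈ Finset.range N, b j) * totalStrength n (∑ j ∈ Finset.range N, e j)
      + totalStrength n (∑ j ∈ Finset.range N, e j) ^ 2 := by
  induction N with
  | zero => simp [glimmPotential, totalStrength]
  | succ N ih =>
    have hB : 0 ≤ ∑ j ∈ Finset.range N, b j := Finset.sum_nonneg fun k _ => hb k
    have hE : 0 ≤ ∑ j ∈ Finset.range N, e j := Finset.sum_nonneg fun k _ => he k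
    rw [glimmPotential_succ, glimmPotential_succ]
    simp only [Finset.sum_range_succ _ N, Pi.add_apply b e, Finset.sum_add_distrib,
      totalStrength_add, interactionPotential_add_left, interactionPotential_add_right]
    nlinarith [interactionPotential_le_mul n hB (he N), interactionPotential_le_mul n hE (hb N),
      interactionPotential_le_mul n hE (he N),
      mul_nonneg (totalStrength_nonneg n (hb N)) (totalStrength_nonneg n (he N)),
      mul_nonneg (totalStrength_nonneg n hE) (totalStrength_nonneg n (he N))]

/-- When the fan at interface `j` is sampled between its waves `m j - 1` and `m j`, the waves
`i < m j` stay at interface `j` and the others move on to interface `j + 1`. These are the strengths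
of the former. -/
def slowWaves (a : ℕ → ℕ → ℝ) (m : ℕ → ℕ) (j : ℕ) : ℕ → ℝ := (Iio (m j)).indicator (a j)

/-- The strengths of the waves which enter interface `j` from the interface on its left: the waves
`i ≥ m (j - 1)` of the fan at `j - 1`, and none for `j = 0`. -/
def fastWaves (a : ℕ → ℕ → ℝ) (m : ℕ → ℕ) : ℕ → ℕ → ℝ
  | 0 => 0
  | j + 1 => (Ici (m j)).indicator (a j)

lemma slowWaves_nonneg (ha : 0 ≤ a) (m : ℕ → ℕ) : 0 ≤ slowWaves a m := fun j =>
  indicator_nonneg fun i _ => ha j i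

lemma fastWaves_nonneg (ha : 0 ≤ a) (m : ℕ → ℕ) : 0 ≤ fastWaves a m
  | 0 => le_rfl
  | j + 1 => indicator_nonneg fun i _ => ha j i

lemma slowWaves_add_fastWaves_succ (a : ℕ → ℕ → ℝ) (m : ℕ → ℕ) (j : ℕ) :
    slowWaves a m j + fastWaves a m (j + 1) = a j := by
  rw [slowWaves, fastWaves, ← compl_Iio, indicator_self_add_compl]

lemma interactionPotential_slowWaves_fastWaves (n : ℕ) (a : ℕ → ℕ → ℝ) (m : ℕ → ℕ) (j : ℕ) :
    interactionPotential n (slowWaves a m j) (fastWaves a m (j + 1)) = 0 := by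
  refine Finset.sum_eq_zero fun i _ => ?_
  by_cases hi : i < m j
  · rw [Finset.sum_eq_zero, mul_zero]
    intro l hl
    have hlm : l < m j := (Nat.lt_succ_iff.1 (Finset.mem_range.1 hl)).trans_lt hi
    exact indicator_of_notMem (notMem_Ici.2 hlm) _
  · rw [slowWaves, indicator_of_notMem (mt mem_Iio.1 hi), zero_mul]

lemma sum_fastWaves_add_slowWaves (a : ℕ → ℕ → ℝ) (m : ℕ → ℕ) (N : ℕ) :
    ∑ j ∈ Finset.range N, (fastWaves a m + slowWaves a m) j + fastWaves a m N =
      ∑ j ∈ Finset.range N, a j := by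
  induction N with
  | zero => simp [fastWaves]
  | succ N ih =>
    rw [Finset.sum_range_succ, Finset.sum_range_succ _ N, ← ih, Pi.add_apply,
      ← slowWaves_add_fastWaves_succ a m N]
    abel

lemma glimmPotential_fastWaves_add_slowWaves (n : ℕ) (a : ℕ → ℕ → ℝ) (m : ℕ → ℕ) (N : ℕ) :
    glimmPotential n (fastWaves a m + slowWaves a m) N
      + ∑ j ∈ Finset.range N, interactionPotential n (fastWaves a m j) (slowWaves a m j)
      + interactionPotential n (∑ j ∈ Finset.range N, (fastWaves a m + slowWaves a m) j)
          (fastWaves a m N) = glimmPotential n a N := by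
  induction N with
  | zero => simp [glimmPotential, interactionPotential]
  | succ N ih =>
    have hSF := interactionPotential_slowWaves_fastWaves n a m N
    rw [glimmPotential_succ, glimmPotential_succ, ← ih, ← sum_fastWaves_add_slowWaves a m N,
      ← slowWaves_add_fastWaves_succ a m N, Finset.sum_range_succ, Finset.sum_range_succ _ N]
    simp only [Pi.add_apply (fastWaves a m), interactionPotential_add_left,
      interactionPotential_add_right, hSF]
    ring

-- With `Δ` the potential dissipated by the interactions, the strength grows by at most `C * Δ`
-- while the potential drops by `Δ` up to errors of order `V * Δ`.
lemma glimmFunctional_le {V V' B w Q Q' Δ C : ℝ} (hC : 0 ≤ C) (hB : 0 ≤ B) (hw : 0 ≤ w)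
    (hBV : B ≤ V) (hV : C * V ≤ 1 / 4) (hwΔ : w ≤ C * Δ) (hΔ : Δ ≤ V ^ 2) (hV' : V' ≤ B + w)
    (hQ' : Q' ≤ Q - Δ + B * w + w ^ 2) : V' + 2 * C * Q' ≤ V + 2 * C * Q := by
  have hV0 := hB.trans hBV
  have hBw : C * B * w ≤ 1 / 4 * w := by
    gcongr
    exact (mul_le_mul_of_nonneg_left hBV hC).trans hV
  have hCw : C * w ≤ 1 / 4 := by
    calc C * w ≤ C * (C * V ^ 2) := by gcongr; exact hwΔ.trans (by gcongr)
      _ = (C * V) ^ 2 := by ring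
      _ ≤ (1 / 4) ^ 2 := by gcongr
      _ ≤ _ := by norm_num
  have hww : C * w * w ≤ 1 / 4 * w := by gcongr
  nlinarith [mul_le_mul_of_nonneg_left hQ' hC]

theorem totalStrength_add_glimmPotential_le {C : ℝ} (hC : 0 ≤ C) (ha : 0 ≤ a) (ha' : 0 ≤ a')
    (he : 0 ≤ e) (ha'e : a' ≤ fastWaves a m + slowWaves a m + e)
    (hint : ∀ j, totalStrength n (e j)
      ≤ C * interactionPotential n (fastWaves a m j) (slowWaves a m j)) (N : ℕ)
    (hV : C * totalStrength n (∑ j ∈ Finset.range N, a j) ≤ 1 / 4) :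
    totalStrength n (∑ j ∈ Finset.range N, a' j) + 2 * C * glimmPotential n a' N
      ≤ totalStrength n (∑ j ∈ Finset.range N, a j) + 2 * C * glimmPotential n a N := by
  have hf := fastWaves_nonneg ha m
  have hs := slowWaves_nonneg ha m
  have hb := add_nonneg hf hs
  have hsum := sum_fastWaves_add_slowWaves a m N
  have hpot := glimmPotential_fastWaves_add_slowWaves n a m N
  set b := fastWaves a m + slowWaves a m
  have hB : 0 ≤ ∑ j ∈ Finset.range N, b j := Finset.sum_nonneg fun j _ => hb j
  have hE : 0 ≤ ∑ j ∈ Finset.range N, e j := Finset.sum_nonneg fun j _ => he j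
  have hout := interactionPotential_nonneg n hB (hf N)
  have hQ' := (glimmPotential_mono n ha' ha'e N).trans (glimmPotential_add_le n hb he N)
  refine glimmFunctional_le hC (totalStrength_nonneg n hB) (totalStrength_nonneg n hE)
    (totalStrength_mono n ?_) hV
    (Δ := ∑ j ∈ Finset.range N, interactionPotential n (fastWaves a m j) (slowWaves a m j))
    ?_ ?_ ?_ (by linarith)
  · rw [← hsum]
    exact le_add_of_nonneg_right (hf N)
  · rw [totalStrength_sum, Finset.mul_sum]
    exact Finset.sum_le_sum fun j _ => hint j
  · linarith [glimmPotential_le_sq n ha N, glimmPotential_nonneg n hb N]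
  · rw [← totalStrength_add, ← Finset.sum_add_distrib]
    exact totalStrength_mono n (Finset.sum_le_sum fun j _ => ha'e j)

end GlimmFunctional

/-! ### The Glimm scheme -/

lemma exists_forall_le_iff_lt {n : ℕ} {p : ℕ → ℝ} (hp : MonotoneOn p (Iio n)) (θ : ℝ) :
    ∃ m ≤ n, ∀ i < n, p i ≤ θ ↔ i < m := by
  classical
  have hex : ∃ m, m < n → θ < p m := ⟨n, fun h => absurd h (lt_irrefl n)⟩
  refine ⟨Nat.find hex, Nat.find_min' hex fun h => absurd h (lt_irrefl n), fun i hi => ⟨?_, ?_⟩⟩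
  · intro hpi
    by_contra! hmi
    have hmn := hmi.trans_lt hi
    exact (Nat.find_spec hex hmn).not_ge ((hp hmn hi hmi).trans hpi)
  · intro him
    by_contra! hpi
    exact Nat.find_min hex him fun _ => hpi

lemma integral_indicator_Ici_unitInterval {p : ℝ} (hp : p ∈ Icc (0 : ℝ) 1) :
    ∫ θ in Icc (0 : ℝ) 1, (Ici p).indicator (fun _ => (1 : ℝ)) θ = 1 - p := by
  have hinter : Icc 0 1 ∩ Ici p = Icc p 1 := by
    rw [← Ici_inter_Iic, inter_right_comm, Ici_inter_Ici, sup_eq_right.2 hp.1, Ici_inter_Iic]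
  rw [setIntegral_indicator measurableSet_Ici, setIntegral_const, smul_eq_mul, mul_one, hinter,
    Real.volume_real_Icc_of_le hp.2]

lemma exists_sum_indicator_Ici_sub_mul_nonpos {ι : Type*} (s : Finset ι) {p : ι → ℝ}
    (hp : ∀ i ∈ s, p i ∈ Icc (0 : ℝ) 1) (b : ι → ℝ) :
    ∃ θ, ∑ i ∈ s, ((Ici (p i)).indicator (fun _ => (1 : ℝ)) θ - (1 - p i)) * b i ≤ 0 := by
  set μ : Measure ℝ := volume.restrict (Icc 0 1)
  have : IsProbabilityMeasure μ := ⟨by simp [μ]⟩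
  have hind : ∀ i, Integrable ((Ici (p i)).indicator fun _ => (1 : ℝ)) μ := fun i =>
    (integrable_const _).indicator measurableSet_Ici
  have hint : ∀ i ∈ s, Integrable
      (fun θ => ((Ici (p i)).indicator (fun _ => (1 : ℝ)) θ - (1 - p i)) * b i) μ := fun i _ =>
    ((hind i).sub (integrable_const _)).mul_const _
  obtain ⟨θ, hθ⟩ := exists_le_integral (integrable_finsetSum s hint)
  refine ⟨θ, hθ.trans_eq ?_⟩
  rw [integral_finsetSum s hint]
  refine Finset.sum_eq_zero fun i hi => ?_
  rw [integral_mul_const, integral_sub (hind i) (integrable_const _),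
    integral_indicator_Ici_unitInterval (hp i hi), integral_const, probReal_univ, one_smul,
    sub_self, zero_mul]

lemma abs_slowWaves (a : ℕ → ℕ → ℝ) (m : ℕ → ℕ) (j : ℕ) :
    |slowWaves a m j| = slowWaves |a| m j := by
  ext i
  by_cases hi : i < m j <;> simp [slowWaves, hi]

lemma abs_fastWaves (a : ℕ → ℕ → ℝ) (m : ℕ → ℕ) : ∀ j, |fastWaves a m j| = fastWaves |a| m j
  | 0 => abs_zero
  | j + 1 => by
    ext i
    by_cases hi : m j ≤ i <;> simp [fastWaves, hi]

/-- The residual of the upwind scheme `U' (j + 1) = U (j + 1) - (g (U (j + 1)) - g (U j))` for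
`u_t + g(u)_x = 0`, with equal mesh sizes in space and time. -/
def schemeError {E : Type*} [AddCommGroup E] (g : E → E) (U U' : ℕ → E) (j : ℕ) : E :=
  U' (j + 1) - U (j + 1) + (g (U (j + 1)) - g (U j))

/-- Estimates on the time levels `U 0, U 1, …` of Glimm's scheme, uniform in the initial datum. -/
structure IsGlimmSequence {E : Type*} [NormedAddCommGroup E] (g : E → E) (C : ℝ)
    (U : ℕ → ℕ → E) : Prop where
  zero : ∀ k, U k 0 = 0
  sum_norm_space_le : ∀ k N, ∑ j ∈ Finset.range N, ‖U k (j + 1) - U k j‖ ≤ C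
  sum_norm_time_le : ∀ k N, ∑ j ∈ Finset.range N, ‖U (k + 1) j - U k j‖ ≤ C
  sum_norm_schemeError_le : ∀ k N, ∑ j ∈ Finset.range N, ‖schemeError g (U k) (U (k + 1)) j‖ ≤ C

namespace RiemannSolver

variable {E : Type*} [NormedAddCommGroup E] [NormedSpace ℝ E] {g : E → E} {n : ℕ}
  (R : RiemannSolver g n)

/-- The strengths of the waves solving the Riemann problem with data `U j` and `U (j + 1)`. -/
def waves (U : ℕ → E) (j : ℕ) : ℕ → ℝ := (R.exists_waveChain_eq (U j) (U (j + 1))).choose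

/-- The state between the waves `i - 1` and `i` of the Riemann problem with data `U j` and
`U (j + 1)`. -/
def state (U : ℕ → E) (j i : ℕ) : E := waveChain R.curve i (R.waves U j) (U j)

/-- The speed of the `i`-th wave of the Riemann problem with data `U j` and `U (j + 1)`. -/
def waveSpeed (U : ℕ → E) (j i : ℕ) : ℝ := R.speed i (R.waves U j i) (R.state U j i)

/-- The value on the ray `x = θ * t` of the solution of the Riemann problem with data `U j` and
`U (j + 1)`. -/
def sample (θ : ℝ) (U : ℕ → E) (j : ℕ) : E :=
  U j + ∑ i ∈ Finset.range n, (Ici (R.waveSpeed U j i)).indicator (fun _ => (1 : ℝ)) θ •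
    (R.state U j (i + 1) - R.state U j i)

/-- A step of Glimm's scheme. As all speeds are in `(0, 1)`, a mesh with equal steps in space and
time is admissible, and cell `j + 1` only sees the Riemann problem at its left end. -/
def glimmStep (θ : ℝ) (U : ℕ → E) : ℕ → E
  | 0 => 0
  | j + 1 => R.sample θ U j

/-- The states `U` vanish in cell `0` and their Glimm functional is at most `η`. -/
structure IsSmall (η : ℝ) (U : ℕ → E) : Prop where
  zero : U 0 = 0
  functional_le : ∀ N, totalStrength n (∑ j ∈ Finset.range N, |R.waves U| j)
    + 2 * R.bound ^ (n + 2) * glimmPotential n |R.waves U| N ≤ η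

variable {R} {η θ : ℝ} {U : ℕ → E}

lemma state_last (U : ℕ → E) (j : ℕ) : R.state U j n = U (j + 1) :=
  (R.exists_waveChain_eq (U j) (U (j + 1))).choose_spec

lemma sum_state_sub_state (U : ℕ → E) (j m : ℕ) :
    ∑ i ∈ Finset.range m, (R.state U j (i + 1) - R.state U j i) = R.state U j m - U j :=
  Finset.sum_range_sub _ _

lemma waveSpeed_mem (U : ℕ → E) (j : ℕ) {i : ℕ} (hi : i < n) :
    R.waveSpeed U j i ∈ Ioo (0 : ℝ) 1 := R.speed_mem _ _ _ hi

lemma exists_sample_eq_state (θ : ℝ) (U : ℕ → E) (j : ℕ) :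
    ∃ m ≤ n, R.sample θ U j = R.state U j m := by
  have hmono : StrictMonoOn (R.waveSpeed U j) (Iio n) := fun i _ k hk hik =>
    R.speed_lt_speed i k _ _ _ _ hik hk
  obtain ⟨m, hm, hiff⟩ := exists_forall_le_iff_lt hmono.monotoneOn θ
  refine ⟨m, hm, ?_⟩
  rw [sample, ← add_sub_cancel (U j) (R.state U j m), ← sum_state_sub_state, add_right_inj,
    ← Finset.sum_subset (Finset.range_mono hm)]
  · refine Finset.sum_congr rfl fun i hi => ?_
    have hi := Finset.mem_range.1 hi
    rw [indicator_of_mem (mem_Ici.2 ((hiff i (hi.trans_le hm)).2 hi)), one_smul]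
  · intro i hin him
    rw [Finset.mem_range] at hin him
    rw [indicator_of_notMem (mt mem_Ici.1 (mt (hiff i hin).1 him)), zero_smul]

lemma norm_state_sub_le (U : ℕ → E) (j : ℕ) {m : ℕ} (hm : m ≤ n) :
    ‖R.state U j m - U j‖ ≤ R.bound * totalStrength n (|R.waves U| j) := by
  have := R.bound_pos
  refine (R.norm_waveChain_sub_le m _ _).trans ?_
  gcongr
  exact Finset.sum_le_sum_of_subset_of_nonneg (Finset.range_mono hm) fun i _ _ => abs_nonneg _

lemma norm_succ_sub_le (U : ℕ → E) (j : ℕ) :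
    ‖U (j + 1) - U j‖ ≤ R.bound * totalStrength n (|R.waves U| j) := by
  rw [← R.state_last U]
  exact norm_state_sub_le U j le_rfl

lemma totalStrength_abs_waves_le (U : ℕ → E) (j : ℕ) :
    totalStrength n (|R.waves U| j) ≤ R.bound * ‖U (j + 1) - U j‖ := by
  have h := R.sum_abs_sub_le (U j) (R.waves U j) 0
  rw [R.waveChain_zero] at h
  simp only [Pi.zero_apply, sub_zero] at h
  rw [← R.state_last U j]
  exact h

lemma norm_glimmStep_succ_sub_le (θ : ℝ) (U : ℕ → E) (j : ℕ) :
    ‖R.glimmStep θ U (j + 1) - U (j + 1)‖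
      ≤ 2 * R.bound * totalStrength n (|R.waves U| j) := by
  obtain ⟨m, hm, hsample⟩ := R.exists_sample_eq_state θ U j
  rw [glimmStep, hsample, ← sub_sub_sub_cancel_right _ _ (U j), two_mul, add_mul]
  exact (norm_sub_le _ _).trans (add_le_add (norm_state_sub_le U j hm) (norm_succ_sub_le U j))

namespace IsSmall

lemma totalStrength_sum_le (h : R.IsSmall η U) (N : ℕ) :
    totalStrength n (∑ j ∈ Finset.range N, |R.waves U| j) ≤ η := by
  have := R.bound_pos
  have := glimmPotential_nonneg n (abs_nonneg (R.waves U)) N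
  refine le_trans (le_add_of_nonneg_right ?_) (h.functional_le N)
  positivity

lemma sum_totalStrength_le (h : R.IsSmall η U) (N : ℕ) :
    ∑ j ∈ Finset.range N, totalStrength n (|R.waves U| j) ≤ η :=
  (totalStrength_sum n _ N).symm.trans_le (h.totalStrength_sum_le N)

lemma nonneg (h : R.IsSmall η U) : 0 ≤ η := by
  simpa using h.sum_totalStrength_le 0

lemma abs_waves_le (h : R.IsSmall η U) (j : ℕ) {i : ℕ} (hi : i < n) : |R.waves U j i| ≤ η := by
  have hnonneg : ∀ k, 0 ≤ totalStrength n (|R.waves U| k) := fun k =>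
    totalStrength_nonneg n (abs_nonneg (R.waves U k))
  calc |R.waves U j i| ≤ totalStrength n (|R.waves U| j) :=
        Finset.single_le_sum (f := |R.waves U j|) (fun k _ => abs_nonneg _) (Finset.mem_range.2 hi)
    _ ≤ ∑ k ∈ Finset.range (j + 1), totalStrength n (|R.waves U| k) :=
        Finset.single_le_sum (f := fun k => totalStrength n (|R.waves U| k))
          (fun k _ => hnonneg k) (Finset.self_mem_range_succ j)
    _ ≤ η := h.sum_totalStrength_le _

lemma norm_state_le (h : R.IsSmall η U) (j : ℕ) {m : ℕ} (hm : m ≤ n) :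
    ‖R.state U j m‖ ≤ R.bound * η := by
  have := R.bound_pos
  calc ‖R.state U j m‖ = ‖(U j - U 0) + (R.state U j m - U j)‖ := by
        rw [h.zero, sub_zero, add_sub_cancel]
    _ ≤ ∑ k ∈ Finset.range j, ‖U (k + 1) - U k‖
          + R.bound * totalStrength n (|R.waves U| j) := by
        rw [← Finset.sum_range_sub]
        exact (norm_add_le _ _).trans (add_le_add (norm_sum_le _ _) (norm_state_sub_le U j hm))
    _ ≤ ∑ k ∈ Finset.range (j + 1), R.bound * totalStrength n (|R.waves U| k) := by
        rw [Finset.sum_range_succ]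
        gcongr
        exact norm_succ_sub_le U _
    _ ≤ R.bound * η := by
        rw [← Finset.mul_sum]
        gcongr
        exact h.sum_totalStrength_le _

lemma glimmStep (h : R.IsSmall η U) (θ : ℝ) (hη : R.bound ^ (n + 2) * η ≤ 1 / 4)
    (hηr : η ≤ R.radius) : R.IsSmall η (R.glimmStep θ U) := by
  refine ⟨rfl, fun N => le_trans ?_ (h.functional_le N)⟩
  have := R.bound_pos
  choose m hmn hm using fun j => R.exists_sample_eq_state θ U j
  have hin : ∀ j, waveChain R.curve n (fastWaves (R.waves U) m j) (R.glimmStep θ U j) = U j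
    | 0 => by rw [fastWaves, R.waveChain_zero, RiemannSolver.glimmStep, h.zero]
    | j + 1 => by
      rw [RiemannSolver.glimmStep, hm, ← R.state_last U j]
      exact R.waveChain_indicator_Ici (hmn j) _ _
  have hout : ∀ j, waveChain R.curve n (slowWaves (R.waves U) m j) (U j) =
      R.glimmStep θ U (j + 1) := fun j =>
    (R.waveChain_indicator_Iio (hmn j) _ _).trans (hm j).symm
  have hslow : ∀ j, ∀ i < n, |slowWaves (R.waves U) m j i| ≤ R.radius := fun j i hi =>
    (norm_indicator_le_norm_self (R.waves U j) i).trans ((h.abs_waves_le j hi).trans hηr)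
  have hfast : ∀ j, ∀ i < n, |fastWaves (R.waves U) m j i| ≤ R.radius
    | 0, i, _ => by simpa [fastWaves] using R.radius_pos.le
    | j + 1, i, hi =>
      (norm_indicator_le_norm_self (R.waves U j) i).trans ((h.abs_waves_le j hi).trans hηr)
  have hint := fun j => R.sum_abs_sub_add_le (hfast j) (hslow j) (u := R.glimmStep θ U j)
    (a := R.waves (R.glimmStep θ U) j) (by rw [hin, hout]; exact R.state_last _ j)
  simp only [abs_slowWaves, abs_fastWaves] at hint
  refine totalStrength_add_glimmPotential_le (m := m) (by positivity) (abs_nonneg _) (abs_nonneg _)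
    (abs_nonneg (R.waves (R.glimmStep θ U) - (fastWaves (R.waves U) m + slowWaves (R.waves U) m)))
    (fun j i => ?_) hint N ((mul_le_mul_of_nonneg_left (h.totalStrength_sum_le N) ?_).trans hη)
  · simp only [Pi.add_apply, ← abs_slowWaves, ← abs_fastWaves, Pi.abs_apply, Pi.sub_apply]
    have htri := abs_add_three (fastWaves (R.waves U) m j i) (slowWaves (R.waves U) m j i)
      (R.waves (R.glimmStep θ U) j i
        - (fastWaves (R.waves U) m j i + slowWaves (R.waves U) m j i))
    rwa [add_sub_cancel] at htri
  · positivity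

lemma sub_eq_sum_waveSpeed (h : R.IsSmall η U) (hη : R.bound * η ≤ R.radius) (j : ℕ) :
    g (U (j + 1)) - g (U j) =
      ∑ i ∈ Finset.range n, R.waveSpeed U j i • (R.state U j (i + 1) - R.state U j i) := by
  have hηr : η ≤ R.radius := (le_mul_of_one_le_left h.nonneg R.one_le_bound).trans hη
  calc g (U (j + 1)) - g (U j) = g (R.state U j n) - g (R.state U j 0) := by
        rw [R.state_last]; rfl
    _ = ∑ i ∈ Finset.range n, (g (R.state U j (i + 1)) - g (R.state U j i)) :=
        (Finset.sum_range_sub (fun i => g (R.state U j i)) n).symm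
    _ = _ := Finset.sum_congr rfl fun i hi => by
        have hi := Finset.mem_range.1 hi
        exact R.rankineHugoniot i _ _ ((h.abs_waves_le j hi).trans hηr)
          ((h.norm_state_le j hi.le).trans hη)

lemma schemeError_glimmStep (h : R.IsSmall η U) (hη : R.bound * η ≤ R.radius) (θ : ℝ) (j : ℕ) :
    schemeError g U (R.glimmStep θ U) j = ∑ i ∈ Finset.range n,
      ((Ici (R.waveSpeed U j i)).indicator (fun _ => (1 : ℝ)) θ - (1 - R.waveSpeed U j i)) •
        (R.state U j (i + 1) - R.state U j i) := by
  have hjump : U (j + 1) = U j + ∑ i ∈ Finset.range n, (R.state U j (i + 1) - R.state U j i) := by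
    rw [sum_state_sub_state, state_last, add_sub_cancel]
  rw [schemeError, h.sub_eq_sum_waveSpeed hη, hjump]
  simp only [RiemannSolver.glimmStep, sample, sub_smul, one_smul, Finset.sum_sub_distrib]
  abel

lemma norm_schemeError_le (h : R.IsSmall η U) (hη : R.bound * η ≤ R.radius) (θ : ℝ) (j : ℕ) :
    ‖schemeError g U (R.glimmStep θ U) j‖ ≤ R.bound * totalStrength n (|R.waves U| j) := by
  rw [h.schemeError_glimmStep hη, totalStrength, Finset.mul_sum]
  refine norm_sum_le_of_le _ fun i hi => ?_
  have hp := R.waveSpeed_mem U j (Finset.mem_range.1 hi)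
  have hcoef : |(Ici (R.waveSpeed U j i)).indicator (fun _ => (1 : ℝ)) θ
      - (1 - R.waveSpeed U j i)| ≤ 1 := by
    have h0 := indicator_nonneg (s := Ici (R.waveSpeed U j i)) (fun _ _ => zero_le_one' ℝ) θ
    have h1 := indicator_le_self' (s := Ici (R.waveSpeed U j i)) (fun _ _ => zero_le_one' ℝ) θ
    exact abs_le.2 ⟨by linarith [hp.1], by linarith [hp.2]⟩
  rw [norm_smul]
  exact (mul_le_of_le_one_left (norm_nonneg _) hcoef).trans (R.norm_curve_sub_le _ _ _)

/-- Sampling at a uniformly distributed `θ` makes the expectation of `schemeError` vanish, so the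
sum of the errors can be made to point away from a given vector. -/
lemma exists_inner_schemeError_nonpos {H : Type*} [NormedAddCommGroup H] [InnerProductSpace ℝ H]
    (h : R.IsSmall η U) (hη : R.bound * η ≤ R.radius) (N : ℕ) (A : ℕ → E →L[ℝ] H) (z : H) :
    ∃ θ, inner ℝ z (∑ j ∈ Finset.range N, A j (schemeError g U (R.glimmStep θ U) j)) ≤ 0 := by
  obtain ⟨θ, hθ⟩ := exists_sum_indicator_Ici_sub_mul_nonpos
    (Finset.range N ×ˢ Finset.range n) (p := fun q => R.waveSpeed U q.1 q.2)
    (fun q hq => Ioo_subset_Icc_self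
      (R.waveSpeed_mem U q.1 (Finset.mem_range.1 (Finset.mem_product.1 hq).2)))
    fun q => inner ℝ z (A q.1 (R.state U q.1 (q.2 + 1) - R.state U q.1 q.2))
  refine ⟨θ, hθ.trans_eq' ?_⟩
  rw [Finset.sum_product, inner_sum]
  simp only [h.schemeError_glimmStep hη, map_sum, map_smul, inner_sum, inner_smul_right]

lemma sum_norm_glimmStep_sub_le (h : R.IsSmall η U) (θ : ℝ) (N : ℕ) :
    ∑ j ∈ Finset.range N, ‖R.glimmStep θ U j - U j‖ ≤ 2 * R.bound * η := by
  have := R.bound_pos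
  calc ∑ j ∈ Finset.range N, ‖R.glimmStep θ U j - U j‖
      ≤ ∑ j ∈ Finset.range (N + 1), ‖R.glimmStep θ U j - U j‖ :=
        Finset.sum_le_sum_of_subset_of_nonneg (Finset.range_mono N.le_succ)
          fun _ _ _ => norm_nonneg _
    _ ≤ ∑ j ∈ Finset.range N, 2 * R.bound * totalStrength n (|R.waves U| j) := by
        rw [Finset.sum_range_succ', h.zero, RiemannSolver.glimmStep, sub_zero, norm_zero, add_zero]
        exact Finset.sum_le_sum fun j _ => norm_glimmStep_succ_sub_le θ U j
    _ ≤ 2 * R.bound * η := by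
        rw [← Finset.mul_sum]
        gcongr
        exact h.sum_totalStrength_le N

lemma sum_norm_schemeError_le (h : R.IsSmall η U) (hη : R.bound * η ≤ R.radius) (θ : ℝ) (N : ℕ) :
    ∑ j ∈ Finset.range N, ‖schemeError g U (R.glimmStep θ U) j‖ ≤ R.bound * η := by
  have := R.bound_pos
  calc _ ≤ ∑ j ∈ Finset.range N, R.bound * totalStrength n (|R.waves U| j) :=
        Finset.sum_le_sum fun j _ => h.norm_schemeError_le hη θ j
    _ ≤ R.bound * η := by
        rw [← Finset.mul_sum]
        gcongr
        exact h.sum_totalStrength_le N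

lemma sum_norm_succ_sub_le (h : R.IsSmall η U) (N : ℕ) :
    ∑ j ∈ Finset.range N, ‖U (j + 1) - U j‖ ≤ R.bound * η := by
  have := R.bound_pos
  calc _ ≤ ∑ j ∈ Finset.range N, R.bound * totalStrength n (|R.waves U| j) :=
        Finset.sum_le_sum fun j _ => norm_succ_sub_le U j
    _ ≤ R.bound * η := by
        rw [← Finset.mul_sum]
        gcongr
        exact h.sum_totalStrength_le N

lemma exists_glimmStep {H : Type*} [NormedAddCommGroup H] [InnerProductSpace ℝ H]
    (h : R.IsSmall η U) (hη : R.bound ^ (n + 2) * η ≤ 1 / 4) (hηr : R.bound * η ≤ R.radius)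
    {κ : ℝ} {A : ℕ → E →L[ℝ] H} (hA : ∀ j, ‖A j‖ ≤ κ) (N : ℕ) (z : H) :
    ∃ θ, R.IsSmall η (R.glimmStep θ U) ∧
      ‖z + ∑ j ∈ Finset.range N, A j (schemeError g U (R.glimmStep θ U) j)‖ ^ 2
        ≤ ‖z‖ ^ 2 + (R.bound * η * κ) ^ 2 := by
  obtain ⟨θ, hθ⟩ := h.exists_inner_schemeError_nonpos hηr N A z
  refine ⟨θ, h.glimmStep θ hη ((le_mul_of_one_le_left h.nonneg R.one_le_bound).trans hηr), ?_⟩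
  have hκ : 0 ≤ κ := (norm_nonneg _).trans (hA 0)
  have hnorm : ‖∑ j ∈ Finset.range N, A j (schemeError g U (R.glimmStep θ U) j)‖
      ≤ R.bound * η * κ :=
    calc _ ≤ ∑ j ∈ Finset.range N, ‖schemeError g U (R.glimmStep θ U) j‖ * κ :=
          norm_sum_le_of_le _ fun j _ => by
            rw [mul_comm]
            exact (A j).le_of_opNorm_le (hA j) _
      _ ≤ R.bound * η * κ := by
          rw [← Finset.sum_mul]
          gcongr
          exact h.sum_norm_schemeError_le hηr θ N
  rw [norm_add_sq_real]
  have := pow_le_pow_left₀ (norm_nonneg _) hnorm 2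
  linarith

lemma exists_seq {H : Type*} [NormedAddCommGroup H] [InnerProductSpace ℝ H]
    (h : R.IsSmall η U) (hη : R.bound ^ (n + 2) * η ≤ 1 / 4) (hηr : R.bound * η ≤ R.radius)
    {κ : ℝ} {A : ℕ → ℕ → E →L[ℝ] H} (hA : ∀ k j, ‖A k j‖ ≤ κ) (N : ℕ) :
    ∃ V : ℕ → ℕ → E, V 0 = U ∧
      (∀ k, R.IsSmall η (V k) ∧ ∃ θ, V (k + 1) = R.glimmStep θ (V k)) ∧
      ∀ K, ‖∑ k ∈ Finset.range K, ∑ j ∈ Finset.range N,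
        A k j (schemeError g (V k) (V (k + 1)) j)‖ ^ 2 ≤ K * (R.bound * η * κ) ^ 2 := by
  have hnext : ∀ (k : ℕ) (V : ℕ → E) (z : H), ∃ θ, R.IsSmall η V → R.IsSmall η (R.glimmStep θ V) ∧
      ‖z + ∑ j ∈ Finset.range N, A k j (schemeError g V (R.glimmStep θ V) j)‖ ^ 2
        ≤ ‖z‖ ^ 2 + (R.bound * η * κ) ^ 2 := fun k V z => by
    by_cases hV : R.IsSmall η V
    · exact (hV.exists_glimmStep hη hηr (hA k) N z).imp fun θ hθ _ => hθ
    · exact ⟨0, fun h => absurd h hV⟩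
  choose θ hθ using hnext
  let p : ℕ → (ℕ → E) × H := Nat.rec (U, 0) fun k q => (R.glimmStep (θ k q.1 q.2) q.1,
    q.2 + ∑ j ∈ Finset.range N, A k j (schemeError g q.1 (R.glimmStep (θ k q.1 q.2) q.1) j))
  have hsmall : ∀ k, R.IsSmall η (p k).1 := fun k => by
    induction k with
    | zero => exact h
    | succ k ih => exact (hθ k _ _ ih).1
  have hsum : ∀ K, ∑ k ∈ Finset.range K, ∑ j ∈ Finset.range N,
      A k j (schemeError g (p k).1 (p (k + 1)).1 j) = (p K).2 := fun K => by
    induction K with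
    | zero => rfl
    | succ K ih => rw [Finset.sum_range_succ, ih]
  refine ⟨fun k => (p k).1, rfl, fun k => ⟨hsmall k, _, rfl⟩, fun K => ?_⟩
  rw [hsum]
  induction K with
  | zero => simp [p]
  | succ K ih =>
    refine (hθ K _ _ (hsmall K)).2.trans ((add_le_add_left ih _).trans_eq ?_)
    push_cast
    ring

end IsSmall

lemma isSmall_of_sum_norm_sub_le (hU : U 0 = 0) (hη : R.bound ^ (n + 2) * η ≤ 1 / 4)
    (hTV : ∀ N, ∑ j ∈ Finset.range N, ‖U (j + 1) - U j‖ ≤ η / (2 * R.bound)) :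
    R.IsSmall η U := by
  have hC := R.bound_pos
  refine ⟨hU, fun N => ?_⟩
  have hV : totalStrength n (∑ j ∈ Finset.range N, |R.waves U| j) ≤ η / 2 := by
    rw [totalStrength_sum]
    calc _ ≤ ∑ j ∈ Finset.range N, R.bound * ‖U (j + 1) - U j‖ :=
          Finset.sum_le_sum fun j _ => totalStrength_abs_waves_le U j
      _ ≤ R.bound * (η / (2 * R.bound)) := by
          rw [← Finset.mul_sum]
          gcongr
          exact hTV N
      _ = η / 2 := by field_simp
  have hV0 := totalStrength_nonneg n
    (Finset.sum_nonneg fun j (_ : j ∈ Finset.range N) => abs_nonneg (R.waves U j))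
  have hη0 : 0 ≤ η / 2 := hV0.trans hV
  have hQ : 2 * R.bound ^ (n + 2) * glimmPotential n |R.waves U| N ≤ η / 2 :=
    calc _ ≤ 2 * R.bound ^ (n + 2) * (η / 2) ^ 2 := by
          gcongr
          exact (glimmPotential_le_sq n (abs_nonneg _) N).trans (pow_le_pow_left₀ hV0 hV 2)
      _ = R.bound ^ (n + 2) * η * (η / 2) := by ring
      _ ≤ 1 * (η / 2) := by gcongr; linarith
      _ = η / 2 := one_mul _
  linarith

lemma exists_pos_bound_mul_le (R : RiemannSolver g n) :
    ∃ η > 0, R.bound ^ (n + 2) * η ≤ 1 / 4 ∧ R.bound * η ≤ R.radius := by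
  have hC := R.bound_pos
  have hr := R.radius_pos
  refine ⟨min (1 / 4 / R.bound ^ (n + 2)) (R.radius / R.bound), by positivity, ?_, ?_⟩
  · rw [← le_div_iff₀' (by positivity)]
    exact min_le_left _ _
  · rw [← le_div_iff₀' hC]
    exact min_le_right _ _

theorem exists_isGlimmSequence (R : RiemannSolver g n) : ∃ δ > 0, ∃ C > 0, ∀ U₀ : ℕ → E,
    U₀ 0 = 0 → (∀ N, ∑ j ∈ Finset.range N, ‖U₀ (j + 1) - U₀ j‖ ≤ δ) →
    ∀ {H : Type*} [NormedAddCommGroup H] [InnerProductSpace ℝ H] {κ : ℝ} (A : ℕ → ℕ → E →L[ℝ] H),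
      (∀ k j, ‖A k j‖ ≤ κ) → ∀ N, ∃ U : ℕ → ℕ → E, U 0 = U₀ ∧ IsGlimmSequence g C U ∧
        ∀ K, ‖∑ k ∈ Finset.range K, ∑ j ∈ Finset.range N,
          A k j (schemeError g (U k) (U (k + 1)) j)‖ ^ 2 ≤ K * (C * κ) ^ 2 := by
  have hC := R.bound_pos
  obtain ⟨η, hη0, hη, hηr⟩ := R.exists_pos_bound_mul_le
  refine ⟨η / (2 * R.bound), by positivity, 2 * R.bound * η, by positivity,
    fun U₀ hU₀ hTV H _ _ κ A hA N => ?_⟩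
  have hη2 : R.bound * η ≤ 2 * R.bound * η := by
    gcongr
    exact le_mul_of_one_le_left hC.le one_le_two
  obtain ⟨U, hU0, hU, hsum⟩ := (isSmall_of_sum_norm_sub_le hU₀ hη hTV).exists_seq hη hηr hA N
  refine ⟨U, hU0, ⟨fun k => (hU k).1.zero, fun k M => ((hU k).1.sum_norm_succ_sub_le M).trans hη2,
    fun k M => ?_, fun k M => ?_⟩, fun K => (hsum K).trans ?_⟩
  · obtain ⟨θ, hθ⟩ := (hU k).2
    exact hθ ▸ (hU k).1.sum_norm_glimmStep_sub_le θ M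
  · obtain ⟨θ, hθ⟩ := (hU k).2
    exact hθ ▸ ((hU k).1.sum_norm_schemeError_le hηr θ M).trans hη2
  · have : 0 ≤ κ := (norm_nonneg _).trans (hA 0 0)
    gcongr

end RiemannSolver

/-! ### Functions of bounded variation -/

variable {E : Type*} [NormedAddCommGroup E]

lemma norm_sub_le_toReal_eVariationOn_Iic_sub {v : ℝ → E} (hv : BoundedVariationOn v univ)
    {x y : ℝ} (hxy : x ≤ y) :
    ‖v y - v x‖ ≤ (eVariationOn v (Iic y)).toReal - (eVariationOn v (Iic x)).toReal := by
  have hsplit : eVariationOn v (Iic x) + edist (v y) (v x) ≤ eVariationOn v (Iic y) := by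
    calc eVariationOn v (Iic x) + edist (v y) (v x)
        ≤ eVariationOn v (Iic x) + eVariationOn v (Icc x y) := by
          gcongr
          exact eVariationOn.edist_le v ⟨hxy, le_rfl⟩ ⟨le_rfl, hxy⟩
      _ ≤ eVariationOn v (Iic x ∪ Icc x y) :=
          eVariationOn.add_le_union v fun a ha b hb => le_trans ha hb.1
      _ = eVariationOn v (Iic y) := by rw [Iic_union_Icc_eq_Iic hxy]
  have hfin := hv.mono (subset_univ (Iic y))
  have hreal := ENNReal.toReal_mono hfin hsplit
  rw [ENNReal.toReal_add (hv.mono (subset_univ _)) (edist_ne_top _ _), edist_dist,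
    ENNReal.toReal_ofReal dist_nonneg, dist_eq_norm] at hreal
  linarith

lemma monotone_toReal_eVariationOn_Iic {v : ℝ → E} (hv : BoundedVariationOn v univ) :
    Monotone fun x => (eVariationOn v (Iic x)).toReal := fun _ _ hxy =>
  ENNReal.toReal_mono (hv.mono (subset_univ _)) (eVariationOn.mono v (Iic_subset_Iic.2 hxy))

lemma countable_not_continuousAt_of_boundedVariationOn {v : ℝ → E}
    (hv : BoundedVariationOn v univ) : {x | ¬ ContinuousAt v x}.Countable := by
  refine (monotone_toReal_eVariationOn_Iic hv).countable_not_continuousAt.mono ?_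
  intro x hx hcont
  refine hx ?_
  rw [Metric.continuousAt_iff] at hcont ⊢
  intro ε hε
  obtain ⟨δ, hδ, hball⟩ := hcont ε hε
  refine ⟨δ, hδ, fun {y} hy => lt_of_le_of_lt ?_ (hball hy)⟩
  rw [dist_eq_norm, Real.dist_eq]
  rcases le_total x y with hxy | hyx
  · exact (norm_sub_le_toReal_eVariationOn_Iic_sub hv hxy).trans (le_abs_self _)
  · rw [norm_sub_rev, abs_sub_comm]
    exact (norm_sub_le_toReal_eVariationOn_Iic_sub hv hyx).trans (le_abs_self _)

lemma norm_le_eVariationOn_of_integrable {v : ℝ → E} (hi : Integrable v)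
    (hv : BoundedVariationOn v univ) (x : ℝ) : ‖v x‖ ≤ (eVariationOn v univ).toReal := by
  set V := (eVariationOn v univ).toReal
  by_contra! hlt
  have hlower : ∀ y, ‖v x‖ - V ≤ ‖v y‖ := fun y => by
    have hdist := hv.dist_le (mem_univ x) (mem_univ y)
    rw [dist_eq_norm] at hdist
    linarith [norm_sub_norm_le (v x) (v y)]
  have hconst : Integrable fun _ : ℝ => ‖v x‖ - V :=
    hi.norm.mono' aestronglyMeasurable_const <| .of_forall fun y => by
      rw [Real.norm_of_nonneg (by linarith)]
      exact hlower y
  rw [integrable_const_iff] at hconst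
  rcases hconst with hzero | hfinite
  · linarith
  · simpa using hfinite.measure_univ_lt_top

lemma integral_sub_comp_sub_le_of_monotone {W : ℝ → ℝ} {C : ℝ} (hW : Monotone W)
    (hW0 : ∀ x, 0 ≤ W x) (hWC : ∀ x, W x ≤ C) {d : ℝ} (hd : 0 ≤ d) (a b : ℝ) :
    ∫ x in a..b, (W x - W (x - d)) ≤ d * C := by
  have hint : ∀ a b, IntervalIntegrable W volume a b := fun _ _ => hW.intervalIntegrable
  have hshift : IntervalIntegrable (fun x => W (x - d)) volume a b :=
    Monotone.intervalIntegrable fun x y hxy => hW (by linarith)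
  rw [intervalIntegral.integral_sub (hint _ _) hshift,
    intervalIntegral.integral_comp_sub_right (fun x => W x),
    intervalIntegral.integral_interval_sub_interval_comm (hint _ _) (hint _ _) (hint _ _),
    intervalIntegral.integral_symm (a - d) a, intervalIntegral.integral_symm (b - d) b]
  have hleft : 0 ≤ ∫ x in (a - d)..a, W x :=
    intervalIntegral.integral_nonneg (by linarith) fun x _ => hW0 x
  have hright : ∫ x in (b - d)..b, W x ≤ ∫ _ in (b - d)..b, C :=
    intervalIntegral.integral_mono_on (by linarith) (hint _ _) (by simp) fun x _ => hWC x
  rw [intervalIntegral.integral_const, sub_sub_cancel, smul_eq_mul] at hright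
  linarith

lemma setLIntegral_enorm_sub_comp_le {v : ℝ → E} (hv : BoundedVariationOn v univ) {d : ℝ}
    (hd : 0 ≤ d) {p : ℝ → ℝ} (hp : ∀ x, p x ∈ Icc (x - d) x) {a b : ℝ} (hab : a ≤ b) :
    ∫⁻ x in Ioc a b, ‖v x - v (p x)‖ₑ ≤
      ENNReal.ofReal (d * (eVariationOn v univ).toReal) := by
  set W : ℝ → ℝ := fun x => (eVariationOn v (Iic x)).toReal
  have hW : Monotone W := monotone_toReal_eVariationOn_Iic hv
  have hint : IntervalIntegrable (fun x => W x - W (x - d)) volume a b :=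
    hW.intervalIntegrable.sub (Monotone.intervalIntegrable fun x y hxy => hW (by linarith))
  calc ∫⁻ x in Ioc a b, ‖v x - v (p x)‖ₑ
      ≤ ∫⁻ x in Ioc a b, ENNReal.ofReal (W x - W (x - d)) := by
        refine lintegral_mono fun x => ?_
        rw [← ofReal_norm]
        refine ENNReal.ofReal_le_ofReal
          ((norm_sub_le_toReal_eVariationOn_Iic_sub hv (hp x).2).trans ?_)
        exact sub_le_sub_left (hW (hp x).1) _
    _ = ENNReal.ofReal (∫ x in a..b, (W x - W (x - d))) := by
        rw [intervalIntegral.integral_of_le hab, ofReal_integral_eq_lintegral_ofReal hint.1]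
        exact .of_forall fun x => sub_nonneg.2 (hW (sub_le_self x hd))
    _ ≤ ENNReal.ofReal (d * (eVariationOn v univ).toReal) :=
        ENNReal.ofReal_le_ofReal <| integral_sub_comp_sub_le_of_monotone hW
          (fun _ => ENNReal.toReal_nonneg)
          (fun _ => ENNReal.toReal_mono hv (eVariationOn.mono v (subset_univ _))) hd a b

lemma eVariationOn_nat_le {a : ℕ → E} {C : ℝ}
    (ha : ∀ N, ∑ j ∈ Finset.range N, ‖a (j + 1) - a j‖ ≤ C) :
    eVariationOn a univ ≤ ENNReal.ofReal C := by
  set W : ℕ → ℝ := fun N => ∑ j ∈ Finset.range N, ‖a (j + 1) - a j‖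
  have hW : ∀ i j, i ≤ j → dist (a j) (a i) ≤ W j - W i := fun i j hij => by
    rw [dist_comm, ← Finset.sum_Ico_eq_sub _ hij]
    simpa only [dist_eq_norm, norm_sub_rev] using dist_le_Ico_sum_dist a hij
  refine iSup_le ?_
  rintro ⟨N, u, hu, -⟩
  calc ∑ i ∈ Finset.range N, edist (a (u (i + 1))) (a (u i))
      ≤ ∑ i ∈ Finset.range N, ENNReal.ofReal (W (u (i + 1)) - W (u i)) := by
        refine Finset.sum_le_sum fun i _ => ?_
        rw [edist_dist]
        exact ENNReal.ofReal_le_ofReal (hW _ _ (hu i.le_succ))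
    _ = ENNReal.ofReal (W (u N) - W (u 0)) := by
        rw [← ENNReal.ofReal_sum_of_nonneg fun i _ =>
          dist_nonneg.trans (hW _ _ (hu i.le_succ)), Finset.sum_range_sub (fun i => W (u i))]
    _ ≤ ENNReal.ofReal C :=
        ENNReal.ofReal_le_ofReal ((sub_le_self _ (by positivity)).trans (ha _))

/-! ### Compactness -/

lemma exists_seq_measurable_dense {X : Type*} [MetricSpace X] [MeasurableSpace X]
    [BorelSpace X] {K : Set X} (hK : IsCompact K) :
    ∃ χ : ℕ → X → ℝ, (∀ m, Measurable (χ m)) ∧ (∀ m p, |χ m p| ≤ 1) ∧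
      (∀ m, ∀ p ∉ K, χ m p = 0) ∧ ∀ φ : X → ℝ, Continuous φ → (∀ p, |φ p| ≤ 1) →
        (∀ p ∉ K, φ p = 0) → ∀ ε > 0, ∃ m, ∀ p, |φ p - χ m p| ≤ ε := by
  have : CompactSpace K := isCompact_iff_compactSpace.1 hK
  have : Nonempty (Metric.closedBall (0 : C(K, ℝ)) 1) :=
    ⟨0, Metric.mem_closedBall_self zero_le_one⟩
  set ψ := TopologicalSpace.denseSeq (Metric.closedBall (0 : C(K, ℝ)) 1)
  let χ : ℕ → X → ℝ := fun m => Function.extend (↑) (ψ m).1 0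
  have hval : ∀ m (q : K), χ m q = (ψ m).1 q := fun m q =>
    Subtype.val_injective.extend_apply _ _ q
  have hzero : ∀ m, ∀ p ∉ K, χ m p = 0 := fun m p hp =>
    Function.extend_apply' _ _ _ fun ⟨q, hq⟩ => hp (hq ▸ q.2)
  refine ⟨χ, fun m => ?_, fun m p => ?_, hzero,
    fun φ hφ hφ1 hφK ε hε => ?_⟩
  · exact (MeasurableEmbedding.subtype_coe hK.measurableSet).measurable_extend
      (ψ m).1.continuous.measurable measurable_zero
  · by_cases hp : p ∈ K
    · rw [hval m ⟨p, hp⟩]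
      exact ((ψ m).1.norm_coe_le_norm ⟨p, hp⟩).trans (mem_closedBall_zero_iff.1 (ψ m).2)
    · rw [hzero m p hp, abs_zero]
      exact zero_le_one
  · have hmem : (⟨fun q => φ q, by fun_prop⟩ : C(K, ℝ)) ∈ Metric.closedBall 0 1 :=
      mem_closedBall_zero_iff.2 ((ContinuousMap.norm_le _ zero_le_one).2 fun q => hφ1 q)
    obtain ⟨m, hm⟩ := (TopologicalSpace.denseRange_denseSeq _).exists_dist_lt
      (⟨_, hmem⟩ : Metric.closedBall (0 : C(K, ℝ)) 1) hε
    refine ⟨m, fun p => ?_⟩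
    by_cases hp : p ∈ K
    · rw [hval m ⟨p, hp⟩]
      exact (ContinuousMap.dist_apply_le_dist ⟨p, hp⟩).trans hm.le
    · rw [hφK p hp, hzero m p hp, sub_zero, abs_zero]
      exact hε.le

lemma exists_seq_test_functions {X : Type*} [NormedAddCommGroup X] [ProperSpace X]
    [MeasurableSpace X] [BorelSpace X] :
    ∃ χ : ℕ → X → ℝ, (∀ m, Measurable (χ m)) ∧ (∀ m p, |χ m p| ≤ 1) ∧
      ∀ φ : X → ℝ, Continuous φ → HasCompactSupport φ → (∀ p, |φ p| ≤ 1) →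
        ∃ T : ℕ, (∀ p ∉ Metric.closedBall 0 T, φ p = 0) ∧
          ∀ ε > 0, ∃ m, (∀ p, |φ p - χ m p| ≤ ε) ∧ ∀ p ∉ Metric.closedBall 0 T, χ m p = 0 := by
  choose χ hmeas hle hzero hdense using fun T : ℕ =>
    exists_seq_measurable_dense (isCompact_closedBall (0 : X) T)
  refine ⟨fun i => χ i.unpair.1 i.unpair.2, fun i => hmeas _ _, fun i => hle _ _,
    fun φ hφ hsupp hφ1 => ?_⟩
  obtain ⟨T₀, hT₀⟩ := hsupp.isCompact.isBounded.subset_closedBall 0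
  obtain ⟨T, hT⟩ := exists_nat_ge T₀
  have hφT : ∀ p ∉ Metric.closedBall 0 T, φ p = 0 := fun p hp =>
    image_eq_zero_of_notMem_tsupport fun hmem =>
      hp (Metric.closedBall_subset_closedBall hT (hT₀ hmem))
  refine ⟨T, hφT, fun ε hε => ?_⟩
  obtain ⟨m, hm⟩ := hdense T φ hφ hφ1 hφT ε hε
  refine ⟨Nat.pair T m, ?_, ?_⟩ <;> simp only [Nat.unpair_pair]
  exacts [hm, hzero T m]

/-- The point of the grid `n⁻¹ℤ` immediately to the left of `x`. -/
def gridFloor (n : ℕ) (x : ℝ) : ℝ := ⌊x * n⌋ / n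

lemma gridFloor_mem_Icc {n : ℕ} (hn : 0 < n) (x : ℝ) :
    gridFloor n x ∈ Icc (x - 1 / n) x := by
  have hn' : (0 : ℝ) < n := Nat.cast_pos.2 hn
  constructor
  · rw [gridFloor, sub_le_iff_le_add, ← add_div, le_div_iff₀ hn']
    exact (Int.lt_floor_add_one (x * n)).le
  · rw [gridFloor, div_le_iff₀ hn']
    exact Int.floor_le _

lemma measurable_gridFloor (n : ℕ) : Measurable (gridFloor n) :=
  (measurable_from_top.comp (Int.measurable_floor.comp (measurable_id.mul_const _))).div_const _

lemma eventually_forall_gridFloor {ι : Type*} {l : Filter ι} {P : ι → ℝ → Prop}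
    (hP : ∀ q : ℚ, ∀ᶠ i in l, P i q) (n X : ℕ) :
    ∀ᶠ i in l, ∀ x : ℝ, |x| ≤ X → P i (gridFloor n x) := by
  have hgrid : ∀ᶠ i in l, ∀ k : ℤ, k ∈ Icc (-(X * n : ℤ)) (X * n : ℤ) → P i ((k / n : ℚ) : ℝ) :=
    (eventually_all_finite (finite_Icc _ _)).2 fun k _ => hP _
  filter_upwards [hgrid] with i hi x hx
  have hmem : ⌊x * n⌋ ∈ Icc (-(X * n : ℤ)) (X * n : ℤ) := by
    have hn : (0 : ℝ) ≤ n := Nat.cast_nonneg n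
    constructor
    · rw [Int.le_floor]
      push_cast
      nlinarith [neg_le_of_abs_le hx]
    · rw [← Int.floor_intCast (R := ℝ) (X * n)]
      push_cast
      exact Int.floor_mono (mul_le_mul_of_nonneg_right (le_of_abs_le hx) hn)
  simpa [gridFloor] using hi _ hmem

section

variable {E : Type*} [NormedAddCommGroup E] [MeasurableSpace E] [BorelSpace E]
  [SecondCountableTopology E]

lemma lintegral_enorm_sub_le_of_thirds {α : Type*} [MeasurableSpace α] {μ : Measure α}
    {a b c d : α → E} (ha : Measurable a) (hb : Measurable b) (hc : Measurable c) {ε : ENNReal}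
    (hab : ∫⁻ x, ‖a x - b x‖ₑ ∂μ ≤ ε / 3) (hbc : ∫⁻ x, ‖b x - c x‖ₑ ∂μ ≤ ε / 3)
    (hdc : ∫⁻ x, ‖d x - c x‖ₑ ∂μ ≤ ε / 3) : ∫⁻ x, ‖a x - d x‖ₑ ∂μ ≤ ε :=
  calc ∫⁻ x, ‖a x - d x‖ₑ ∂μ
      ≤ ∫⁻ x, (‖a x - b x‖ₑ + ‖b x - c x‖ₑ + ‖d x - c x‖ₑ) ∂μ := by
        refine lintegral_mono fun x => ?_
        simpa only [edist_eq_enorm_sub, enorm_sub_rev (d x) (c x)] using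
          edist_triangle4 (a x) (b x) (c x) (d x)
    _ = ∫⁻ x, ‖a x - b x‖ₑ ∂μ + ∫⁻ x, ‖b x - c x‖ₑ ∂μ + ∫⁻ x, ‖d x - c x‖ₑ ∂μ := by
        have hab_meas : Measurable fun x => ‖a x - b x‖ₑ := (ha.sub hb).enorm
        have hbc_meas : Measurable fun x => ‖b x - c x‖ₑ := (hb.sub hc).enorm
        exact (lintegral_add_left (hab_meas.add hbc_meas) _).trans
          (congrArg (· + _) (lintegral_add_left hab_meas _))
    _ ≤ ε / 3 + ε / 3 + ε / 3 := by gcongr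
    _ = ε := ENNReal.add_thirds ε

lemma eventually_setLIntegral_enorm_sub_le {v : ℕ → ℝ → E} {C : ℝ} (hC : 0 ≤ C)
    (hm : ∀ i, Measurable (v i)) (hBV : ∀ i, eVariationOn (v i) univ ≤ ENNReal.ofReal C)
    (hc : ∀ q : ℚ, CauchySeq fun i => v i q) (X : ℕ) {ε : ENNReal} (hε : 0 < ε) :
    ∀ᶠ p : ℕ × ℕ in atTop ×ˢ atTop,
      ∫⁻ x in Ioc (-X : ℝ) X, ‖v p.1 x - v p.2 x‖ₑ ≤ ε := by
  have hε3 : 0 < ε / 3 := ENNReal.div_pos hε.ne' (by norm_num)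
  have hmesh : Tendsto (fun n : ℕ => ENNReal.ofReal (1 / n * C)) atTop (𝓝 0) := by
    simpa using ENNReal.tendsto_ofReal (tendsto_one_div_atTop_nhds_zero_nat.mul_const C)
  obtain ⟨n, hn, hn0⟩ := ((hmesh.eventually_le_const hε3).and (eventually_gt_atTop 0)).exists
  have hgrid : ∀ i, ∫⁻ x in Ioc (-X : ℝ) X, ‖v i x - v i (gridFloor n x)‖ₑ ≤ ε / 3 := fun i => by
    refine (setLIntegral_enorm_sub_comp_le ((hBV i).trans_lt ENNReal.ofReal_lt_top).ne
      (by positivity) (gridFloor_mem_Icc hn0)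
      (neg_le_self (Nat.cast_nonneg X))).trans (le_trans ?_ hn)
    gcongr
    exact ENNReal.toReal_le_of_le_ofReal hC (hBV i)
  set η : ENNReal := ε / 3 / volume (Ioc (-X : ℝ) X)
  have hη : 0 < η := ENNReal.div_pos hε3.ne' measure_Ioc_lt_top.ne
  have hrat : ∀ q : ℚ, ∀ᶠ p : ℕ × ℕ in atTop ×ˢ atTop, ‖v p.1 q - v p.2 q‖ₑ ≤ η := fun q => by
    have hcauchy := cauchySeq_iff_tendsto.1 (hc q)
    rw [← prod_atTop_atTop_eq] at hcauchy
    filter_upwards [hcauchy.eventually (edist_mem_uniformity hη)] with p hp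
    rw [← edist_eq_enorm_sub]
    exact hp.le
  filter_upwards [eventually_forall_gridFloor
    (P := fun (p : ℕ × ℕ) x => ‖v p.1 x - v p.2 x‖ₑ ≤ η) hrat n X] with p hp
  refine lintegral_enorm_sub_le_of_thirds (hm p.1) ((hm p.1).comp (measurable_gridFloor n))
    ((hm p.2).comp (measurable_gridFloor n)) (hgrid p.1) ?_ (hgrid p.2)
  calc ∫⁻ x in Ioc (-X : ℝ) X, ‖v p.1 (gridFloor n x) - v p.2 (gridFloor n x)‖ₑ
      ≤ ∫⁻ _ in Ioc (-X : ℝ) X, η :=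
        setLIntegral_mono' measurableSet_Ioc fun x hx => hp x (abs_le.2 ⟨hx.1.le, hx.2⟩)
    _ = η * volume (Ioc (-X : ℝ) X) := setLIntegral_const _ _
    _ ≤ ε / 3 := (mul_comm _ _).trans_le ENNReal.mul_div_le

lemma eventually_forall_setLIntegral_enorm_sub_le {u : ℕ → ℝ → ℝ → E} {C : ℝ} (hC : 0 ≤ C)
    (hm : ∀ i t, Measurable (u i t))
    (hBV : ∀ i t, eVariationOn (u i t) univ ≤ ENNReal.ofReal C)
    {h : ℕ → ℝ} (hh : Tendsto h atTop (𝓝 0))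
    (hL : ∀ i s t, ∫⁻ x, ‖u i t x - u i s x‖ₑ ≤ ENNReal.ofReal (C * (|t - s| + h i)))
    (hc : ∀ q q' : ℚ, CauchySeq fun i => u i q q') (X : ℕ) {ε : ENNReal} (hε : 0 < ε) :
    ∀ᶠ p : ℕ × ℕ in atTop ×ˢ atTop, ∀ t : ℝ, |t| ≤ X →
      ∫⁻ x in Ioc (-X : ℝ) X, ‖u p.1 t x - u p.2 t x‖ₑ ≤ ε := by
  have hε3 : 0 < ε / 3 := ENNReal.div_pos hε.ne' (by norm_num)
  have hmesh : Tendsto (fun n : ℕ => ENNReal.ofReal (C * (1 / n + 0))) atTop (𝓝 0) := by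
    simpa using ENNReal.tendsto_ofReal (tendsto_one_div_atTop_nhds_zero_nat.const_mul C)
  obtain ⟨n, hn, hn0⟩ := ((hmesh.eventually_lt_const hε3).and (eventually_gt_atTop 0)).exists
  have hlarge : ∀ᶠ i in atTop, ENNReal.ofReal (C * (1 / n + h i)) ≤ ε / 3 :=
    (ENNReal.tendsto_ofReal ((hh.const_add _).const_mul C)).eventually_le_const hn
  have hgrid : ∀ᶠ i in atTop, ∀ t,
      ∫⁻ x in Ioc (-X : ℝ) X, ‖u i t x - u i (gridFloor n t) x‖ₑ ≤ ε / 3 := by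
    filter_upwards [hlarge] with i hi t
    refine (setLIntegral_le_lintegral _ _).trans ((hL i _ t).trans (le_trans ?_ hi))
    have hfloor := gridFloor_mem_Icc hn0 t
    gcongr
    rw [abs_le]
    constructor <;> linarith [hfloor.1, hfloor.2, show (0 : ℝ) ≤ 1 / n by positivity]
  have hrat := eventually_forall_gridFloor (P := fun (p : ℕ × ℕ) t =>
    ∫⁻ x in Ioc (-X : ℝ) X, ‖u p.1 t x - u p.2 t x‖ₑ ≤ ε / 3) (fun q =>
    eventually_setLIntegral_enorm_sub_le hC (fun i => hm i q) (fun i => hBV i q) (hc q) X hε3) n X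
  filter_upwards [hrat, tendsto_fst.eventually hgrid, tendsto_snd.eventually hgrid]
    with p hp hp₁ hp₂ t ht
  exact lintegral_enorm_sub_le_of_thirds (hm _ _) (hm _ _) (hm _ _) (hp₁ t) (hp t ht) (hp₂ t)

lemma ae_cauchySeq_of_setLIntegral_le {v : ℕ → ℝ → E} (hm : ∀ k, Measurable (v k)) {K₀ : ℕ}
    (hv : ∀ k ≥ K₀, ∫⁻ x in Ioc (-k : ℝ) k, ‖v k x - v (k + 1) x‖ₑ ≤ 2⁻¹ ^ k) :
    ∀ᵐ x : ℝ, CauchySeq fun k => v k x := by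
  let w : ℕ → ℝ → ENNReal := fun k => (Ioc (-k : ℝ) k).indicator fun x => ‖v k x - v (k + 1) x‖ₑ
  have hw : ∀ k, Measurable (w k) := fun k =>
    ((hm k).sub (hm (k + 1))).enorm.indicator measurableSet_Ioc
  have hfin : ∫⁻ x, ∑' k, w (k + K₀) x ≠ ⊤ := by
    rw [lintegral_tsum fun k => (hw _).aemeasurable]
    refine ne_top_of_le_ne_top (b := ∑' k : ℕ, (2⁻¹ : ENNReal) ^ k) ?_
      (ENNReal.tsum_le_tsum fun k => ?_)
    · simp [ENNReal.tsum_geometric]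
    · rw [lintegral_indicator measurableSet_Ioc]
      exact (hv _ (Nat.le_add_left _ _)).trans
        (pow_le_pow_right_of_le_one' (ENNReal.inv_le_one.2 one_le_two) (Nat.le_add_right k K₀))
  filter_upwards [ae_lt_top (Measurable.tsum fun k => hw _) hfin] with x hx
  obtain ⟨K₁, hK₁⟩ := exists_nat_gt |x|
  refine (cauchySeq_shift (K₁ + K₀)).1
    (cauchySeq_of_edist_le_of_tsum_ne_top (fun k => w (k + (K₁ + K₀)) x) (fun k => ?_) ?_)
  · have hmem : x ∈ Ioc (-(k + (K₁ + K₀) : ℕ) : ℝ) (k + (K₁ + K₀) : ℕ) := by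
      push_cast
      have : (0 : ℝ) ≤ k + K₀ := by positivity
      obtain ⟨hx₁, hx₂⟩ := abs_lt.1 hK₁
      constructor <;> linarith
    rw [edist_eq_enorm_sub, Nat.succ_eq_add_one, add_right_comm]
    exact ge_of_eq (indicator_of_mem hmem _)
  · refine ne_top_of_le_ne_top hx.ne ?_
    simp_rw [← add_assoc]
    exact ENNReal.tsum_comp_le_tsum_of_injective (add_left_injective K₁) fun k => w (k + K₀) x

end

lemma exists_subseq_ae_tendsto {E : Type*} [NormedAddCommGroup E] [ProperSpace E]
    [MeasurableSpace E] [BorelSpace E] {u : ℕ → ℝ → ℝ → E} {C : ℝ} (hC : 0 ≤ C)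
    (hm : ∀ i, Measurable (Function.uncurry (u i))) (hb : ∀ i t x, ‖u i t x‖ ≤ C)
    (hBV : ∀ i t, eVariationOn (u i t) univ ≤ ENNReal.ofReal C)
    {h : ℕ → ℝ} (hh : Tendsto h atTop (𝓝 0))
    (hL : ∀ i s t, ∫⁻ x, ‖u i t x - u i s x‖ₑ ≤ ENNReal.ofReal (C * (|t - s| + h i))) :
    ∃ σ : ℕ → ℕ, StrictMono σ ∧ ∃ w : ℝ → ℝ → E, Measurable (Function.uncurry w) ∧
      ∀ t, ∀ᵐ x : ℝ, Tendsto (fun k => u (σ k) t x) atTop (𝓝 (w t x)) := by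
  have hm' : ∀ i t, Measurable (u i t) := fun i t => (hm i).comp measurable_prodMk_left
  obtain ⟨_, -, τ, hτ, hτa⟩ := (isCompact_univ_pi fun _ : ℚ × ℚ =>
    isCompact_closedBall (0 : E) C).tendsto_subseq (x := fun i (q : ℚ × ℚ) => u i q.1 q.2)
    fun i q _ => by simpa using hb i _ _
  have hc : ∀ q q' : ℚ, CauchySeq fun k => u (τ k) q q' := fun q q' =>
    (tendsto_pi_nhds.1 hτa (q, q')).cauchySeq
  have hfast : ∀ k : ℕ, ∀ᶠ N in atTop, ∀ i ≥ N, ∀ j ≥ N, ∀ t : ℝ, |t| ≤ k →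
      ∫⁻ x in Ioc (-k : ℝ) k, ‖u (τ i) t x - u (τ j) t x‖ₑ ≤ 2⁻¹ ^ k := fun k => by
    have hp := eventually_forall_setLIntegral_enorm_sub_le hC (fun i => hm' (τ i))
      (fun i => hBV (τ i)) (hh.comp hτ.tendsto_atTop) (fun i => hL (τ i)) hc k
      (ε := 2⁻¹ ^ k) (ENNReal.pow_pos (by simp) k)
    rw [prod_atTop_atTop_eq] at hp
    obtain ⟨N, hN⟩ := eventually_atTop_prod_self.1 hp
    filter_upwards [eventually_ge_atTop N] with M hM i hi j hj
    exact hN i j (hM.trans hi) (hM.trans hj)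
  obtain ⟨ρ, hρ, hρfast⟩ := extraction_forall_of_eventually hfast
  refine ⟨τ ∘ ρ, hτ.comp hρ, fun t x => limUnder atTop fun k => u (τ (ρ k)) t x,
    (StronglyMeasurable.limUnder (l := atTop)
      fun k => (hm (τ (ρ k))).stronglyMeasurable).measurable, fun t => ?_⟩
  obtain ⟨K₀, hK₀⟩ := exists_nat_ge |t|
  filter_upwards [ae_cauchySeq_of_setLIntegral_le (K₀ := K₀) (fun k => hm' (τ (ρ k)) t)
    fun k hk => hρfast k _ le_rfl _ (hρ.monotone k.le_succ) t
      (hK₀.trans (Nat.cast_le.2 hk))] with x hx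
  exact hx.tendsto_limUnder

/-! ### Grid functions -/

lemma floor_div_eq_iff {h y : ℝ} (hh : 0 < h) {j : ℕ} (hj : j ≠ 0 ∨ 0 ≤ y) :
    ⌊y / h⌋₊ = j ↔ y ∈ Ico (j * h) ((j + 1) * h) := by
  rw [mem_Ico, ← le_div_iff₀ hh, ← div_lt_iff₀ hh]
  exact hj.elim Nat.floor_eq_iff' fun hy => Nat.floor_eq_iff (div_nonneg hy hh.le)

lemma floor_div_sub_floor_div_mul_le {h s t : ℝ} (hh : 0 < h) (hst : s ≤ t) :
    ((⌊t / h⌋₊ : ℝ) - ⌊s / h⌋₊) * h ≤ t - s + h := by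
  have hs := (div_lt_iff₀ hh).1 (Nat.lt_floor_add_one (s / h))
  rcases le_total 0 t with ht | ht
  · have := (le_div_iff₀ hh).1 (Nat.floor_le (div_nonneg ht hh.le))
    linarith
  · rw [Nat.floor_of_nonpos (div_nonpos_of_nonpos_of_nonneg ht hh.le), Nat.cast_zero, zero_sub]
    have : 0 ≤ ⌊s / h⌋₊ * h := by positivity
    linarith

lemma lintegral_enorm_comp_floor_le {E : Type*} [NormedAddCommGroup E] {a : ℕ → E}
    (ha : a 0 = 0) {C : ℝ} (hs : ∀ N, ∑ j ∈ Finset.range N, ‖a j‖ ≤ C) {h : ℝ} (hh : 0 < h)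
    (R : ℝ) : ∫⁻ x : ℝ, ‖a ⌊(x + R) / h⌋₊‖ₑ ≤ ENNReal.ofReal (h * C) := by
  have hfloor : Measurable fun x : ℝ => ⌊x / h⌋₊ :=
    Nat.measurable_floor.comp (measurable_id.div_const h)
  have hcell : ∀ j, ‖a j‖ₑ * volume ((fun x : ℝ => ⌊x / h⌋₊) ⁻¹' {j}) ≤
      ‖a j‖ₑ * ENNReal.ofReal h := fun j => by
    rcases eq_or_ne j 0 with rfl | hj
    · simp [ha]
    · rw [show (fun x : ℝ => ⌊x / h⌋₊) ⁻¹' {j} = Ico (j * h) ((j + 1) * h) from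
        ext fun x => floor_div_eq_iff hh (.inl hj), Real.volume_Ico, ← sub_mul, add_sub_cancel_left,
        one_mul]
  calc ∫⁻ x : ℝ, ‖a ⌊(x + R) / h⌋₊‖ₑ
      = ∫⁻ x : ℝ, ‖a ⌊x / h⌋₊‖ₑ := lintegral_add_right_eq_self (fun x => ‖a ⌊x / h⌋₊‖ₑ) R
    _ = ∫⁻ j, ‖a j‖ₑ ∂(volume.map fun x : ℝ => ⌊x / h⌋₊) :=
        (lintegral_map (f := fun j => ‖a j‖ₑ) (measurable_of_countable _) hfloor).symm
    _ = ∑' j, ‖a j‖ₑ * volume ((fun x : ℝ => ⌊x / h⌋₊) ⁻¹' {j}) := by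
        rw [lintegral_countable']
        exact tsum_congr fun j => by rw [Measure.map_apply hfloor (measurableSet_singleton j)]
    _ ≤ ∑' j, ‖a j‖ₑ * ENNReal.ofReal h := ENNReal.tsum_le_tsum hcell
    _ = ENNReal.ofReal h * ∑' j, ‖a j‖ₑ := by rw [ENNReal.tsum_mul_right, mul_comm]
    _ ≤ ENNReal.ofReal h * ENNReal.ofReal C := by
        refine mul_le_mul_right (ENNReal.tsum_le_of_sum_range_le fun N => ?_) _
        simp only [← ofReal_norm]
        rw [← ENNReal.ofReal_sum_of_nonneg fun _ _ => norm_nonneg _]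
        exact ENNReal.ofReal_le_ofReal (hs N)
    _ = ENNReal.ofReal (h * C) := (ENNReal.ofReal_mul hh.le).symm

/-- The step function that equals `U k j` on the cell `[kh, (k+1)h) × [jh - R, (j+1)h - R)`.
Because floors are truncated at `0`, the first cells are extended to all smaller arguments. -/
def gridFunction {E : Type*} (U : ℕ → ℕ → E) (h R t x : ℝ) : E := U ⌊t / h⌋₊ ⌊(x + R) / h⌋₊

/-- How much `u` fails to solve the finite difference scheme
`u(t + h, x) = u(t, x) - (g(u(t, x)) - g(u(t, x - h)))`. -/
def residual {E : Type*} [AddCommGroup E] (g : E → E) (h : ℝ) (u : ℝ → ℝ → E) (p : ℝ × ℝ) : E :=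
  u (p.1 + h) p.2 - u p.1 p.2 + (g (u p.1 p.2) - g (u p.1 (p.2 - h)))

/-- The scheme error, re-indexed by the cell in which it occurs. -/
def gridResidual {E : Type*} [AddCommGroup E] (g : E → E) (U : ℕ → ℕ → E) (k j : ℕ) : E :=
  U (k + 1) j - U k j + (g (U k j) - g (U k (j - 1)))

lemma residual_gridFunction {E : Type*} [AddCommGroup E] (g : E → E) (U : ℕ → ℕ → E) {h : ℝ}
    (hh : 0 < h) (R : ℝ) {p : ℝ × ℝ} (hp : 0 ≤ p.1) :
    residual g h (gridFunction U h R) p = gridFunction (gridResidual g U) h R p.1 p.2 := by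
  have htime : ⌊(p.1 + h) / h⌋₊ = ⌊p.1 / h⌋₊ + 1 := by
    rw [add_div, div_self hh.ne', Nat.floor_add_one (div_nonneg hp hh.le)]
  have hspace : ⌊(p.2 - h + R) / h⌋₊ = ⌊(p.2 + R) / h⌋₊ - 1 := by
    rw [sub_add_eq_add_sub, sub_div, div_self hh.ne', Nat.floor_sub_one]
  simp only [residual, gridFunction, gridResidual, htime, hspace]

lemma measurable_uncurry_gridFunction {E : Type*} [MeasurableSpace E] (U : ℕ → ℕ → E) (h R : ℝ) :
    Measurable (Function.uncurry (gridFunction U h R)) := by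
  have htime : Measurable fun p : ℝ × ℝ => ⌊p.1 / h⌋₊ :=
    Nat.measurable_floor.comp (measurable_fst.div_const _)
  have hspace : Measurable fun p : ℝ × ℝ => ⌊(p.2 + R) / h⌋₊ :=
    Nat.measurable_floor.comp ((measurable_snd.add_const _).div_const _)
  exact (measurable_of_countable (Function.uncurry U)).comp (htime.prodMk hspace)

namespace IsGlimmSequence

variable {E : Type*} [NormedAddCommGroup E] {g : E → E} {C : ℝ} {U : ℕ → ℕ → E}

lemma norm_le (hU : IsGlimmSequence g C U) (k j : ℕ) : ‖U k j‖ ≤ C := by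
  rw [← sub_zero (U k j), ← hU.zero k, ← Finset.sum_range_sub]
  exact (norm_sum_le _ _).trans (hU.sum_norm_space_le k j)

lemma gridResidual_zero (hU : IsGlimmSequence g C U) (k : ℕ) : gridResidual g U k 0 = 0 := by
  simp [gridResidual, hU.zero]

lemma sum_norm_gridResidual_le (hU : IsGlimmSequence g C U) (k N : ℕ) :
    ∑ j ∈ Finset.range N, ‖gridResidual g U k j‖ ≤ C := by
  refine (Finset.sum_le_sum_of_subset_of_nonneg (Finset.range_subset_range.2 N.le_succ)
    fun _ _ _ => norm_nonneg _).trans ?_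
  rw [Finset.sum_range_succ', hU.gridResidual_zero, norm_zero, add_zero]
  exact hU.sum_norm_schemeError_le k N

lemma sum_norm_sub_le (hU : IsGlimmSequence g C U) {k l : ℕ} (hkl : k ≤ l) (N : ℕ) :
    ∑ j ∈ Finset.range N, ‖U l j - U k j‖ ≤ (l - k) * C :=
  calc ∑ j ∈ Finset.range N, ‖U l j - U k j‖
      ≤ ∑ j ∈ Finset.range N, ∑ i ∈ Finset.Ico k l, ‖U (i + 1) j - U i j‖ := by
        refine Finset.sum_le_sum fun j _ => ?_
        rw [← Finset.sum_Ico_sub (fun i => U i j) hkl]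
        exact norm_sum_le _ _
    _ = ∑ i ∈ Finset.Ico k l, ∑ j ∈ Finset.range N, ‖U (i + 1) j - U i j‖ := Finset.sum_comm
    _ ≤ ∑ _i ∈ Finset.Ico k l, C := Finset.sum_le_sum fun i _ => hU.sum_norm_time_le i N
    _ = (l - k) * C := by rw [Finset.sum_const, Nat.card_Ico, nsmul_eq_mul, Nat.cast_sub hkl]

lemma eVariationOn_gridFunction_le (hU : IsGlimmSequence g C U) {h : ℝ} (hh : 0 < h) (R t : ℝ) :
    eVariationOn (gridFunction U h R t) univ ≤ ENNReal.ofReal C :=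
  (eVariationOn.comp_le_of_monotoneOn (U ⌊t / h⌋₊) (fun x => ⌊(x + R) / h⌋₊)
    (fun _ _ _ _ hxy => Nat.floor_mono (by gcongr)) (mapsTo_univ _ _)).trans
    (eVariationOn_nat_le (hU.sum_norm_space_le _))

lemma lintegral_enorm_gridFunction_sub_le (hU : IsGlimmSequence g C U) {h : ℝ} (hh : 0 < h)
    (R s t : ℝ) : ∫⁻ x, ‖gridFunction U h R t x - gridFunction U h R s x‖ₑ ≤
      ENNReal.ofReal (C * (|t - s| + h)) := by
  wlog hst : s ≤ t generalizing s t
  · simpa only [abs_sub_comm, enorm_sub_rev] using this t s (le_of_not_ge hst)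
  have hC : 0 ≤ C := (norm_nonneg _).trans (hU.norm_le 0 0)
  have hfloor : ⌊s / h⌋₊ ≤ ⌊t / h⌋₊ := by gcongr
  refine (lintegral_enorm_comp_floor_le (a := fun j => U ⌊t / h⌋₊ j - U ⌊s / h⌋₊ j)
    (by simp only [hU.zero, sub_zero]) (hU.sum_norm_sub_le hfloor) hh R).trans
    (ENNReal.ofReal_le_ofReal ?_)
  rw [abs_of_nonneg (sub_nonneg.2 hst), ← mul_assoc, mul_comm h, mul_comm C]
  exact mul_le_mul_of_nonneg_right (floor_div_sub_floor_div_mul_le hh hst) hC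

end IsGlimmSequence

section TestIntegrals

variable {E : Type*} [NormedAddCommGroup E]

lemma setLIntegral_enorm_gridFunction_le [MeasurableSpace E] [BorelSpace E] {A : ℕ → ℕ → E}
    (hA₀ : ∀ k, A k 0 = 0) {C : ℝ} (hA : ∀ k N, ∑ j ∈ Finset.range N, ‖A k j‖ ≤ C) {h : ℝ}
    (hh : 0 < h) (R : ℝ) {T : ℝ} (hT : 0 ≤ T) :
    ∫⁻ p : ℝ × ℝ in Icc 0 T ×ˢ univ, ‖gridFunction A h R p.1 p.2‖ₑ ≤
      ENNReal.ofReal (T * (h * C)) := by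
  have hmeas : Measurable fun p : ℝ × ℝ => ‖gridFunction A h R p.1 p.2‖ₑ :=
    (measurable_uncurry_gridFunction A h R).enorm
  rw [Measure.volume_eq_prod, ← Measure.prod_restrict, Measure.restrict_univ,
    lintegral_prod _ hmeas.aemeasurable]
  calc ∫⁻ t in Icc 0 T, ∫⁻ x, ‖gridFunction A h R t x‖ₑ
      ≤ ∫⁻ _ in Icc 0 T, ENNReal.ofReal (h * C) :=
        lintegral_mono fun t => lintegral_enorm_comp_floor_le (hA₀ _) (hA _) hh R
    _ = ENNReal.ofReal (T * (h * C)) := by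
        rw [setLIntegral_const, Real.volume_Icc, sub_zero, mul_comm, ENNReal.ofReal_mul hT]

variable [NormedSpace ℝ E]

lemma setLIntegral_enorm_smul_gridFunction_le [MeasurableSpace E] [BorelSpace E] {A : ℕ → ℕ → E}
    (hA₀ : ∀ k, A k 0 = 0) {C : ℝ} (hA : ∀ k N, ∑ j ∈ Finset.range N, ‖A k j‖ ≤ C) {h : ℝ}
    (hh : 0 < h) (R : ℝ) {T : ℝ} (hT : 0 ≤ T) {ψ : ℝ × ℝ → ℝ} {ε : ℝ} (hψ : ∀ p, |ψ p| ≤ ε)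
    (hψT : ∀ p : ℝ × ℝ, T < p.1 → ψ p = 0) :
    ∫⁻ p : ℝ × ℝ in Ici 0 ×ˢ univ, ‖ψ p • gridFunction A h R p.1 p.2‖ₑ ≤
      ENNReal.ofReal (ε * (T * (h * C))) := by
  have hε : 0 ≤ ε := (abs_nonneg _).trans (hψ 0)
  have hmeas : Measurable fun p : ℝ × ℝ => ‖gridFunction A h R p.1 p.2‖ₑ :=
    (measurable_uncurry_gridFunction A h R).enorm
  calc ∫⁻ p : ℝ × ℝ in Ici 0 ×ˢ univ, ‖ψ p • gridFunction A h R p.1 p.2‖ₑ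
      ≤ ∫⁻ p : ℝ × ℝ in Ici 0 ×ˢ univ, (Icc 0 T ×ˢ univ).indicator
          (fun p => ENNReal.ofReal ε * ‖gridFunction A h R p.1 p.2‖ₑ) p := by
        refine setLIntegral_mono' (measurableSet_Ici.prod .univ) fun p hp => ?_
        by_cases hpT : p.1 ≤ T
        · have hpT' : p ∈ Icc (0 : ℝ) T ×ˢ (univ : Set ℝ) := ⟨⟨hp.1, hpT⟩, hp.2⟩
          rw [indicator_of_mem hpT', enorm_smul, Real.enorm_eq_ofReal_abs]
          gcongr
          exact hψ p
        · rw [hψT p (lt_of_not_ge hpT), zero_smul, enorm_zero]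
          exact zero_le
    _ = ∫⁻ p : ℝ × ℝ in Icc 0 T ×ˢ univ, ENNReal.ofReal ε * ‖gridFunction A h R p.1 p.2‖ₑ := by
        rw [setLIntegral_indicator (measurableSet_Icc.prod .univ),
          inter_eq_left.2 (prod_mono_left Icc_subset_Ici_self)]
    _ = ENNReal.ofReal ε * ∫⁻ p : ℝ × ℝ in Icc 0 T ×ˢ univ, ‖gridFunction A h R p.1 p.2‖ₑ :=
        lintegral_const_mul _ hmeas
    _ ≤ ENNReal.ofReal (ε * (T * (h * C))) := by
        rw [ENNReal.ofReal_mul hε]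
        gcongr
        exact setLIntegral_enorm_gridFunction_le hA₀ hA hh R hT

/-- The cell of the grid on which `gridFunction U h R` equals `U k (j + 1)` at nonnegative times;
the shift by one matches `schemeError`, whose `j`-th value is the error in column `j + 1`. -/
def gridCell (h R : ℝ) (c : ℕ × ℕ) : Set (ℝ × ℝ) :=
  {p | 0 ≤ p.1 ∧ ⌊p.1 / h⌋₊ = c.1 ∧ ⌊(p.2 + R) / h⌋₊ = c.2 + 1}

lemma gridCell_eq_prod {h : ℝ} (hh : 0 < h) (R : ℝ) (c : ℕ × ℕ) :
    gridCell h R c = Ico (c.1 * h) ((c.1 + 1) * h) ×ˢ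
      Ico ((c.2 + 1) * h - R) ((c.2 + 2) * h - R) := by
  ext p
  rw [mem_prod]
  refine and_assoc.symm.trans (and_congr ⟨fun hp => (floor_div_eq_iff hh (.inr hp.1)).1 hp.2,
    fun hp => ?_⟩ ?_)
  · have hp₀ : 0 ≤ p.1 := le_trans (by positivity) hp.1
    exact ⟨hp₀, (floor_div_eq_iff hh (.inr hp₀)).2 hp⟩
  · rw [floor_div_eq_iff hh (.inl (Nat.succ_ne_zero _)), mem_Ico, mem_Ico, sub_le_iff_le_add,
      lt_sub_iff_add_lt]
    push_cast
    rw [add_assoc (c.2 : ℝ), one_add_one_eq_two]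

lemma measurableSet_gridCell {h : ℝ} (hh : 0 < h) (R : ℝ) (c : ℕ × ℕ) :
    MeasurableSet (gridCell h R c) :=
  gridCell_eq_prod hh R c ▸ measurableSet_Ico.prod measurableSet_Ico

lemma volume_gridCell {h : ℝ} (hh : 0 < h) (R : ℝ) (c : ℕ × ℕ) :
    volume (gridCell h R c) = ENNReal.ofReal (h * h) := by
  rw [gridCell_eq_prod hh, Measure.volume_eq_prod, Measure.prod_prod, Real.volume_Ico,
    Real.volume_Ico, ENNReal.ofReal_mul hh.le]
  congr 2 <;> ring

lemma pairwiseDisjoint_gridCell (h R : ℝ) (s : Set (ℕ × ℕ)) : s.PairwiseDisjoint (gridCell h R) :=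
  fun _ _ _ _ hne => disjoint_left.2 fun _ hp hp' => hne <|
    Prod.ext (hp.2.1.symm.trans hp'.2.1) (Nat.succ_injective (hp.2.2.symm.trans hp'.2.2))

lemma norm_setIntegral_gridCell_le {h : ℝ} (hh : 0 < h) (R : ℝ) (c : ℕ × ℕ) {ψ : ℝ × ℝ → ℝ}
    (hψ : ∀ p, |ψ p| ≤ 1) : |h⁻¹ * ∫ p in gridCell h R c, ψ p| ≤ h := by
  have hint : ‖∫ p in gridCell h R c, ψ p‖ ≤ 1 * volume.real (gridCell h R c) :=
    norm_setIntegral_le_of_norm_le_const (volume_gridCell hh R c ▸ ENNReal.ofReal_lt_top)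
      fun p _ => hψ p
  rw [Measure.real, volume_gridCell hh, ENNReal.toReal_ofReal (by positivity), one_mul,
    Real.norm_eq_abs] at hint
  rwa [abs_mul, abs_of_pos (inv_pos.2 hh), inv_mul_le_iff₀ hh]

lemma setIntegral_smul_gridFunction [CompleteSpace E] {A : ℕ → ℕ → E} (hA₀ : ∀ k, A k 0 = 0)
    {h : ℝ} (hh : 0 < h) (R : ℝ) {ψ : ℝ × ℝ → ℝ} (hψm : Measurable ψ) (hψ : ∀ p, |ψ p| ≤ 1)
    {K N : ℕ} (hψ₀ : ∀ p : ℝ × ℝ, ψ p ≠ 0 → p.1 < K * h ∧ p.2 + R < (N + 1) * h) :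
    h⁻¹ • ∫ p : ℝ × ℝ in Ici 0 ×ˢ univ, ψ p • gridFunction A h R p.1 p.2 =
      ∑ k ∈ Finset.range K, ∑ j ∈ Finset.range N,
        (h⁻¹ * ∫ p in gridCell h R (k, j), ψ p) • A k (j + 1) := by
  have hcell : ∀ c, EqOn (fun p : ℝ × ℝ => ψ p • gridFunction A h R p.1 p.2)
      (fun p => ψ p • A c.1 (c.2 + 1)) (gridCell h R c) := fun c p hp => by
    simp only [gridFunction, hp.2.1, hp.2.2]
  have hψc : ∀ c, IntegrableOn ψ (gridCell h R c) := fun c =>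
    Measure.integrableOn_of_bounded (volume_gridCell hh R c ▸ ENNReal.ofReal_ne_top)
      hψm.aestronglyMeasurable (Eventually.of_forall hψ)
  have hzero : ∀ p ∈ Ici 0 ×ˢ univ \ ⋃ c ∈ Finset.range K ×ˢ Finset.range N, gridCell h R c,
      ψ p • gridFunction A h R p.1 p.2 = 0 := by
    rintro p ⟨hp, hpc⟩
    by_contra hne
    obtain ⟨hψp, hAp⟩ := smul_ne_zero_iff.1 hne
    obtain ⟨hpK, hpN⟩ := hψ₀ p hψp
    have hk : ⌊p.1 / h⌋₊ < K :=
      (Nat.floor_lt (div_nonneg hp.1 hh.le)).2 ((div_lt_iff₀ hh).2 hpK)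
    obtain ⟨j, hj⟩ : ∃ j, ⌊(p.2 + R) / h⌋₊ = j + 1 :=
      Nat.exists_eq_succ_of_ne_zero fun h0 => hAp (by rw [gridFunction, h0, hA₀])
    have hjN : ⌊(p.2 + R) / h⌋₊ < N + 1 :=
      (Nat.floor_lt' N.succ_ne_zero).2 ((div_lt_iff₀ hh).2 (by exact_mod_cast hpN))
    refine hpc (mem_biUnion (x := (⌊p.1 / h⌋₊, j)) ?_ ⟨hp.1, rfl, hj⟩)
    simp only [Finset.coe_product, Finset.coe_range, mem_prod, mem_Iio]
    lia
  rw [← Finset.sum_product', setIntegral_eq_of_subset_of_forall_sdiff_eq_zero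
      (measurableSet_Ici.prod .univ) (iUnion₂_subset fun c _ p hp => ⟨hp.1, mem_univ _⟩) hzero,
    integral_biUnion_finset _ (fun c _ => measurableSet_gridCell hh R c)
      (pairwiseDisjoint_gridCell h R _) fun c _ =>
      (integrableOn_congr_fun (hcell c) (measurableSet_gridCell hh R c)).2
        (Integrable.smul_const (hψc c) _), Finset.smul_sum]
  refine Finset.sum_congr rfl fun c _ => ?_
  rw [setIntegral_congr_fun (measurableSet_gridCell hh R c) (hcell c), integral_smul_const,
    smul_smul]

end TestIntegrals

/-! ### Approximate solutions -/

section Scheme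

variable {E : Type*} [NormedAddCommGroup E] [InnerProductSpace ℝ E] {g : E → E} {n : ℕ}

/-- Multiplication by the weights `c 0, …, c (ν - 1)` simultaneously, with values in the Hilbert
space `E ^ ν`. -/
def weights (ν : ℕ) (c : ℕ → ℝ) : E →L[ℝ] PiLp 2 fun _ : Fin ν => E :=
  ((PiLp.continuousLinearEquiv 2 ℝ fun _ : Fin ν => E).symm : (Fin ν → E) →L[ℝ] _) ∘L
    ContinuousLinearMap.pi fun m => c m • ContinuousLinearMap.id ℝ E

lemma weights_apply (ν : ℕ) (c : ℕ → ℝ) (v : E) (m : Fin ν) : weights ν c v m = c m • v := rfl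

lemma norm_weights_le (ν : ℕ) {c : ℕ → ℝ} {κ : ℝ} (hc : ∀ m, |c m| ≤ κ) :
    ‖(weights ν c : E →L[ℝ] _)‖ ≤ √ν * κ := by
  have hκ : 0 ≤ κ := (abs_nonneg _).trans (hc 0)
  refine ContinuousLinearMap.opNorm_le_bound _ (by positivity) fun v => ?_
  rw [PiLp.norm_eq_of_L2, ← Real.sqrt_sq hκ, ← Real.sqrt_sq (norm_nonneg v), ← Real.sqrt_mul
    (by positivity), ← Real.sqrt_mul (by positivity)]
  refine Real.sqrt_le_sqrt ?_
  calc ∑ m, ‖weights ν c v m‖ ^ 2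
      ≤ ∑ _m : Fin ν, κ ^ 2 * ‖v‖ ^ 2 := Finset.sum_le_sum fun m _ => by
        rw [weights_apply, norm_smul, mul_pow]
        gcongr
        exact hc m
    _ = ν * κ ^ 2 * ‖v‖ ^ 2 := by
        rw [Finset.sum_const, Finset.card_univ, Fintype.card_fin, nsmul_eq_mul, mul_assoc]

lemma RiemannSolver.exists_isGlimmSequence_weights (R : RiemannSolver g n) :
    ∃ δ > 0, ∃ C > 0, ∀ U₀ : ℕ → E, U₀ 0 = 0 →
      (∀ N, ∑ j ∈ Finset.range N, ‖U₀ (j + 1) - U₀ j‖ ≤ δ) →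
      ∀ {κ : ℝ} {c : ℕ → ℕ → ℕ → ℝ}, (∀ m k j, |c m k j| ≤ κ) → ∀ ν N,
        ∃ U : ℕ → ℕ → E, U 0 = U₀ ∧ IsGlimmSequence g C U ∧ ∀ K, ∀ m < ν,
          ‖∑ k ∈ Finset.range K, ∑ j ∈ Finset.range N,
            c m k j • schemeError g (U k) (U (k + 1)) j‖ ^ 2 ≤ K * (ν * (C * κ) ^ 2) := by
  obtain ⟨δ, hδ, C, hC, hscheme⟩ := R.exists_isGlimmSequence
  refine ⟨δ, hδ, C, hC, fun U₀ hU₀ hTV κ c hc ν N => ?_⟩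
  obtain ⟨U, hU₀', hU, hsum⟩ := hscheme U₀ hU₀ hTV (fun k j => weights ν fun m => c m k j)
    (fun k j => norm_weights_le ν fun m => hc m k j) N
  refine ⟨U, hU₀', hU, fun K m hm => ?_⟩
  have hcomp := PiLp.norm_apply_le (∑ k ∈ Finset.range K, ∑ j ∈ Finset.range N,
    weights ν (fun m => c m k j) (schemeError g (U k) (U (k + 1)) j)) ⟨m, hm⟩
  simp only [WithLp.ofLp_sum, Finset.sum_apply, weights_apply] at hcomp
  calc ‖∑ k ∈ Finset.range K, ∑ j ∈ Finset.range N,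
        c m k j • schemeError g (U k) (U (k + 1)) j‖ ^ 2
      ≤ K * (C * (√ν * κ)) ^ 2 := (pow_le_pow_left₀ (norm_nonneg _) hcomp 2).trans (hsum K)
    _ = K * (ν * (C * κ) ^ 2) := by
        rw [mul_left_comm, mul_pow, Real.sq_sqrt ν.cast_nonneg]

end Scheme

section InitialData

variable {E : Type*} [NormedAddCommGroup E]

/-- Samples of `ubar` at the grid points `jh - R`, and `0` in the first cell, which extends to
`-∞`. -/
def sampledData (ubar : ℝ → E) (h R : ℝ) (j : ℕ) : E := if j = 0 then 0 else ubar (j * h - R)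

lemma sampledData_zero (ubar : ℝ → E) (h R : ℝ) : sampledData ubar h R 0 = 0 := if_pos rfl

lemma sampledData_succ (ubar : ℝ → E) (h R : ℝ) (j : ℕ) :
    sampledData ubar h R (j + 1) = ubar ((j + 1 : ℕ) * h - R) := if_neg j.succ_ne_zero

lemma sum_norm_sampledData_sub_le {ubar : ℝ → E} (hi : Integrable ubar) {δ : ℝ} (hδ : 0 ≤ δ)
    (hv : eVariationOn ubar univ ≤ ENNReal.ofReal δ) {h : ℝ} (hh : 0 ≤ h) (R : ℝ) (N : ℕ) :
    ∑ j ∈ Finset.range N, ‖sampledData ubar h R (j + 1) - sampledData ubar h R j‖ ≤ 2 * δ := by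
  have hbv : BoundedVariationOn ubar univ := ne_top_of_le_ne_top ENNReal.ofReal_ne_top hv
  have hfirst : ‖sampledData ubar h R (0 + 1) - sampledData ubar h R 0‖ ≤ δ := by
    rw [sampledData_succ, sampledData_zero, sub_zero]
    exact (norm_le_eVariationOn_of_integrable hi hbv _).trans (ENNReal.toReal_le_of_le_ofReal hδ hv)
  have hmono : Monotone fun j : ℕ => ((j + 1 : ℕ) * h - R : ℝ) := fun i j hij => by
    dsimp only
    gcongr
  have hrest : ∑ j ∈ Finset.range N,
      ‖sampledData ubar h R (j + 1 + 1) - sampledData ubar h R (j + 1)‖ ≤ δ := by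
    refine (ENNReal.ofReal_le_ofReal_iff hδ).1 (le_trans ?_ hv)
    rw [ENNReal.ofReal_sum_of_nonneg fun _ _ => norm_nonneg _]
    simpa only [sampledData_succ, ← dist_eq_norm, edist_dist] using
      eVariationOn.sum_le (f := ubar) (n := N) hmono fun _ => mem_univ _
  calc ∑ j ∈ Finset.range N, ‖sampledData ubar h R (j + 1) - sampledData ubar h R j‖
      ≤ ∑ j ∈ Finset.range (N + 1), ‖sampledData ubar h R (j + 1) - sampledData ubar h R j‖ :=
        Finset.sum_le_sum_of_subset_of_nonneg (Finset.range_subset_range.2 N.le_succ)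
          fun _ _ _ => norm_nonneg _
    _ ≤ 2 * δ := by
        rw [Finset.sum_range_succ', two_mul]
        exact add_le_add hrest hfirst

lemma tendsto_gridFunction_sampledData {ubar : ℝ → E} {x : ℝ} (hx : ContinuousAt ubar x)
    {h R : ℕ → ℝ} (hh₀ : ∀ i, 0 < h i) (hh : Tendsto h atTop (𝓝 0)) (hR : Tendsto R atTop atTop)
    {U : ℕ → ℕ → ℕ → E} (hU : ∀ i, U i 0 = sampledData ubar (h i) (R i)) :
    Tendsto (fun i => gridFunction (U i) (h i) (R i) 0 x) atTop (𝓝 (ubar x)) := by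
  set y : ℕ → ℝ := fun i => ⌊(x + R i) / h i⌋₊ * h i - R i
  have hcell : ∀ᶠ i in atTop, h i ≤ x + R i :=
    (hh.eventually_le_const one_pos).and (hR.eventually_ge_atTop (1 - x)) |>.mono
      fun i hi => by linarith [hi.1, hi.2]
  have hy : Tendsto y atTop (𝓝 x) := by
    refine tendsto_of_tendsto_of_tendsto_of_le_of_le' (by simpa using tendsto_const_nhds.sub hh)
      (tendsto_const_nhds (x := x)) (.of_forall fun i => ?_) (hcell.mono fun i hi => ?_)
    · have := (div_lt_iff₀ (hh₀ i)).1 (Nat.lt_floor_add_one ((x + R i) / h i))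
      dsimp only [y]
      linarith
    · have := (le_div_iff₀ (hh₀ i)).1 (Nat.floor_le
        (div_nonneg ((hh₀ i).le.trans hi) (hh₀ i).le))
      dsimp only [y]
      linarith
  refine (hx.tendsto.comp hy).congr' (hcell.mono fun i hi => ?_)
  have hfloor : ⌊(x + R i) / h i⌋₊ ≠ 0 :=
    (Nat.floor_pos.2 ((one_le_div (hh₀ i)).2 hi)).ne'
  simp only [gridFunction, zero_div, Nat.floor_zero, hU, sampledData, if_neg hfloor, y,
    Function.comp_apply]

end InitialData

section Residual

variable {E : Type*} [NormedAddCommGroup E] [NormedSpace ℝ E] {g : E → E}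

/-- The residual tested against `φ`. The factor `h⁻¹` turns the differences in `residual` into
difference quotients, and `φ` is evaluated at the new time level. -/
def testedResidual (g : E → E) (h : ℝ) (u : ℝ → ℝ → E) (φ : ℝ × ℝ → ℝ) : E :=
  h⁻¹ • ∫ p : ℝ × ℝ in Ici 0 ×ˢ univ, φ (p.1 + h, p.2) • residual g h u p

lemma testedResidual_const_mul (g : E → E) (h : ℝ) (u : ℝ → ℝ → E) (φ : ℝ × ℝ → ℝ) (a : ℝ) :
    testedResidual g h u (fun p => a * φ p) = a • testedResidual g h u φ := by
  simp only [testedResidual, mul_smul]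
  simp only [smul_comm _ a, integral_smul]

lemma tendsto_testedResidual_of_abs_le_one {h : ℕ → ℝ} {u : ℕ → ℝ → ℝ → E}
    (hlim : ∀ φ : ℝ × ℝ → ℝ, Continuous φ → HasCompactSupport φ → (∀ p, |φ p| ≤ 1) →
      Tendsto (fun i => testedResidual g (h i) (u i) φ) atTop (𝓝 0))
    {φ : ℝ × ℝ → ℝ} (hφ : Continuous φ) (hφs : HasCompactSupport φ) :
    Tendsto (fun i => testedResidual g (h i) (u i) φ) atTop (𝓝 0) := by
  obtain ⟨B, hB⟩ := hφs.exists_bound_of_continuous hφ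
  have hB₁ : 0 < |B| + 1 := by positivity
  have hscaled := hlim (fun p => (|B| + 1)⁻¹ * φ p) (continuous_const.mul hφ) hφs.mul_left
    fun p => by
      rw [abs_mul, abs_of_pos (inv_pos.2 hB₁), inv_mul_le_one₀ hB₁]
      exact (hB p).trans (by linarith [le_abs_self B])
  simp only [testedResidual_const_mul] at hscaled
  simpa only [smul_smul, mul_inv_cancel₀ hB₁.ne', one_smul, smul_zero] using
    hscaled.const_smul (|B| + 1)

lemma testedResidual_gridFunction (g : E → E) (U : ℕ → ℕ → E) {h : ℝ} (hh : 0 < h) (R : ℝ)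
    (φ : ℝ × ℝ → ℝ) : testedResidual g h (gridFunction U h R) φ =
      h⁻¹ • ∫ p : ℝ × ℝ in Ici 0 ×ˢ univ,
        φ (p.1 + h, p.2) • gridFunction (gridResidual g U) h R p.1 p.2 := by
  unfold testedResidual
  congr 1
  refine setIntegral_congr_fun (measurableSet_Ici.prod .univ) fun p hp => ?_
  simp only [residual_gridFunction g U hh R hp.1]

/-- The approximate solutions `u i` at mesh sizes `h i` converge to a weak solution of
`u_t + g(u)_x = 0`, along a subsequence. -/
structure IsApproximateSolution [MeasurableSpace E] (g : E → E) (C : ℝ) (h : ℕ → ℝ)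
    (u : ℕ → ℝ → ℝ → E) : Prop where
  mesh_pos : ∀ i, 0 < h i
  tendsto_mesh : Tendsto h atTop (𝓝 0)
  measurable : ∀ i, Measurable (Function.uncurry (u i))
  norm_le : ∀ i t x, ‖u i t x‖ ≤ C
  eVariationOn_le : ∀ i t, eVariationOn (u i t) univ ≤ ENNReal.ofReal C
  lintegral_enorm_sub_le : ∀ i s t,
    ∫⁻ x, ‖u i t x - u i s x‖ₑ ≤ ENNReal.ofReal (C * (|t - s| + h i))
  tendsto_testedResidual : ∀ φ : ℝ × ℝ → ℝ, Continuous φ → HasCompactSupport φ →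
    Tendsto (fun i => testedResidual g (h i) (u i) φ) atTop (𝓝 0)

variable {C : ℝ} {U : ℕ → ℕ → E}

namespace IsGlimmSequence

lemma lintegral_testedResidual_le [MeasurableSpace E] [BorelSpace E] (hU : IsGlimmSequence g C U)
    {h : ℝ} (hh : 0 < h) (R : ℝ) {T : ℝ} (hT : 0 ≤ T) {ψ : ℝ × ℝ → ℝ} {ε : ℝ}
    (hψ : ∀ p, |ψ p| ≤ ε) (hψT : ∀ p : ℝ × ℝ, T < p.1 → ψ p = 0) :
    ∫⁻ p : ℝ × ℝ in Ici 0 ×ˢ univ,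
        ‖ψ (p.1 + h, p.2) • gridFunction (gridResidual g U) h R p.1 p.2‖ₑ ≤
      ENNReal.ofReal (ε * (T * (h * C))) :=
  setLIntegral_enorm_smul_gridFunction_le hU.gridResidual_zero hU.sum_norm_gridResidual_le hh R hT
    (ψ := fun p => ψ (p.1 + h, p.2)) (fun _ => hψ _)
    fun p hp => hψT (p.1 + h, p.2) (hp.trans (lt_add_of_pos_right _ hh))

lemma norm_testedResidual_le [MeasurableSpace E] [BorelSpace E] (hU : IsGlimmSequence g C U)
    {h : ℝ} (hh : 0 < h) (R : ℝ) {T : ℝ} (hT : 0 ≤ T) {ψ : ℝ × ℝ → ℝ} {ε : ℝ}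
    (hψ : ∀ p, |ψ p| ≤ ε) (hψT : ∀ p : ℝ × ℝ, T < p.1 → ψ p = 0) :
    ‖testedResidual g h (gridFunction U h R) ψ‖ ≤ ε * (T * C) := by
  have hC : 0 ≤ C := (norm_nonneg _).trans (hU.norm_le 0 0)
  have hε : 0 ≤ ε := (abs_nonneg _).trans (hψ 0)
  have hint := (enorm_integral_le_lintegral_enorm _).trans
    (hU.lintegral_testedResidual_le hh R hT hψ hψT)
  rw [← ofReal_norm, ENNReal.ofReal_le_ofReal_iff (by positivity)] at hint
  rw [testedResidual_gridFunction g U hh, norm_smul, norm_inv, Real.norm_of_nonneg hh.le,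
    inv_mul_le_iff₀ hh]
  exact hint.trans_eq (by ring)

variable [MeasurableSpace E] [BorelSpace E] [SecondCountableTopology E]

lemma testedResidual_add (hU : IsGlimmSequence g C U) {h : ℝ} (hh : 0 < h) (R : ℝ) {T : ℝ}
    (hT : 0 ≤ T) {ψ χ : ℝ × ℝ → ℝ} (hψm : Measurable ψ) (hχm : Measurable χ) {ε ε' : ℝ}
    (hψ : ∀ p, |ψ p| ≤ ε) (hχ : ∀ p, |χ p| ≤ ε') (hψT : ∀ p : ℝ × ℝ, T < p.1 → ψ p = 0)
    (hχT : ∀ p : ℝ × ℝ, T < p.1 → χ p = 0) :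
    testedResidual g h (gridFunction U h R) (fun p => ψ p + χ p) =
      testedResidual g h (gridFunction U h R) ψ + testedResidual g h (gridFunction U h R) χ := by
  have hint : ∀ {η : ℝ × ℝ → ℝ} {a : ℝ}, Measurable η → (∀ p, |η p| ≤ a) →
      (∀ p : ℝ × ℝ, T < p.1 → η p = 0) → IntegrableOn (fun p : ℝ × ℝ =>
        η (p.1 + h, p.2) • gridFunction (gridResidual g U) h R p.1 p.2) (Ici 0 ×ˢ univ) :=
    fun hηm hη hηT => ⟨((hηm.comp ((measurable_fst.add_const h).prodMk measurable_snd)).smul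
      (measurable_uncurry_gridFunction (gridResidual g U) h R)).aestronglyMeasurable,
      (hU.lintegral_testedResidual_le hh R hT hη hηT).trans_lt ENNReal.ofReal_lt_top⟩
  simp only [testedResidual_gridFunction g U hh, add_smul]
  rw [integral_add (hint hψm hψ hψT) (hint hχm hχ hχT), smul_add]

end IsGlimmSequence

lemma testedResidual_eq_sum [CompleteSpace E] (hU : IsGlimmSequence g C U) {h : ℝ} (hh : 0 < h)
    (R : ℝ) {χ : ℝ × ℝ → ℝ} (hχm : Measurable χ) (hχ : ∀ p, |χ p| ≤ 1) {T : ℝ}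
    (hχT : ∀ p ∉ Metric.closedBall 0 T, χ p = 0) {K N : ℕ} (hK : T < K * h)
    (hN : T + R < (N + 1) * h) :
    testedResidual g h (gridFunction U h R) χ = ∑ k ∈ Finset.range K, ∑ j ∈ Finset.range N,
      (h⁻¹ * ∫ p in gridCell h R (k, j), χ (p.1 + h, p.2)) •
        schemeError g (U k) (U (k + 1)) j := by
  rw [testedResidual_gridFunction g U hh]
  refine setIntegral_smul_gridFunction hU.gridResidual_zero hh R
    (hχm.comp ((measurable_fst.add_const h).prodMk measurable_snd)) (fun _ => hχ _) fun p hp => ?_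
  have hball : ‖((p.1 + h, p.2) : ℝ × ℝ)‖ ≤ T :=
    mem_closedBall_zero_iff.1 (not_imp_comm.1 (hχT _) hp)
  have htime := (le_abs_self _).trans ((norm_fst_le _).trans hball)
  have hspace := (le_abs_self _).trans ((norm_snd_le _).trans hball)
  exact ⟨by linarith, by linarith⟩

variable [MeasurableSpace E] [BorelSpace E] [SecondCountableTopology E]

lemma tendsto_testedResidual_of_approximable {U : ℕ → ℕ → ℕ → E}
    (hU : ∀ i, IsGlimmSequence g C (U i)) {h : ℕ → ℝ} (hh : ∀ i, 0 < h i) (R : ℕ → ℝ)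
    {φ : ℝ × ℝ → ℝ} (hφm : Measurable φ) {T : ℝ} (hT : 0 ≤ T)
    (hφT : ∀ p ∉ Metric.closedBall 0 T, φ p = 0)
    (happrox : ∀ ε > 0, ∃ χ : ℝ × ℝ → ℝ, Measurable χ ∧ (∀ p, |χ p| ≤ 1) ∧
      (∀ p ∉ Metric.closedBall 0 T, χ p = 0) ∧ (∀ p, |φ p - χ p| ≤ ε) ∧
      Tendsto (fun i => testedResidual g (h i) (gridFunction (U i) (h i) (R i)) χ) atTop (𝓝 0)) :
    Tendsto (fun i => testedResidual g (h i) (gridFunction (U i) (h i) (R i)) φ) atTop (𝓝 0) := by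
  have hC : 0 ≤ C := (norm_nonneg _).trans ((hU 0).norm_le 0 0)
  have hball : ∀ p : ℝ × ℝ, T < p.1 → p ∉ Metric.closedBall 0 T := fun p hp hpT =>
    hp.not_ge <| (le_abs_self _).trans ((norm_fst_le p).trans (mem_closedBall_zero_iff.1 hpT))
  refine tendsto_zero_iff_norm_tendsto_zero.2 (tendsto_order.2
    ⟨fun a ha => .of_forall fun i => ha.trans_le (norm_nonneg _), fun ε hε => ?_⟩)
  obtain ⟨χ, hχm, hχ, hχT, hφχ, hlim⟩ := happrox (ε / 2 / (T * C + 1)) (by positivity)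
  filter_upwards [(tendsto_order.1 hlim.norm).2 (ε / 2) (by simpa using hε)] with i hi
  have hsplit := (hU i).testedResidual_add (hh i) (R i) hT hχm (hφm.sub hχm) hχ hφχ
    (fun p hp => hχT p (hball p hp))
    fun p hp => by simp only [Pi.sub_apply, hφT p (hball p hp), hχT p (hball p hp), sub_zero]
  simp only [Pi.sub_apply, add_sub_cancel] at hsplit
  have hrest := (hU i).norm_testedResidual_le (hh i) (R i) hT (ψ := φ - χ) hφχ
    fun p hp => by simp only [Pi.sub_apply, hφT p (hball p hp), hχT p (hball p hp), sub_zero]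
  calc ‖testedResidual g (h i) (gridFunction (U i) (h i) (R i)) φ‖
      ≤ ‖testedResidual g (h i) (gridFunction (U i) (h i) (R i)) χ‖ +
        ‖testedResidual g (h i) (gridFunction (U i) (h i) (R i)) (φ - χ)‖ :=
        hsplit ▸ norm_add_le _ _
    _ < ε / 2 + ε / 2 := by
        refine add_lt_add_of_lt_of_le hi (hrest.trans ?_)
        rw [div_mul_eq_mul_div, div_le_iff₀ (by positivity)]
        gcongr
        exact le_add_of_nonneg_right zero_le_one
    _ = ε := add_halves ε

end Residual

/-- The mesh sizes. They decay fast enough for the `L²` bound of Glimm's scheme, which involves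
`ν` weights and about `ν * (mesh ν)⁻¹` time steps, to tend to zero. -/
def mesh (ν : ℕ) : ℝ := 1 / (ν + 1) ^ 4

lemma mesh_pos (ν : ℕ) : 0 < mesh ν := by
  unfold mesh
  positivity

lemma tendsto_mesh : Tendsto mesh atTop (𝓝 0) :=
  squeeze_zero (fun ν => (mesh_pos ν).le)
    (fun ν => one_div_le_one_div_of_le ν.cast_add_one_pos
      (le_self_pow₀ (le_add_of_nonneg_left ν.cast_nonneg) four_ne_zero))
    tendsto_one_div_add_atTop_nhds_zero_nat

lemma pow_mul_mesh (ν : ℕ) : (((ν + 1) ^ 5 : ℕ) : ℝ) * mesh ν = ν + 1 := by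
  unfold mesh
  push_cast
  field_simp

section Convergence

variable {E : Type*} [NormedAddCommGroup E] {g : E → E}

lemma tendsto_testedResidual_of_sq_le [NormedSpace ℝ E] [CompleteSpace E] {C : ℝ} (hC : 0 ≤ C)
    {U : ℕ → ℕ → ℕ → E} (hU : ∀ ν, IsGlimmSequence g C (U ν)) {χ : ℝ × ℝ → ℝ} (hχm : Measurable χ)
    (hχ : ∀ p, |χ p| ≤ 1) {T : ℝ} (hχT : ∀ p ∉ Metric.closedBall 0 T, χ p = 0)
    (hsq : ∀ᶠ ν in atTop, ‖∑ k ∈ Finset.range ((ν + 1) ^ 5),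
      ∑ j ∈ Finset.range (2 * (ν + 1) ^ 5),
        ((mesh ν)⁻¹ * ∫ p in gridCell (mesh ν) (ν + 1) (k, j), χ (p.1 + mesh ν, p.2)) •
          schemeError g (U ν k) (U ν (k + 1)) j‖ ^ 2 ≤
        ((ν + 1) ^ 5 : ℕ) * (ν * (C * mesh ν) ^ 2)) :
    Tendsto (fun ν : ℕ => testedResidual g (mesh ν) (gridFunction (U ν) (mesh ν) (ν + 1)) χ) atTop
      (𝓝 0) := by
  refine squeeze_zero_norm' ?_
    (by simpa only [one_div, mul_zero] using
      (tendsto_one_div_add_atTop_nhds_zero_nat (𝕜 := ℝ)).const_mul C)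
  filter_upwards [hsq, eventually_ge_atTop ⌈T⌉₊] with ν hν hTν
  have hTν' : T ≤ ν := Nat.ceil_le.1 hTν
  have hK := pow_mul_mesh ν
  rw [testedResidual_eq_sum (hU ν) (mesh_pos ν) _ hχm hχ hχT (K := (ν + 1) ^ 5)
    (N := 2 * (ν + 1) ^ 5) (by linarith) (by push_cast at hK ⊢; linarith [mesh_pos ν])]
  refine le_of_sq_le_sq (hν.trans ?_) (by positivity)
  calc (((ν + 1) ^ 5 : ℕ) : ℝ) * (ν * (C * mesh ν) ^ 2)
      = C ^ 2 * ((ν : ℝ) + 1)⁻¹ ^ 2 * (ν / (ν + 1)) := by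
        rw [mul_pow, sq (mesh ν), mul_left_comm _ (ν : ℝ), mul_left_comm _ (C ^ 2), ← mul_assoc _
          (mesh ν) (mesh ν), hK, mesh]
        field_simp
    _ ≤ (C * ((ν : ℝ) + 1)⁻¹) ^ 2 := by
        rw [mul_pow]
        exact mul_le_of_le_one_right (by positivity)
          (div_le_one_of_le₀ (le_add_of_nonneg_right zero_le_one) (by positivity))

theorem RiemannSolver.exists_isApproximateSolution [InnerProductSpace ℝ E] [CompleteSpace E]
    [SecondCountableTopology E] [MeasurableSpace E] [BorelSpace E] {n : ℕ} (R : RiemannSolver g n) :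
    ∃ δ > 0, ∃ C, ∀ ubar : ℝ → E, Integrable ubar →
      eVariationOn ubar univ ≤ ENNReal.ofReal δ → ∃ u, IsApproximateSolution g C mesh u ∧
        ∀ x, ContinuousAt ubar x → Tendsto (fun ν => u ν 0 x) atTop (𝓝 (ubar x)) := by
  obtain ⟨δ, hδ, C, hC, hscheme⟩ := R.exists_isGlimmSequence_weights
  obtain ⟨χ, hχm, hχ, hχd⟩ := exists_seq_test_functions (X := ℝ × ℝ)
  refine ⟨δ / 2, half_pos hδ, C, fun ubar hi hv => ?_⟩
  have hexists := fun ν : ℕ => hscheme (sampledData ubar (mesh ν) (ν + 1))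
    (sampledData_zero _ _ _) (fun N => (sum_norm_sampledData_sub_le hi (half_pos hδ).le hv
      (mesh_pos ν).le _ N).trans_eq (mul_div_cancel₀ δ two_ne_zero))
    (fun m k j => norm_setIntegral_gridCell_le (mesh_pos ν) (ν + 1) (k, j)
      (ψ := fun p => χ m (p.1 + mesh ν, p.2)) fun _ => hχ m _) ν (2 * (ν + 1) ^ 5)
  choose U hU₀ hU hsum using hexists
  refine ⟨fun ν => gridFunction (U ν) (mesh ν) (ν + 1), ⟨mesh_pos, tendsto_mesh,
    fun ν => measurable_uncurry_gridFunction _ _ _, fun ν t x => (hU ν).norm_le _ _,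
    fun ν => (hU ν).eVariationOn_gridFunction_le (mesh_pos ν) _,
    fun ν => (hU ν).lintegral_enorm_gridFunction_sub_le (mesh_pos ν) _,
    fun φ hφ hφs => tendsto_testedResidual_of_abs_le_one (fun φ hφ hφs hφ₁ => ?_) hφ hφs⟩,
    fun x hx => tendsto_gridFunction_sampledData hx mesh_pos tendsto_mesh
      (tendsto_atTop_add_const_right _ _ tendsto_natCast_atTop_atTop) hU₀⟩
  obtain ⟨T, hφT, happrox⟩ := hχd φ hφ hφs hφ₁
  refine tendsto_testedResidual_of_approximable hU mesh_pos _ hφ.measurable T.cast_nonneg hφT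
    fun ε hε => ?_
  obtain ⟨m, hφχ, hχT⟩ := happrox ε hε
  exact ⟨χ m, hχm m, hχ m, hχT, hφχ, tendsto_testedResidual_of_sq_le hC.le hU (hχm m) (hχ m) hχT
    ((eventually_gt_atTop m).mono fun ν hm => hsum ν _ m hm)⟩

end Convergence

/-! ### Passage to the limit -/

section TestFunctions

variable {X E : Type*} [NormedAddCommGroup X] [MeasurableSpace X] [BorelSpace X] {μ : Measure X}
  [IsFiniteMeasureOnCompacts μ] [NormedAddCommGroup E] [NormedSpace ℝ E]

lemma integrable_smul_of_hasCompactSupport {φ : X → ℝ} (hφ : Continuous φ)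
    (hφs : HasCompactSupport φ) {v : X → E} (hv : AEStronglyMeasurable v μ) {C : ℝ}
    (hvC : ∀ᵐ p ∂μ, ‖v p‖ ≤ C) : Integrable (fun p => φ p • v p) μ :=
  (hφ.integrable_of_hasCompactSupport hφs).smul_bdd C hv hvC

lemma integral_smul_translate_sub [μ.IsAddRightInvariant] {φ : X → ℝ} (hφ : Continuous φ)
    (hφs : HasCompactSupport φ) {v : X → E} (hv : StronglyMeasurable v) {C : ℝ}
    (hvC : ∀ p, ‖v p‖ ≤ C) (a b : X) :
    ∫ p, φ (p + a) • (v (p + b) - v p) ∂μ = -∫ p, (φ (p + a) - φ (p + (a - b))) • v p ∂μ := by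
  have hshift (c : X) : HasCompactSupport fun p => φ (p + c) :=
    hφs.comp_homeomorph (Homeomorph.addRight c)
  have hint (c : X) : Integrable (fun p => φ (p + c) • v p) μ :=
    integrable_smul_of_hasCompactSupport (by fun_prop) (hshift c) hv.aestronglyMeasurable
      (.of_forall hvC)
  have hintb : Integrable (fun p => φ (p + a) • v (p + b)) μ :=
    integrable_smul_of_hasCompactSupport (by fun_prop) (hshift a)
      (hv.comp_measurable (measurable_add_const b)).aestronglyMeasurable
      (.of_forall fun p => hvC (p + b))
  have htranslate : ∫ p, φ (p + a) • v (p + b) ∂μ = ∫ p, φ (p + (a - b)) • v p ∂μ := by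
    rw [← integral_add_right_eq_self (fun p => φ (p + (a - b)) • v p) b]
    simp only [add_assoc, add_sub_cancel]
  simp only [smul_sub, sub_smul]
  rw [integral_sub hintb (hint a), integral_sub (hint a) (hint (a - b)), htranslate, neg_sub]

end TestFunctions

section DifferenceQuotients

variable {X E : Type*} [NormedAddCommGroup X] [NormedSpace ℝ X] [NormedAddCommGroup E]
  [NormedSpace ℝ E]

/-- The difference quotient of `φ` at `p` with step `h` between the directions `b` and `a`; it
tends to the derivative of `φ` in the direction `a - b`. -/
def diffQuotient (φ : X → ℝ) (h : ℝ) (a b p : X) : ℝ := h⁻¹ * (φ (p + h • a) - φ (p + h • b))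

lemma tendsto_diffQuotient {φ : X → ℝ} {p : X} (hφ : DifferentiableAt ℝ φ p) (a b : X) :
    Tendsto (fun h => diffQuotient φ h a b p) (𝓝[>] 0) (𝓝 (fderiv ℝ φ p (a - b))) := by
  have hslope (v : X) := (hφ.hasFDerivAt.hasLineDerivAt v).tendsto_slope_zero_right
  rw [map_sub]
  refine ((hslope a).sub (hslope b)).congr fun h => ?_
  simp only [smul_eq_mul, diffQuotient]
  ring

lemma abs_diffQuotient_le {φ : X → ℝ} {L : NNReal} (hφ : LipschitzWith L φ) {h : ℝ} (hh : 0 < h)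
    (a b p : X) : |diffQuotient φ h a b p| ≤ L * ‖a - b‖ := by
  have hlip := hφ.norm_sub_le (p + h • a) (p + h • b)
  rw [add_sub_add_left_eq_sub, ← smul_sub, norm_smul, Real.norm_of_nonneg hh.le,
    Real.norm_eq_abs] at hlip
  rw [diffQuotient, abs_mul, abs_of_pos (inv_pos.2 hh), inv_mul_le_iff₀ hh]
  linarith

lemma diffQuotient_eq_zero {φ : X → ℝ} {T : ℝ} (hφ : ∀ p, T < ‖p‖ → φ p = 0) {h : ℝ}
    (hh : 0 < h) (hh₁ : h ≤ 1) {a b p : X} (hp : T + ‖a‖ + ‖b‖ < ‖p‖) :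
    diffQuotient φ h a b p = 0 := by
  have hzero (v : X) (hv : T + ‖v‖ < ‖p‖) : φ (p + h • v) = 0 := hφ _ <| by
    have htri : ‖p‖ ≤ ‖p + h • v‖ + ‖h • v‖ := norm_le_add_norm_add p (h • v)
    have hv' : ‖h • v‖ ≤ ‖v‖ := by
      rw [norm_smul, Real.norm_of_nonneg hh.le]
      exact mul_le_of_le_one_left (norm_nonneg v) hh₁
    linarith
  rw [diffQuotient, hzero a (by linarith [norm_nonneg b]), hzero b (by linarith [norm_nonneg a]),
    sub_zero, mul_zero]

lemma tendsto_integral_diffQuotient_smul [ProperSpace X] [MeasurableSpace X] [BorelSpace X]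
    {μ : Measure X} [IsFiniteMeasureOnCompacts μ] {φ : X → ℝ} (hφ : ContDiff ℝ 1 φ)
    (hφs : HasCompactSupport φ) {h : ℕ → ℝ} (hh₀ : ∀ k, 0 < h k) (hh : Tendsto h atTop (𝓝 0))
    (a b : X) {v : ℕ → X → E} (hv : ∀ k, AEStronglyMeasurable (v k) μ) {C : ℝ}
    (hvC : ∀ k p, ‖v k p‖ ≤ C) {w : X → E} (hw : ∀ᵐ p ∂μ, Tendsto (v · p) atTop (𝓝 (w p))) :
    Tendsto (fun k => ∫ p, diffQuotient φ (h k) a b p • v k p ∂μ) atTop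
      (𝓝 (∫ p, fderiv ℝ φ p (a - b) • w p ∂μ)) := by
  obtain ⟨L, hL⟩ := ContDiff.lipschitzWith_of_hasCompactSupport hφs hφ one_ne_zero
  obtain ⟨T, hT⟩ := hφs.isCompact.isBounded.subset_closedBall (0 : X)
  have hφT (p : X) (hp : T < ‖p‖) : φ p = 0 :=
    image_eq_zero_of_notMem_tsupport fun hmem => hp.not_ge (by simpa using hT hmem)
  have hcont (k : ℕ) : Continuous (diffQuotient φ (h k) a b) := by
    have := hφ.continuous
    unfold diffQuotient
    fun_prop
  refine tendsto_integral_filter_of_dominated_convergence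
    ((Metric.closedBall 0 (T + ‖a‖ + ‖b‖)).indicator fun _ => L * ‖a - b‖ * C)
    (.of_forall fun k => (hcont k).aestronglyMeasurable.smul (hv k)) ?_ ?_ ?_
  · filter_upwards [hh.eventually_le_const zero_lt_one] with k hk
    refine .of_forall fun p => ?_
    by_cases hp : p ∈ Metric.closedBall 0 (T + ‖a‖ + ‖b‖)
    · rw [indicator_of_mem hp, norm_smul]
      exact mul_le_mul (abs_diffQuotient_le hL (hh₀ k) a b p) (hvC k p) (norm_nonneg _)
        (by positivity)
    · rw [indicator_of_notMem hp, diffQuotient_eq_zero hφT (hh₀ k) hk (by simpa using hp),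
        zero_smul, norm_zero]
  · exact (integrable_indicator_iff measurableSet_closedBall).2
      (integrableOn_const measure_closedBall_lt_top.ne)
  · filter_upwards [hw] with p hp
    exact ((tendsto_diffQuotient (hφ.differentiable one_ne_zero p) a b).comp
      (tendsto_nhdsWithin_iff.2 ⟨hh, .of_forall hh₀⟩)).smul hp

end DifferenceQuotients

section SummationByParts

variable {E : Type*} [NormedAddCommGroup E] [NormedSpace ℝ E]

lemma testedResidual_eq_neg_integral_diffQuotient {g : E → E} {h : ℝ} {u : ℝ → ℝ → E}
    (hu : StronglyMeasurable (Function.uncurry u)) {C : ℝ} (huC : ∀ t x, ‖u t x‖ ≤ C)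
    (hg : Continuous g) {G : ℝ} (hG : ∀ t x, ‖g (u t x)‖ ≤ G) {φ : ℝ × ℝ → ℝ} (hφ : Continuous φ)
    (hφs : HasCompactSupport φ) (hφh : ∀ p : ℝ × ℝ, p.1 < h → φ p = 0) :
    testedResidual g h u φ = -((∫ p : ℝ × ℝ, diffQuotient φ h (1, 0) 0 p • u p.1 p.2) +
      ∫ p : ℝ × ℝ, diffQuotient φ h (1, 1) (1, 0) p • g (u p.1 p.2)) := by
  have hshift (a : ℝ × ℝ) : HasCompactSupport fun p => φ (p + a) :=
    hφs.comp_homeomorph (Homeomorph.addRight a)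
  have hgu : StronglyMeasurable fun p : ℝ × ℝ => g (u p.1 p.2) := hg.comp_stronglyMeasurable hu
  have hint {v : ℝ × ℝ → E} (hv : StronglyMeasurable v) {C : ℝ} (hvC : ∀ p, ‖v p‖ ≤ C)
      (b : ℝ × ℝ) : Integrable fun p => φ (p + (h, 0)) • (v (p + b) - v p) :=
    integrable_smul_of_hasCompactSupport (C := C + C) (by fun_prop) (hshift _)
      ((hv.comp_measurable (measurable_add_const b)).sub hv).aestronglyMeasurable
      (.of_forall fun p => norm_sub_le_of_le (hvC _) (hvC _))
  have hresidual (p : ℝ × ℝ) : residual g h u p =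
      (Function.uncurry u (p + (h, 0)) - Function.uncurry u p) -
        (g (u (p + (0, -h)).1 (p + (0, -h)).2) - g (u p.1 p.2)) := by
    simp only [residual, Function.uncurry, Prod.fst_add, Prod.snd_add, add_zero, ← sub_eq_add_neg]
    abel
  calc testedResidual g h u φ
      = h⁻¹ • ∫ p : ℝ × ℝ, φ (p + (h, 0)) • residual g h u p := by
        rw [testedResidual, setIntegral_eq_integral_of_forall_compl_eq_zero]
        · simp only [Prod.add_def, add_zero]
        · intro p hp
          rw [hφh _ (add_lt_of_neg_left h (by simpa using hp)), zero_smul]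
    _ = h⁻¹ • (-(∫ p : ℝ × ℝ, (φ (p + (h, 0)) - φ p) • u p.1 p.2) +
          ∫ p : ℝ × ℝ, (φ (p + (h, 0)) - φ (p + (h, h))) • g (u p.1 p.2)) := by
        simp only [hresidual, smul_sub (φ _) (_ - _) (_ - _)]
        rw [integral_sub (hint hu (fun p => huC p.1 p.2) _) (hint hgu (fun p => hG p.1 p.2) _),
          integral_smul_translate_sub hφ hφs hu (fun p => huC p.1 p.2),
          integral_smul_translate_sub hφ hφs hgu (fun p => hG p.1 p.2), sub_neg_eq_add]
        simp [Function.uncurry_def]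
    _ = -((∫ p : ℝ × ℝ, diffQuotient φ h (1, 0) 0 p • u p.1 p.2) +
          ∫ p : ℝ × ℝ, diffQuotient φ h (1, 1) (1, 0) p • g (u p.1 p.2)) := by
        simp only [diffQuotient, mul_smul, integral_smul, Prod.smul_mk, smul_zero, smul_eq_mul,
          mul_one, mul_zero, add_zero, ← smul_add]
        rw [← smul_neg, neg_add, ← integral_neg (fun p => (φ (p + (h, h)) - _) • g (u p.1 p.2))]
        simp only [← neg_smul, neg_sub]

end SummationByParts

lemma ae_prod_tendsto_of_ae_ae {α β E : Type*} [MeasurableSpace α] [MeasurableSpace β]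
    {μ : Measure α} {ν : Measure β} [SFinite ν] [NormedAddCommGroup E] [SecondCountableTopology E]
    [MeasurableSpace E] [BorelSpace E] {u : ℕ → α → β → E}
    (hu : ∀ k, Measurable (Function.uncurry (u k))) {w : α → β → E}
    (hw : Measurable (Function.uncurry w))
    (huw : ∀ a, ∀ᵐ b ∂ν, Tendsto (fun k => u k a b) atTop (𝓝 (w a b))) :
    ∀ᵐ p ∂μ.prod ν, Tendsto (fun k => u k p.1 p.2) atTop (𝓝 (w p.1 p.2)) := by
  have hmeas : MeasurableSet {p : α × β | Tendsto (fun k => ‖u k p.1 p.2 - w p.1 p.2‖) atTop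
      (𝓝 0)} := measurableSet_tendsto _ fun k => ((hu k).sub hw).norm
  have hae := (Measure.ae_prod_mem_iff_ae_ae_mem (μ := μ) (ν := ν) hmeas).2 <| .of_forall fun a =>
    (huw a).mono fun b => tendsto_iff_norm_sub_tendsto_zero.1
  exact hae.mono fun p => tendsto_iff_norm_sub_tendsto_zero.2

section

variable {E : Type*} [NormedAddCommGroup E] [NormedSpace ℝ E] [MeasurableSpace E]

/-- A weak solution of `w_t + g(w)_x = 0` that is Lipschitz continuous in time with values in `L¹`.
The weak equation is stated with total derivatives of the test functions, a form which is adapted to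
linear changes of variables. -/
structure IsLipschitzSolution (g : E → E) (C : ℝ) (w : ℝ → ℝ → E) : Prop where
  measurable : Measurable (Function.uncurry w)
  integrable : ∀ t, Integrable (w t)
  lintegral_enorm_sub_le : ∀ s t, ∫⁻ x, ‖w t x - w s x‖ₑ ≤ ENNReal.ofReal (C * |t - s|)
  weak_eq : ∀ φ : ℝ × ℝ → ℝ, ContDiff ℝ 1 φ → HasCompactSupport φ →
    tsupport φ ⊆ Ioi (0 : ℝ) ×ˢ univ →
      ∫ p : ℝ × ℝ, (fderiv ℝ φ p (1, 0) • w p.1 p.2 + fderiv ℝ φ p (0, 1) • g (w p.1 p.2)) = 0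

namespace IsApproximateSolution

variable {g : E → E} {C : ℝ} {h : ℕ → ℝ} {u : ℕ → ℝ → ℝ → E}

lemma comp_strictMono (hu : IsApproximateSolution g C h u) {σ : ℕ → ℕ} (hσ : StrictMono σ) :
    IsApproximateSolution g C (h ∘ σ) (u ∘ σ) where
  mesh_pos i := hu.mesh_pos (σ i)
  tendsto_mesh := hu.tendsto_mesh.comp hσ.tendsto_atTop
  measurable i := hu.measurable (σ i)
  norm_le i := hu.norm_le (σ i)
  eVariationOn_le i := hu.eVariationOn_le (σ i)
  lintegral_enorm_sub_le i := hu.lintegral_enorm_sub_le (σ i)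
  tendsto_testedResidual φ hφ hφs :=
    (hu.tendsto_testedResidual φ hφ hφs).comp hσ.tendsto_atTop

variable [BorelSpace E]

lemma exists_subseq_ae_tendsto_of_initial [ProperSpace E] (hu : IsApproximateSolution g C h u)
    {ubar : ℝ → E} (hm : Measurable ubar)
    (hubar : ∀ᵐ x, Tendsto (fun k => u k 0 x) atTop (𝓝 (ubar x))) :
    ∃ σ : ℕ → ℕ, StrictMono σ ∧ ∃ w : ℝ → ℝ → E, w 0 = ubar ∧ Measurable (Function.uncurry w) ∧
      ∀ t, ∀ᵐ x, Tendsto (fun k => u (σ k) t x) atTop (𝓝 (w t x)) := by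
  obtain ⟨σ, hσ, w, hw, huw⟩ := exists_subseq_ae_tendsto ((norm_nonneg _).trans (hu.norm_le 0 0 0))
    hu.measurable hu.norm_le hu.eVariationOn_le hu.tendsto_mesh hu.lintegral_enorm_sub_le
  refine ⟨σ, hσ, Function.update w 0 ubar, Function.update_self .., ?_, fun t => ?_⟩
  · have hite : Function.uncurry (Function.update w 0 ubar) =
        fun p : ℝ × ℝ => if p.1 = 0 then ubar p.2 else Function.uncurry w p := by
      ext ⟨t, x⟩
      by_cases ht : t = 0 <;> simp [ht]
    rw [hite]
    exact .ite (measurable_fst (measurableSet_singleton 0)) (hm.comp measurable_snd) hw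
  · obtain rfl | ht := eq_or_ne t 0
    · filter_upwards [hubar] with x hx
      simpa [Function.comp_def] using hx.comp hσ.tendsto_atTop
    · simpa [ht] using huw t

section

variable [SecondCountableTopology E] {w : ℝ → ℝ → E}

lemma lintegral_enorm_limit_sub_le (hu : IsApproximateSolution g C h u)
    (huw : ∀ t, ∀ᵐ x, Tendsto (fun k => u k t x) atTop (𝓝 (w t x))) (s t : ℝ) :
    ∫⁻ x, ‖w t x - w s x‖ₑ ≤ ENNReal.ofReal (C * |t - s|) := by
  have hmeas (k : ℕ) (t : ℝ) : Measurable (u k t) := (hu.measurable k).comp measurable_prodMk_left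
  have hbound : Tendsto (fun k => ENNReal.ofReal (C * (|t - s| + h k))) atTop
      (𝓝 (ENNReal.ofReal (C * |t - s|))) := by
    simpa using ENNReal.tendsto_ofReal ((hu.tendsto_mesh.const_add |t - s|).const_mul C)
  calc ∫⁻ x, ‖w t x - w s x‖ₑ
      = ∫⁻ x, liminf (fun k => ‖u k t x - u k s x‖ₑ) atTop := lintegral_congr_ae <| by
        filter_upwards [huw t, huw s] with x ht hs using (ht.sub hs).enorm.liminf_eq.symm
    _ ≤ liminf (fun k => ∫⁻ x, ‖u k t x - u k s x‖ₑ) atTop :=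
        lintegral_liminf_le fun k => ((hmeas k t).sub (hmeas k s)).enorm
    _ ≤ liminf (fun k => ENNReal.ofReal (C * (|t - s| + h k))) atTop :=
        liminf_le_liminf (.of_forall fun k => hu.lintegral_enorm_sub_le k s t)
    _ = ENNReal.ofReal (C * |t - s|) := hbound.liminf_eq

lemma weak_eq_limit (hu : IsApproximateSolution g C h u) (hg : Continuous g) {G : ℝ}
    (hG : ∀ i t x, ‖g (u i t x)‖ ≤ G)
    (huw : ∀ᵐ p : ℝ × ℝ, Tendsto (fun k => u k p.1 p.2) atTop (𝓝 (w p.1 p.2)))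
    {φ : ℝ × ℝ → ℝ} (hφ : ContDiff ℝ 1 φ) (hφs : HasCompactSupport φ)
    (hφ₀ : tsupport φ ⊆ Ioi (0 : ℝ) ×ˢ univ) :
    (∫ p : ℝ × ℝ, fderiv ℝ φ p (1, 0) • w p.1 p.2) +
      ∫ p : ℝ × ℝ, fderiv ℝ φ p (0, 1) • g (w p.1 p.2) = 0 := by
  have hum (k : ℕ) : StronglyMeasurable (Function.uncurry (u k)) :=
    (hu.measurable k).stronglyMeasurable
  have hgum (k : ℕ) : StronglyMeasurable fun p : ℝ × ℝ => g (u k p.1 p.2) :=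
    hg.comp_stronglyMeasurable (hum k)
  have hlim := ((tendsto_integral_diffQuotient_smul hφ hφs hu.mesh_pos hu.tendsto_mesh (1, 0) 0
    (fun k => (hum k).aestronglyMeasurable) (fun k p => hu.norm_le k p.1 p.2) huw).add
    (tendsto_integral_diffQuotient_smul hφ hφs hu.mesh_pos hu.tendsto_mesh (1, 1) (1, 0)
      (fun k => (hgum k).aestronglyMeasurable) (fun k p => hG k p.1 p.2)
      (huw.mono fun p hp => (hg.tendsto _).comp hp))).neg
  obtain ⟨t₀, ht₀, hφt₀⟩ := hφs.isCompact.exists_forall_le' (f := Prod.fst)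
    continuous_fst.continuousOn fun p hp => (hφ₀ hp).1
  have hres : Tendsto (fun k => testedResidual g (h k) (u k) φ) atTop (𝓝 0) :=
    hu.tendsto_testedResidual φ hφ.continuous hφs
  have hzero := tendsto_nhds_unique (hres.congr' ?_) hlim
  · simpa using neg_eq_zero.1 hzero.symm
  · filter_upwards [hu.tendsto_mesh.eventually_lt_const ht₀] with k hk
    exact testedResidual_eq_neg_integral_diffQuotient (hum k) (hu.norm_le k) hg (hG k)
      hφ.continuous hφs fun p hp => image_eq_zero_of_notMem_tsupport fun hmem =>
        ((hφt₀ p hmem).trans_lt (hp.trans hk)).false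

end

theorem isLipschitzSolution_of_tendsto [ProperSpace E] {w : ℝ → ℝ → E}
    (hu : IsApproximateSolution g C h u) (hg : Continuous g) (hw : Measurable (Function.uncurry w))
    (hw₀ : Integrable (w 0)) (huw : ∀ t, ∀ᵐ x, Tendsto (fun k => u k t x) atTop (𝓝 (w t x))) :
    IsLipschitzSolution g C w := by
  have hwt (t : ℝ) : Measurable (w t) := hw.comp measurable_prodMk_left
  have huw' := ae_prod_tendsto_of_ae_ae (μ := volume) hu.measurable hw huw
  obtain ⟨G, hG⟩ := (isCompact_closedBall (0 : E) C).exists_bound_of_continuousOn hg.continuousOn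
  refine ⟨hw, fun t => ?_, hu.lintegral_enorm_limit_sub_le huw, fun φ hφ hφs hφ₀ => ?_⟩
  · have hdiff : Integrable fun x => w t x - w 0 x :=
      ⟨((hwt t).sub (hwt 0)).aestronglyMeasurable,
        (hu.lintegral_enorm_limit_sub_le huw 0 t).trans_lt ENNReal.ofReal_lt_top⟩
    simpa [Pi.add_def] using hdiff.add hw₀
  · have hGu (i : ℕ) (t x : ℝ) : ‖g (u i t x)‖ ≤ G := hG _ (by simpa using hu.norm_le i t x)
    have hint (e : ℝ × ℝ) {v : ℝ × ℝ → E} (hv : Measurable v) {B : ℝ} (hvB : ∀ᵐ p, ‖v p‖ ≤ B) :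
        Integrable fun p => fderiv ℝ φ p e • v p :=
      integrable_smul_of_hasCompactSupport
        ((hφ.continuous_fderiv one_ne_zero).clm_apply continuous_const) (hφs.fderiv_apply ℝ e)
        hv.aestronglyMeasurable hvB
    have hwC : ∀ᵐ p : ℝ × ℝ, ‖w p.1 p.2‖ ≤ C := huw'.mono fun p hp =>
      le_of_tendsto' hp.norm fun k => hu.norm_le k p.1 p.2
    have hgwG : ∀ᵐ p : ℝ × ℝ, ‖g (w p.1 p.2)‖ ≤ G := hwC.mono fun p hp => hG _ (by simpa using hp)
    exact (integral_add (hint _ hw hwC) (hint _ (hg.measurable.comp hw) hgwG)).trans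
      (hu.weak_eq_limit hg hGu huw' hφ hφs hφ₀)

end IsApproximateSolution

end

theorem RiemannSolver.exists_isLipschitzSolution {E : Type*} [NormedAddCommGroup E]
    [InnerProductSpace ℝ E] [ProperSpace E] [MeasurableSpace E] [BorelSpace E] {g : E → E} {n : ℕ}
    (R : RiemannSolver g n) (hg : Continuous g) :
    ∃ δ > 0, ∃ C, ∀ ubar : ℝ → E, Integrable ubar → eVariationOn ubar univ ≤ ENNReal.ofReal δ →
      ∃ w, w 0 = ubar ∧ IsLipschitzSolution g C w := by
  obtain ⟨δ, hδ, C, happrox⟩ := R.exists_isApproximateSolution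
  refine ⟨δ, hδ, C, fun ubar hi hv => ?_⟩
  have hcount := countable_not_continuousAt_of_boundedVariationOn
    (ne_top_of_le_ne_top ENNReal.ofReal_ne_top hv)
  obtain ⟨u, hu, hu₀⟩ := happrox ubar hi hv
  obtain ⟨σ, hσ, w, rfl, hw, huw⟩ := hu.exists_subseq_ae_tendsto_of_initial
    (measurable_of_countable_not_continuousAt hcount)
    ((hcount.ae_notMem volume).mono fun x hx => hu₀ x (by simpa using hx))
  exact ⟨w, rfl, (hu.comp_strictMono hσ).isLipschitzSolution_of_tendsto hg hw hi huw⟩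

/-! ### Normalization of the characteristic speeds -/

lemma tendsto_integral_norm_translate_sub {E : Type*} [NormedAddCommGroup E] {F : ℝ → E}
    (hF : Integrable F) (a : ℝ) :
    Tendsto (fun b => ∫ x, ‖F (x + b) - F (x + a)‖) (𝓝 a) (𝓝 0) := by
  have : Fact ((1 : ENNReal) ≠ ⊤) := ⟨ENNReal.one_ne_top⟩
  have hact : Continuous fun b : ℝ =>
      DomAddAct.mk b +ᵥ (memLp_one_iff_integrable.2 hF).toLp F :=
    DomAddAct.continuous_mk.vadd continuous_const
  refine (tendsto_iff_norm_sub_tendsto_zero.1 (hact.tendsto a)).congr fun b => ?_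
  rw [DomAddAct.mk_vadd_toLp, DomAddAct.mk_vadd_toLp, ← MemLp.toLp_sub]
  simp_rw [add_comm _ b, add_comm _ a]
  exact L1.norm_of_fun_eq_integral_norm (f := fun x => F (b + x) - F (a + x))
    ((hF.comp_add_left b).sub (hF.comp_add_left a))

lemma integral_comp_continuousLinearEquiv_eq_zero {V E : Type*} [NormedAddCommGroup V]
    [NormedSpace ℝ V] [FiniteDimensional ℝ V] [MeasurableSpace V] [BorelSpace V] {μ : Measure V}
    [μ.IsAddHaarMeasure] [NormedAddCommGroup E] [NormedSpace ℝ E] (e : V ≃L[ℝ] V) {F : V → E}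
    (hF : ∫ p, F p ∂μ = 0) : ∫ p, F (e p) ∂μ = 0 := by
  have hchange := integral_image_eq_integral_abs_det_fderiv_smul μ MeasurableSet.univ
    (fun p _ => e.hasFDerivAt.hasFDerivWithinAt) e.injective.injOn F
  rw [image_univ, e.surjective.range_eq, Measure.restrict_univ, hF, integral_smul] at hchange
  exact (smul_eq_zero.1 hchange.symm).resolve_left
    (abs_ne_zero.2 e.toLinearEquiv.isUnit_det'.ne_zero)

lemma ptime_eq_fderiv {φ : ℝ × ℝ → ℝ} {p : ℝ × ℝ} (hφ : DifferentiableAt ℝ φ p) :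
    ptime φ p = fderiv ℝ φ p (1, 0) :=
  (hφ.hasFDerivAt.comp_hasDerivAt_of_eq p.1
    ((hasDerivAt_id p.1).prodMk (hasDerivAt_const p.1 p.2)) rfl).deriv

lemma pspace_eq_fderiv {φ : ℝ × ℝ → ℝ} {p : ℝ × ℝ} (hφ : DifferentiableAt ℝ φ p) :
    pspace φ p = fderiv ℝ φ p (0, 1) :=
  (hφ.hasFDerivAt.comp_hasDerivAt_of_eq p.2
    ((hasDerivAt_const p.2 p.1).prodMk (hasDerivAt_id p.2)) rfl).deriv

section Normalization

variable {E : Type*} [NormedAddCommGroup E] [NormedSpace ℝ E] {f : E → E} {c C : ℝ}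
  {w : ℝ → ℝ → E}

/-- The flux of the system satisfied by `w` when `u(t, x) = w(2ct, x + ct)` solves
`u_t + f(u)_x = 0`. If the speeds of `f` lie in `(-c, c)`, those of this flux lie in `(0, 1)`. -/
def normalizedFlux (f : E → E) (c : ℝ) (v : E) : E := (2 * c)⁻¹ • (f v + c • v)

lemma two_mul_smul_normalizedFlux (hc : c ≠ 0) (v : E) :
    (2 * c) • normalizedFlux f c v = f v + c • v :=
  smul_inv_smul₀ (mul_ne_zero two_ne_zero hc) _

lemma contDiff_normalizedFlux {k : WithTop ℕ∞} (hf : ContDiff ℝ k f) (c : ℝ) :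
    ContDiff ℝ k (normalizedFlux f c) :=
  (hf.add (contDiff_id.const_smul c)).const_smul _

lemma fderiv_normalizedFlux_apply_of_eigenvector {v r : E} {l : ℝ} (hf : DifferentiableAt ℝ f v)
    (heig : fderiv ℝ f v r = l • r) (c : ℝ) :
    fderiv ℝ (normalizedFlux f c) v r = ((2 * c)⁻¹ * (l + c)) • r := by
  have hd : HasFDerivAt (normalizedFlux f c) _ v :=
    (hf.hasFDerivAt.add ((hasFDerivAt_id v).const_smul c)).const_smul (2 * c)⁻¹
  simp [hd.fderiv, heig, mul_smul, add_smul]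

/-- The linear change of variables `(t, x) ↦ (2ct, x + ct)`, which maps `|x| < ct` onto
`0 < x < t`. -/
def movingFrame (c : ℝ) (hc : c ≠ 0) : (ℝ × ℝ) ≃L[ℝ] (ℝ × ℝ) :=
  LinearEquiv.toContinuousLinearEquiv
    { toFun := fun p => (2 * c * p.1, p.2 + c * p.1)
      invFun := fun p => (p.1 / (2 * c), p.2 - p.1 / 2)
      map_add' := fun p q => by ext <;> simp <;> ring
      map_smul' := fun a p => by ext <;> simp <;> ring
      left_inv := fun p => by ext <;> simp <;> field_simp; ring
      right_inv := fun p => by ext <;> simp <;> field_simp; ring }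

@[simp]
lemma movingFrame_apply (hc : c ≠ 0) (p : ℝ × ℝ) :
    movingFrame c hc p = (2 * c * p.1, p.2 + c * p.1) := rfl

lemma fderiv_comp_movingFrame (hc : c ≠ 0) (ψ : ℝ × ℝ → ℝ) (p : ℝ × ℝ) (v : E) :
    fderiv ℝ (ψ ∘ movingFrame c hc) p (1, 0) • v + fderiv ℝ (ψ ∘ movingFrame c hc) p (0, 1) • f v =
      (2 * c) • (fderiv ℝ ψ (movingFrame c hc p) (1, 0) • v +
        fderiv ℝ ψ (movingFrame c hc p) (0, 1) • normalizedFlux f c v) := by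
  have hdecomp : movingFrame c hc (1, 0) = (2 * c) • (1, 0) + c • (0, 1) := by simp
  have hspace : movingFrame c hc (0, 1) = (0, 1) := by simp
  simp only [ContinuousLinearEquiv.comp_right_fderiv, ContinuousLinearMap.comp_apply,
    ContinuousLinearEquiv.coe_coe, hdecomp, hspace, map_add, map_smul, smul_add (2 * c),
    smul_comm (2 * c), two_mul_smul_normalizedFlux hc]
  module

namespace IsLipschitzSolution

variable [MeasurableSpace E]

lemma integral_norm_sub_le {g : E → E} (hw : IsLipschitzSolution g C w) (s t : ℝ) :
    ∫ x, ‖w t x - w s x‖ ≤ |C| * |t - s| := by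
  have hdiff : Integrable fun x => w t x - w s x := (hw.integrable t).sub (hw.integrable s)
  rw [integral_norm_eq_lintegral_enorm hdiff.aestronglyMeasurable]
  refine ENNReal.toReal_le_of_le_ofReal (by positivity) ((hw.lintegral_enorm_sub_le s t).trans ?_)
  gcongr
  exact le_abs_self C

lemma tendsto_integral_norm_translate_sub {g : E → E} (hw : IsLipschitzSolution g C w) {a b : ℝ → ℝ}
    (ha : Continuous a) (hb : Continuous b) (t : ℝ) :
    Tendsto (fun s => ∫ x, ‖w (a s) (x + b s) - w (a t) (x + b t)‖) (𝓝 t) (𝓝 0) := by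
  have hint (s s' : ℝ) : Integrable fun x => w s (x + s') := (hw.integrable s).comp_add_right s'
  have hdiff (s₁ s₂ b₁ b₂ : ℝ) : Integrable fun x => ‖w s₁ (x + b₁) - w s₂ (x + b₂)‖ :=
    ((hint s₁ b₁).sub (hint s₂ b₂)).norm
  have hshift := (Glimm.tendsto_integral_norm_translate_sub (hw.integrable (a t)) (b t)).comp
    (hb.tendsto t)
  have htime : Tendsto (fun s => |C| * |a s - a t|) (𝓝 t) (𝓝 0) := by
    have hcont : Continuous fun s => |C| * |a s - a t| := by fun_prop
    simpa using hcont.tendsto t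
  refine squeeze_zero (fun s => integral_nonneg fun x => norm_nonneg _) (fun s => ?_)
    (by simpa using htime.add hshift)
  calc ∫ x, ‖w (a s) (x + b s) - w (a t) (x + b t)‖
      ≤ ∫ x, (‖w (a s) (x + b s) - w (a t) (x + b s)‖ +
          ‖w (a t) (x + b s) - w (a t) (x + b t)‖) :=
        integral_mono (hdiff _ _ _ _) ((hdiff _ _ _ _).add (hdiff _ _ _ _)) fun x =>
          norm_sub_le_norm_sub_add_norm_sub _ _ _
    _ = (∫ x, ‖w (a s) x - w (a t) x‖) + ∫ x, ‖w (a t) (x + b s) - w (a t) (x + b t)‖ := by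
        rw [integral_add (hdiff _ _ _ _) (hdiff _ _ _ _),
          integral_add_right_eq_self (fun x => ‖w (a s) x - w (a t) x‖)]
    _ ≤ |C| * |a s - a t| + ∫ x, ‖w (a t) (x + b s) - w (a t) (x + b t)‖ := by
        gcongr
        exact hw.integral_norm_sub_le _ _

lemma weak_eq_movingFrame (hw : IsLipschitzSolution (normalizedFlux f c) C w) (hc : 0 < c)
    {φ : ℝ × ℝ → ℝ} (hφ : ContDiff ℝ 1 φ) (hφs : HasCompactSupport φ)
    (hφ₀ : tsupport φ ⊆ Ioi (0 : ℝ) ×ˢ univ) :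
    ∫ p : ℝ × ℝ, (ptime φ p • w (2 * c * p.1) (p.2 + c * p.1) +
      pspace φ p • f (w (2 * c * p.1) (p.2 + c * p.1))) = 0 := by
  set e := movingFrame c hc.ne' with he
  obtain ⟨ψ, rfl⟩ : ∃ ψ, φ = ψ ∘ e := ⟨φ ∘ e.symm, by simp [Function.comp_assoc]⟩
  have hψ : ContDiff ℝ 1 ψ := e.contDiff_comp_iff.1 hφ
  have hsupp : tsupport (ψ ∘ e) = e ⁻¹' tsupport ψ :=
    tsupport_comp_eq_preimage ψ e.toHomeomorph
  have hψs : HasCompactSupport ψ := by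
    simpa [Function.comp_assoc] using hφs.comp_homeomorph e.symm.toHomeomorph
  have hψ₀ : tsupport ψ ⊆ Ioi (0 : ℝ) ×ˢ univ := by
    rintro p hp
    obtain ⟨q, rfl⟩ := e.surjective p
    have hq : 0 < q.1 := (hφ₀ (hsupp.ge hp)).1
    exact ⟨by simpa [he] using mul_pos (mul_pos two_pos hc) hq, trivial⟩
  have hzero := integral_comp_continuousLinearEquiv_eq_zero e (hw.weak_eq ψ hψ hψs hψ₀)
  have hd : Differentiable ℝ (ψ ∘ e) := hφ.differentiable one_ne_zero
  simp_rw [ptime_eq_fderiv (hd _), pspace_eq_fderiv (hd _), he, fderiv_comp_movingFrame]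
  rw [integral_smul]
  exact smul_eq_zero_of_right _ hzero

end IsLipschitzSolution

end Normalization

theorem IsLipschitzSolution.isWeakSolution {n : ℕ}
    {f : EuclideanSpace ℝ (Fin n) → EuclideanSpace ℝ (Fin n)} {c C : ℝ}
    {w : ℝ → ℝ → EuclideanSpace ℝ (Fin n)} (hc : 0 < c)
    (hw : IsLipschitzSolution (normalizedFlux f c) C w) :
    IsWeakSolution f fun t x => w (2 * c * t) (x + c * t) :=
  ⟨hw.measurable.comp (movingFrame c hc.ne').continuous.measurable,
    fun _ _ => (hw.integrable _).comp_add_right _,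
    fun t _ => (hw.tendsto_integral_norm_translate_sub (by fun_prop) (by fun_prop) t).mono_left
      nhdsWithin_le_nhds,
    fun _ => hw.weak_eq_movingFrame hc⟩

end Glimm

theorem glimm_global_existence_general {n : ℕ}
    (f : EuclideanSpace ℝ (Fin n) → EuclideanSpace ℝ (Fin n)) (hf : ContDiff ℝ 2 f)
    {lam : Fin n → ℝ} {r : Fin n → EuclideanSpace ℝ (Fin n)} (hr : ∀ i, r i ≠ 0)
    (hlam : StrictMono lam) (heig : ∀ i, fderiv ℝ f 0 (r i) = lam i • r i) :
    ∃ δ > (0 : ℝ), ∀ ubar : ℝ → EuclideanSpace ℝ (Fin n),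
      Integrable ubar →
      eVariationOn ubar Set.univ ≤ ENNReal.ofReal δ →
      ∃ u : ℝ → ℝ → EuclideanSpace ℝ (Fin n), u 0 = ubar ∧ IsWeakSolution f u := by
  set c : ℝ := ∑ i, |lam i| + 1
  have hlamc (i : Fin n) : |lam i| < c :=
    (Finset.single_le_sum (fun i _ => abs_nonneg (lam i)) (Finset.mem_univ i)).trans_lt
      (lt_add_one _)
  have hc : 0 < c := by positivity
  have hspeed (i : Fin n) : (2 * c)⁻¹ * (lam i + c) ∈ Ioo 0 1 := by
    have := abs_lt.1 (hlamc i)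
    exact ⟨mul_pos (by positivity) (by linarith), by
      rw [inv_mul_lt_iff₀ (by positivity)]; linarith⟩
  have hg : ContDiff ℝ 2 (Glimm.normalizedFlux f c) := Glimm.contDiff_normalizedFlux hf c
  obtain ⟨R⟩ := Glimm.nonempty_riemannSolver hg finrank_euclideanSpace_fin hr
    (fun i j hij => by have := hlam hij; gcongr) hspeed fun i =>
      Glimm.fderiv_normalizedFlux_apply_of_eigenvector (hf.differentiable two_ne_zero 0) (heig i) c
  obtain ⟨δ, hδ, C, hsolve⟩ := R.exists_isLipschitzSolution hg.continuous
  refine ⟨δ, hδ, fun ubar hi hv => ?_⟩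
  obtain ⟨w, rfl, hw⟩ := hsolve ubar hi hv
  exact ⟨_, by simp, hw.isWeakSolution hc⟩

/-- **Glimm's global existence theorem.**
Let `u_t + f(u)_x = 0` be strictly hyperbolic (eigenvalues `λ₁(u) < ⋯ < λₙ(u)` with
eigenvectors `rᵢ(u) ≠ 0`), with each characteristic field either genuinely nonlinear
(`∇λᵢ·rᵢ > 0` everywhere) or linearly degenerate (`∇λᵢ·rᵢ = 0` everywhere).  Then
there is `δ > 0` such that for every initial datum `ū ∈ L¹(ℝ;ℝⁿ)` of bounded
variation with `Tot.Var.{ū} ≤ δ`, the Cauchy problem has a weak solution defined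
for all `t ≥ 0` with `u(0,·) = ū`. -/
theorem glimm_global_existence
    {n : ℕ} (f : EuclideanSpace ℝ (Fin n) → EuclideanSpace ℝ (Fin n))
    (hf : ContDiff ℝ 2 f)
    (lam : Fin n → EuclideanSpace ℝ (Fin n) → ℝ)
    (r : Fin n → EuclideanSpace ℝ (Fin n) → EuclideanSpace ℝ (Fin n))
    (hlam : ∀ i, ContDiff ℝ 1 (lam i)) (hr : ∀ i, ContDiff ℝ 1 (r i))
    (hrne : ∀ i v, r i v ≠ 0)
    (hstrict : ∀ v, StrictMono fun i => lam i v)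
    (heig : ∀ i v, fderiv ℝ f v (r i v) = lam i v • r i v)
    (hGNLorLD : ∀ i, (∀ v, 0 < fderiv ℝ (lam i) v (r i v)) ∨
      (∀ v, fderiv ℝ (lam i) v (r i v) = 0)) :
    ∃ δ > (0 : ℝ), ∀ ubar : ℝ → EuclideanSpace ℝ (Fin n),
      Integrable ubar →
      eVariationOn ubar Set.univ ≤ ENNReal.ofReal δ →
      ∃ u : ℝ → ℝ → EuclideanSpace ℝ (Fin n),
        u 0 = ubar ∧ IsWeakSolution f u :=
  glimm_global_existence_general f hf (hrne · 0) (hstrict 0) (heig · 0)
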